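/- Let R be a quotient of a regular commutative coherent ring by a finitely generated ideal. Then the map f_R, sending a wide subcategory C of finitely presented R-modules to the thick subcategory {small X ∈ D(R) : H_n X ∈ C for all n}, is a lattice isomorphism from the lattice of wide subcategories of finitely presented R-modules onto the lattice of thick subcategories of small objects of D(R). In particular, if k is a principal ideal domain and R is a finitely generated commutative k-algebra, then every wide subcategory of the finitely generated R-modules is a Serre class. -/

import Mathlib

open CategoryTheory CategoryTheory.Limits CategoryTheory.Pretriangulated ZeroObject

universe w u

/-- A full subcategory (given as a set of objects) of an abelian category is *wide*
if it is closed under isomorphisms, kernels, cokernels and extensions. -/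
structure IsWideSubcategory {A : Type*} [Category A] [Abelian A] (C : Set A) : Prop where
  mem_of_iso : ∀ {X Y : A}, (X ≅ Y) → X ∈ C → Y ∈ C
  kernel_mem : ∀ {X Y : A} (f : X ⟶ Y), X ∈ C → Y ∈ C → kernel f ∈ C
  cokernel_mem : ∀ {X Y : A} (f : X ⟶ Y), X ∈ C → Y ∈ C → cokernel f ∈ C
  extension_mem : ∀ (S : CategoryTheory.ShortComplex A), S.ShortExact →
    S.X₁ ∈ C → S.X₃ ∈ C → S.X₂ ∈ C

/-- The wide subcategory generated by a set of objects: the intersection of all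
wide subcategories containing it. -/
def wideClosure {A : Type*} [Category A] [Abelian A] (S : Set A) : Set A :=
  ⋂₀ {C : Set A | IsWideSubcategory C ∧ S ⊆ C}

/-- `C₀`, the wide subcategory of `R`-modules generated by the module `R`. -/
def wideSubcatGenByRing (R : Type u) [Ring R] : Set (ModuleCat.{u} R) :=
  wideClosure {ModuleCat.of R R}

/-- A thick subcategory of a (pre)triangulated category: a full triangulated
subcategory closed under retracts (direct summands). -/
structure IsThickSubcategory {T : Type*} [Category T] [HasZeroObject T] [Preadditive T]
    [HasShift T ℤ] [∀ n : ℤ, (shiftFunctor T n).Additive] [Pretriangulated T]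
    (D : Set T) : Prop where
  mem_of_iso : ∀ {X Y : T}, (X ≅ Y) → X ∈ D → Y ∈ D
  zero_mem : (0 : T) ∈ D
  shift_mem : ∀ (X : T) (n : ℤ), X ∈ D → X⟦n⟧ ∈ D
  ext₂ : ∀ (T' : Triangle T), T' ∈ (distTriang T) → T'.obj₁ ∈ D → T'.obj₃ ∈ D → T'.obj₂ ∈ D
  retract_mem : ∀ (X Y : T) (i : X ⟶ Y) (r : Y ⟶ X), i ≫ r = 𝟙 X → Y ∈ D → X ∈ D

/-- An object of the derived category of `R`-modules is *small* if it belongs to every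
thick subcategory containing the complex `S⁰R` (`R` concentrated in degree `0`), i.e. to
the thick subcategory generated by `S⁰R`; equivalently, `Hom(X,-)` commutes with
arbitrary direct sums. -/
def IsSmallObject {R : Type u} [Ring R] [HasDerivedCategory.{w} (ModuleCat.{u} R)]
    (X : DerivedCategory (ModuleCat.{u} R)) : Prop :=
  ∀ D : Set (DerivedCategory (ModuleCat.{u} R)), IsThickSubcategory D →
    (DerivedCategory.singleFunctor (ModuleCat.{u} R) 0).obj (ModuleCat.of R R) ∈ D → X ∈ D

/-- The map `f` : it sends a wide subcategory `C` to the collection of small objects `X`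
of the derived category such that `Hₙ X ∈ C` for all `n`. -/
def fSet {R : Type u} [Ring R] [HasDerivedCategory.{w} (ModuleCat.{u} R)]
    (C : Set (ModuleCat.{u} R)) : Set (DerivedCategory (ModuleCat.{u} R)) :=
  {X | IsSmallObject X ∧
    ∀ n : ℤ, (DerivedCategory.homologyFunctor (ModuleCat.{u} R) n).obj X ∈ C}

/-- The map `g` : it sends a thick subcategory `D` to the wide subcategory generated by
the homology modules `Hₙ X` for `X ∈ D` and `n : ℤ`. -/
def gSet {R : Type u} [Ring R] [HasDerivedCategory.{w} (ModuleCat.{u} R)]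
    (D : Set (DerivedCategory (ModuleCat.{u} R))) : Set (ModuleCat.{u} R) :=
  wideClosure {M | ∃ X ∈ D, ∃ n : ℤ,
    Nonempty ((DerivedCategory.homologyFunctor (ModuleCat.{u} R) n).obj X ≅ M)}

/-- A ring is left coherent if every finitely generated left ideal is finitely
presented as a module. -/
def IsLeftCoherentRing (R : Type u) [Ring R] : Prop :=
  ∀ I : Ideal R, I.FG → Module.FinitePresentation R I

/-- The collection of finitely presented `R`-modules. -/
def finPresModules (R : Type u) [Ring R] : Set (ModuleCat.{u} R) :=
  {M : ModuleCat.{u} R | Module.FinitePresentation R M}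

/-- An `R`-module `M` has finite projective dimension if there is an `i` such that
`Ext^j(M, N) = 0` for all modules `N` and all `j > i`. -/
def HasFiniteProjectiveDimension (R : Type u) [Ring R] (M : ModuleCat.{u} R) : Prop :=
  ∃ i : ℕ, ∀ (N : ModuleCat.{u} R) (j : ℕ), i < j →
    Subsingleton (((_root_.Ext ℤ (ModuleCat.{u} R) j).obj (Opposite.op M)).obj N)

/-- The lattice of (nonempty) wide subcategories of finitely presented `R`-modules. -/
def wideLatticeFP (R : Type u) [Ring R] : Set (Set (ModuleCat.{u} R)) :=
  {C | IsWideSubcategory C ∧ C.Nonempty ∧ C ⊆ finPresModules R}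

/-- The lattice of thick subcategories of small objects of the derived category. -/
def thickLatticeSmall (R : Type u) [Ring R] [HasDerivedCategory.{w} (ModuleCat.{u} R)] :
    Set (Set (DerivedCategory (ModuleCat.{u} R))) :=
  {D | IsThickSubcategory D ∧ ∀ X ∈ D, IsSmallObject X}

/-- `f` is a lattice isomorphism from the lattice of wide subcategories of finitely
presented `R`-modules onto the lattice of thick subcategories of small objects of
`D(R)`: it maps the first lattice into the second, preserves and reflects inclusions,
and is surjective. -/
def fIsLatticeIso (R : Type u) [Ring R] [HasDerivedCategory.{w} (ModuleCat.{u} R)] : Prop :=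
  (∀ C ∈ wideLatticeFP R, fSet C ∈ thickLatticeSmall R) ∧
  (∀ C₁ ∈ wideLatticeFP R, ∀ C₂ ∈ wideLatticeFP R, (fSet C₁ ⊆ fSet C₂ ↔ C₁ ⊆ C₂)) ∧
  (∀ D ∈ thickLatticeSmall R, ∃ C ∈ wideLatticeFP R, fSet C = D)

/-!
A small object of `D(A)` is a retract of a bounded complex of finite free modules, which is encoded
as a homogeneous square-zero matrix.

*Surjectivity.* A small object `X` lies in a thick subcategory `D` as soon as, at every prime where
`X` is nonzero, some object of `D` is nonzero. Otherwise Zorn's lemma gives an ideal `p` maximal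
among those modulo which no morphism `X ⟶ F X` with cone in `D`, natural in `X`, is null-homotopic.
Composing two such morphisms multiplies the ideals, so `p` is prime. If some `Y` in `D` is nonzero
at `p`, the evaluation `Hom(Y, A⟦1⟧) ⊗ Y ⟶ A⟦1⟧` has a cone that contradicts the maximality of `p`;
if `X` vanishes at `p`, then a scalar outside `p` is null-homotopic on `X`, which is again a
contradiction. Hence `D` is determined by the supports of the homology modules of its objects, and
coherence makes these modules finitely presented.

*Reflection of inclusions.* Let `R = A ⧸ a` with `A` regular coherent, and let `M` lie in a wide
subcategory `C` of finitely presented `R`-modules. Over `A` the module `M` has finite projective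
dimension, so it is small in `D(A)` and a retract of some based complex `Y`. The cone of the
complementary idempotent of `Y` is `Z ≅ M ⊕ M⟦1⟧`, again based. An induction on the projective
dimension of the coefficient module shows that `Z ⊗ R` has homology in `C`, while `M` is a retract
of `H₀(Z ⊗ R)`.

*Noetherian rings.* A finite module has a filtration with quotients `B ⧸ p`, and a wide subcategory
containing a finite module `M` contains `B ⧸ p` for every prime `p` in the support of `M`.
-/

/-! ### Wide and thick subcategories -/

section Abelian

variable {A : Type*} [Category A] [Abelian A]

theorem exists_shortExact_cokernel_kernel {A₁ A₂ A₃ A₄ A₅ : A} {f₁ : A₁ ⟶ A₂} {f₂ : A₂ ⟶ A₃}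
    {f₃ : A₃ ⟶ A₄} {f₄ : A₄ ⟶ A₅} {w₁ : f₁ ≫ f₂ = 0} {w₂ : f₂ ≫ f₃ = 0} {w₃ : f₃ ≫ f₄ = 0}
    (e₁ : (ShortComplex.mk _ _ w₁).Exact) (e₂ : (ShortComplex.mk _ _ w₂).Exact)
    (e₃ : (ShortComplex.mk _ _ w₃).Exact) :
    ∃ (i : cokernel f₁ ⟶ A₃) (p : A₃ ⟶ kernel f₄) (w : i ≫ p = 0),
      (ShortComplex.mk i p w).ShortExact := by
  have w : cokernel.desc f₁ f₂ w₁ ≫ kernel.lift f₄ f₃ w₃ = 0 := by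
    rw [← cancel_epi (cokernel.π f₁), ← cancel_mono (kernel.ι f₄)]
    simp [w₂]
  have w' : cokernel.desc f₁ f₂ w₁ ≫ f₃ = 0 := by
    rw [← cancel_epi (cokernel.π f₁)]
    simp [w₂]
  have exact' : (ShortComplex.mk _ _ w').Exact := by
    let φ : ShortComplex.mk _ _ w₂ ⟶ ShortComplex.mk _ _ w' :=
      { τ₁ := cokernel.π f₁, τ₂ := 𝟙 _, τ₃ := 𝟙 _ }
    have : Epi φ.τ₁ := inferInstanceAs (Epi (cokernel.π f₁))
    have : IsIso φ.τ₂ := inferInstanceAs (IsIso (𝟙 _))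
    have : Mono φ.τ₃ := inferInstanceAs (Mono (𝟙 _))
    exact (ShortComplex.exact_iff_of_epi_of_isIso_of_mono φ).1 e₂
  have exact : (ShortComplex.mk _ _ w).Exact := by
    let ψ : ShortComplex.mk _ _ w ⟶ ShortComplex.mk _ _ w' :=
      { τ₁ := 𝟙 _, τ₂ := 𝟙 _, τ₃ := kernel.ι f₄ }
    have : Epi ψ.τ₁ := inferInstanceAs (Epi (𝟙 _))
    have : IsIso ψ.τ₂ := inferInstanceAs (IsIso (𝟙 _))
    have : Mono ψ.τ₃ := inferInstanceAs (Mono (kernel.ι f₄))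
    exact (ShortComplex.exact_iff_of_epi_of_isIso_of_mono ψ).2 exact'
  exact ⟨_, _, w, { exact := exact, mono_f := e₁.mono_cokernelDesc, epi_g := e₃.epi_kernelLift }⟩

/-- A retract `X` of `Y` is the kernel of the complementary idempotent `𝟙 Y - r ≫ i`. -/
noncomputable def kernelIsoOfRetract {X Y : A} (i : X ⟶ Y) (r : Y ⟶ X) (h : i ≫ r = 𝟙 X) :
    kernel (𝟙 Y - r ≫ i) ≅ X :=
  IsLimit.conePointUniqueUpToIso (kernelIsKernel _) <|
    KernelFork.IsLimit.ofι i (by simp [reassoc_of% h]) (fun g _ ↦ g ≫ r)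
      (fun g hg ↦ (sub_eq_zero.1 (by simpa using hg)).symm)
      (fun g _ m hm ↦ by rw [← hm, Category.assoc, h, Category.comp_id])

namespace IsWideSubcategory

variable {C : Set A} (hC : IsWideSubcategory C)
include hC

theorem isZero_mem (hne : C.Nonempty) {X : A} (hX : IsZero X) : X ∈ C := by
  obtain ⟨M, hM⟩ := hne
  exact hC.mem_of_iso ((isZero_kernel_of_mono (𝟙 M)).iso hX) (hC.kernel_mem _ hM hM)

theorem retract_mem {X Y : A} (i : X ⟶ Y) (r : Y ⟶ X) (h : i ≫ r = 𝟙 X) (hY : Y ∈ C) : X ∈ C :=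
  hC.mem_of_iso (kernelIsoOfRetract i r h) (hC.kernel_mem _ hY hY)

theorem exact_five_mem {A₁ A₂ A₃ A₄ A₅ : A} {f₁ : A₁ ⟶ A₂} {f₂ : A₂ ⟶ A₃} {f₃ : A₃ ⟶ A₄}
    {f₄ : A₄ ⟶ A₅} {w₁ : f₁ ≫ f₂ = 0} {w₂ : f₂ ≫ f₃ = 0} {w₃ : f₃ ≫ f₄ = 0}
    (e₁ : (ShortComplex.mk _ _ w₁).Exact) (e₂ : (ShortComplex.mk _ _ w₂).Exact)
    (e₃ : (ShortComplex.mk _ _ w₃).Exact)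
    (h₁ : A₁ ∈ C) (h₂ : A₂ ∈ C) (h₄ : A₄ ∈ C) (h₅ : A₅ ∈ C) : A₃ ∈ C := by
  obtain ⟨_, _, _, hS⟩ := exists_shortExact_cokernel_kernel e₁ e₂ e₃
  exact hC.extension_mem _ hS (hC.cokernel_mem _ h₁ h₂) (hC.kernel_mem _ h₄ h₅)

end IsWideSubcategory

end Abelian

namespace IsThickSubcategory

variable {T : Type*} [Category T] [HasZeroObject T] [Preadditive T]
    [HasShift T ℤ] [∀ n : ℤ, (shiftFunctor T n).Additive] [Pretriangulated T] {D : Set T}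

theorem sInter {𝒟 : Set (Set T)} (h : ∀ D ∈ 𝒟, IsThickSubcategory D) :
    IsThickSubcategory (⋂₀ 𝒟) where
  mem_of_iso e hX D hD := (h D hD).mem_of_iso e (hX D hD)
  zero_mem D hD := (h D hD).zero_mem
  shift_mem X n hX D hD := (h D hD).shift_mem X n (hX D hD)
  ext₂ T' hT h₁ h₃ D hD := (h D hD).ext₂ T' hT (h₁ D hD) (h₃ D hD)
  retract_mem X Y i r hr hY D hD := (h D hD).retract_mem X Y i r hr (hY D hD)

theorem inter {D' : Set T} (hD : IsThickSubcategory D) (hD' : IsThickSubcategory D') :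
    IsThickSubcategory (D ∩ D') := by
  rw [← Set.sInter_pair]
  exact sInter (by rintro _ (rfl | rfl) <;> assumption)

variable (hD : IsThickSubcategory D)
include hD

theorem isTriangulated : ObjectProperty.IsTriangulated (· ∈ D) :=
  have : ObjectProperty.IsClosedUnderIsomorphisms (· ∈ D) := ⟨fun e h ↦ hD.mem_of_iso e h⟩
  { exists_zero := ⟨0, isZero_zero T, hD.zero_mem⟩
    isStableUnderShiftBy := fun n ↦ ⟨fun X hX ↦ hD.shift_mem X n hX⟩
    ext₂' := (ObjectProperty.IsTriangulatedClosed₂.mk' hD.ext₂).ext₂' }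

theorem ext₃ (T' : Triangle T) (hT : T' ∈ distTriang T) (h₁ : T'.obj₁ ∈ D) (h₂ : T'.obj₂ ∈ D) :
    T'.obj₃ ∈ D :=
  hD.ext₂ _ (rot_of_distTriang _ hT) h₂ (hD.shift_mem _ 1 h₁)

theorem isZero_mem {X : T} (hX : IsZero X) : X ∈ D :=
  hD.mem_of_iso (hX.iso (isZero_zero T)).symm hD.zero_mem

theorem mem_of_shift_mem {X : T} (n : ℤ) (hX : X⟦n⟧ ∈ D) : X ∈ D :=
  hD.mem_of_iso ((shiftEquiv T n).unitIso.app X).symm (hD.shift_mem _ (-n) hX)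

theorem mem_of_trW_zero {X Y : T} (h : ObjectProperty.trW (· ∈ D) (0 : X ⟶ Y)) : X ∈ D := by
  obtain ⟨Z, g, δ, hT, hZ⟩ := h
  -- The rotated triangle splits: `X⟦1⟧` is a retract of the cone `Z` of the zero map.
  obtain ⟨s, hs⟩ := Triangle.coyoneda_exact₁ _ hT (𝟙 (X⟦(1 : ℤ)⟧))
    ((Category.id_comp _).trans (Functor.map_zero _ _ _))
  exact hD.mem_of_shift_mem 1 (hD.retract_mem _ Z s δ hs.symm hZ)

end IsThickSubcategory

section HomologyThick

open DerivedCategory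

theorem IsWideSubcategory.isThick_homologyFunctor_mem {A : Type*} [Category A] [Abelian A]
    [HasDerivedCategory A] {C : Set A} (hC : IsWideSubcategory C) (hne : C.Nonempty) :
    IsThickSubcategory {X : DerivedCategory A | ∀ n, (homologyFunctor A n).obj X ∈ C} where
  mem_of_iso e hX n := hC.mem_of_iso ((homologyFunctor _ n).mapIso e) (hX n)
  zero_mem _ := hC.isZero_mem hne (Functor.map_isZero _ (isZero_zero _))
  shift_mem X m hX n :=
    hC.mem_of_iso (((homologyFunctor A 0).shiftIso m n (m + n) rfl).app X).symm (hX (m + n))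
  ext₂ T hT h₁ h₃ n :=
    hC.exact_five_mem (HomologySequence.exact₁ T hT (n - 1) n) (HomologySequence.exact₂ T hT n)
      (HomologySequence.exact₃ T hT n (n + 1)) (h₃ _) (h₁ _) (h₃ _) (h₁ _)
  retract_mem X Y i r hr hY n :=
    hC.retract_mem ((homologyFunctor _ n).map i) ((homologyFunctor _ n).map r)
      (by rw [← Functor.map_comp, hr, CategoryTheory.Functor.map_id]) (hY n)

variable {R : Type u} [Ring R] [HasDerivedCategory.{w} (ModuleCat.{u} R)]

theorem isThick_isSmallObject :
    IsThickSubcategory {X : DerivedCategory (ModuleCat.{u} R) | IsSmallObject X} where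
  mem_of_iso e hX D hD hR := hD.mem_of_iso e (hX D hD hR)
  zero_mem _ hD _ := hD.zero_mem
  shift_mem X n hX D hD hR := hD.shift_mem X n (hX D hD hR)
  ext₂ T hT h₁ h₃ D hD hR := hD.ext₂ T hT (h₁ D hD hR) (h₃ D hD hR)
  retract_mem X Y i r hr hY D hD hR := hD.retract_mem X Y i r hr (hY D hD hR)

theorem IsWideSubcategory.isThick_fSet {C : Set (ModuleCat.{u} R)} (hC : IsWideSubcategory C)
    (hne : C.Nonempty) : IsThickSubcategory (fSet C) :=
  isThick_isSmallObject.inter (hC.isThick_homologyFunctor_mem hne)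

end HomologyThick

/-! ### Wide subcategories over Noetherian rings -/

namespace IsWideSubcategory

variable {R : Type u} [Ring R] {C : Set (ModuleCat.{u} R)} (hC : IsWideSubcategory C)
  {M N P : Type u} [AddCommGroup M] [Module R M] [AddCommGroup N] [Module R N]
  [AddCommGroup P] [Module R P]
include hC

theorem mem_of_linearEquiv (e : M ≃ₗ[R] N) (hM : ModuleCat.of R M ∈ C) : ModuleCat.of R N ∈ C :=
  hC.mem_of_iso e.toModuleIso hM

theorem ker_mem (f : M →ₗ[R] N) (hM : ModuleCat.of R M ∈ C) (hN : ModuleCat.of R N ∈ C) :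
    ModuleCat.of R (LinearMap.ker f) ∈ C :=
  hC.mem_of_iso (ModuleCat.kernelIsoKer (ModuleCat.ofHom f)) (hC.kernel_mem _ hM hN)

theorem quotient_range_mem (f : M →ₗ[R] N) (hM : ModuleCat.of R M ∈ C)
    (hN : ModuleCat.of R N ∈ C) : ModuleCat.of R (N ⧸ LinearMap.range f) ∈ C :=
  hC.mem_of_iso (ModuleCat.cokernelIsoRangeQuotient (ModuleCat.ofHom f)) (hC.cokernel_mem _ hM hN)

theorem mem_of_exact {f : M →ₗ[R] N} {g : N →ₗ[R] P} (hf : Function.Injective f)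
    (hg : Function.Surjective g) (hfg : Function.Exact f g) (hM : ModuleCat.of R M ∈ C)
    (hP : ModuleCat.of R P ∈ C) : ModuleCat.of R N ∈ C :=
  hC.extension_mem (ModuleCat.shortComplexOfCompEqZero f g hfg.linearMap_comp_eq_zero)
    (ModuleCat.shortComplex_shortExact _ hfg hf hg) hM hP

end IsWideSubcategory

section IdealQuotient

variable {R : Type u} [CommRing R] {C : Set (ModuleCat.{u} R)}

theorem IsWideSubcategory.quotient_smul_top_mem (hC : IsWideSubcategory C) {I : Ideal R}
    (hI : I.FG) {M : Type u} [AddCommGroup M] [Module R M] (hM : ModuleCat.of R M ∈ C) :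
    ModuleCat.of R (M ⧸ (I • ⊤ : Submodule R M)) ∈ C := by
  induction I, hI using Submodule.fg_induction generalizing M with
  | singleton r =>
    have hr : LinearMap.range (LinearMap.lsmul R M r) = (R ∙ r) • ⊤ := by
      rw [Submodule.ideal_span_singleton_smul, Submodule.pointwise_smul_def,
        ← LinearMap.range_eq_map]
      rfl
    rw [← hr]
    exact hC.quotient_range_mem _ hM hM
  | sup I J _ _ ihI ihJ =>
    have hmap : (J • ⊤ : Submodule R M).map (I • ⊤ : Submodule R M).mkQ = J • ⊤ := by
      rw [Submodule.map_smul'', Submodule.map_top, Submodule.range_mkQ]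
    rw [Submodule.sup_smul]
    refine hC.mem_of_linearEquiv (Submodule.quotientQuotientEquivQuotientSup _ _) ?_
    rw [hmap]
    exact ihJ (ihI hM)

end IdealQuotient

theorem exists_linearIndependent_isTorsion_quotient (D N : Type*) [CommRing D] [IsDomain D]
    [AddCommGroup N] [Module D N] [Module.Finite D N] :
    ∃ (n : ℕ) (v : Fin n → N), LinearIndependent D v ∧
      Module.IsTorsion D (N ⧸ Submodule.span D (Set.range v)) := by
  obtain ⟨v, hv⟩ := exists_linearIndependent_of_le_finrank (R := D) (M := N) le_rfl
  refine ⟨_, v, hv, Module.finrank_eq_zero_iff_isTorsion.1 ?_⟩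
  have h := Submodule.finrank_quotient_add_finrank (Submodule.span D (Set.range v))
  rwa [finrank_span_eq_card hv, Fintype.card_fin, Nat.add_eq_right] at h

theorem exists_injective_pi_quotient_prime {B : Type*} [CommRing B] (p : Ideal B) [p.IsPrime]
    (N : Type*) [AddCommGroup N] [Module B N] [Module (B ⧸ p) N] [IsScalarTower B (B ⧸ p) N]
    [Module.Finite B N] (hle : Module.annihilator B N ≤ p) :
    ∃ n > 0, ∃ g : (Fin n → B ⧸ p) →ₗ[B] N, Function.Injective g ∧
      ∃ s ∉ p, ∀ x, s • x ∈ LinearMap.range g := by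
  have : Module.Finite (B ⧸ p) N := Module.Finite.of_restrictScalars_finite B _ _
  obtain ⟨n, v, hv, htors⟩ := exists_linearIndependent_isTorsion_quotient (B ⧸ p) N
  let g : (Fin n → B ⧸ p) →ₗ[B] N := (Fintype.linearCombination (B ⧸ p) v).restrictScalars B
  obtain ⟨d, hd, hd0⟩ := Submodule.annihilator_top_inter_nonZeroDivisors htors
  obtain ⟨s, rfl⟩ := Ideal.Quotient.mk_surjective d
  have hsp : s ∉ p := fun h ↦ nonZeroDivisors.ne_zero hd0 (Ideal.Quotient.eq_zero_iff_mem.2 h)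
  have smul_mem_range (x : N) : s • x ∈ LinearMap.range g := by
    have h := (Submodule.Quotient.mk_eq_zero _).1
      (Submodule.mem_annihilator.1 hd (Submodule.Quotient.mk x) Submodule.mem_top)
    rw [← Fintype.range_linearCombination] at h
    rwa [← algebraMap_smul (B ⧸ p) s x]
  refine ⟨n, Nat.pos_of_ne_zero ?_, g, hv.fintypeLinearCombination_injective, s, hsp,
    smul_mem_range⟩
  rintro rfl
  refine hsp (hle (Module.mem_annihilator.2 fun x ↦ ?_))
  obtain ⟨y, hy⟩ := smul_mem_range x
  rw [← hy, Subsingleton.elim y 0, map_zero]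

namespace IsWideSubcategory

variable {B : Type u} [CommRing B] [IsNoetherianRing B] {C : Set (ModuleCat.{u} B)}
  (hC : IsWideSubcategory C)
include hC

theorem mem_of_quotient_prime_mem (hne : C.Nonempty) (N : Type u) [AddCommGroup N] [Module B N]
    [hN : Module.Finite B N] (hp : ∀ p : Ideal B, p.IsPrime → Module.annihilator B N ≤ p →
      ModuleCat.of B (B ⧸ p) ∈ C) : ModuleCat.of B N ∈ C := by
  induction hN using IsNoetherianRing.induction_on_isQuotientEquivQuotientPrime B with
  | subsingleton N => exact hC.isZero_mem hne (ModuleCat.isZero_of_subsingleton _)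
  | quotient N p e =>
    refine hC.mem_of_linearEquiv e.symm (hp p.1 p.2 ?_)
    rw [e.annihilator_eq, Ideal.annihilator_quotient]
  | exact N₁ N₂ N₃ f g hf hg hfg h₁ h₃ =>
    exact hC.mem_of_exact hf hg hfg
      (h₁ fun p hprime hle ↦ hp p hprime ((f.annihilator_le_of_injective hf).trans hle))
      (h₃ fun p hprime hle ↦ hp p hprime ((g.annihilator_le_of_surjective hg).trans hle))

/-- The module `M ⧸ p • M` over the domain `B ⧸ p` contains a free submodule with torsion quotient.
By Noetherian induction on `p` the quotient lies in `C`, so the free submodule does as well. -/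
theorem quotient_prime_mem (hfin : ∀ M ∈ C, Module.Finite B M) {M : ModuleCat.{u} B} (hM : M ∈ C)
    (p : Ideal B) (hp : p.IsPrime) (hle : Module.annihilator B M ≤ p) :
    ModuleCat.of B (B ⧸ p) ∈ C := by
  induction p using IsNoetherian.induction with
  | hgt p ih =>
  have := hfin M hM
  let M' := M ⧸ (p • ⊤ : Submodule B M)
  have hM' : ModuleCat.of B M' ∈ C := hC.quotient_smul_top_mem (IsNoetherian.noetherian p) hM
  have p_le : p ≤ Module.annihilator B M' := by
    rw [Submodule.annihilator_quotient]
    exact fun y hy ↦ Submodule.mem_colon.2 fun x _ ↦ Submodule.smul_mem_smul hy Submodule.mem_top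
  have annihilator_le : Module.annihilator B M' ≤ p := by
    have hmem : (⟨p, hp⟩ : PrimeSpectrum B) ∈ Module.support B M' := by
      rw [Module.support_quotient]
      exact ⟨Module.mem_support_iff_of_finite.2 hle, (PrimeSpectrum.mem_zeroLocus _ _).2 le_rfl⟩
    exact Module.mem_support_iff_of_finite.1 hmem
  obtain ⟨n, hn, g, hg, s, hsp, hs⟩ := exists_injective_pi_quotient_prime p M' annihilator_le
  have hK : ModuleCat.of B (M' ⧸ LinearMap.range g) ∈ C := by
    refine hC.mem_of_quotient_prime_mem ⟨_, hM⟩ _ fun q hq hqle ↦ ?_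
    have hpq : p ≤ q := p_le.trans <| ((LinearMap.range g).mkQ.annihilator_le_of_surjective
      (Submodule.mkQ_surjective _)).trans hqle
    have hsq : s ∈ q := hqle <| Module.mem_annihilator.2 <|
      (Submodule.Quotient.mk_surjective _).forall.2 fun x ↦
        (Submodule.Quotient.mk_eq_zero _).2 (hs x)
    exact ih q (lt_of_le_of_ne hpq (by rintro rfl; exact hsp hsq)) hq (hle.trans hpq)
  have hfree : ModuleCat.of B (Fin n → B ⧸ p) ∈ C :=
    hC.mem_of_linearEquiv ((LinearEquiv.ofEq _ _ (Submodule.ker_mkQ _)).trans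
      (LinearEquiv.ofInjective g hg).symm) (hC.ker_mem (LinearMap.range g).mkQ hM' hK)
  exact hC.retract_mem (ModuleCat.ofHom (LinearMap.single B (fun _ ↦ B ⧸ p) ⟨0, hn⟩))
    (ModuleCat.ofHom (LinearMap.proj ⟨0, hn⟩)) (by ext; simp) hfree

theorem submodule_mem (hfin : ∀ M ∈ C, Module.Finite B M) {M : ModuleCat.{u} B} (hM : M ∈ C)
    (N : Submodule B M) : ModuleCat.of B N ∈ C := by
  have := hfin M hM
  exact hC.mem_of_quotient_prime_mem ⟨_, hM⟩ N fun p hp hle ↦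
    hC.quotient_prime_mem hfin hM p hp
      ((N.subtype.annihilator_le_of_injective N.injective_subtype).trans hle)

end IsWideSubcategory

/-! ### Coherent rings -/

/-- A module is *pseudo-coherent* (Bourbaki) if its finitely generated submodules are finitely
presented. -/
def IsPseudoCoherentModule (R M : Type*) [Ring R] [AddCommGroup M] [Module R M] : Prop :=
  ∀ N : Submodule R M, N.FG → Module.FinitePresentation R N

section PseudoCoherent

variable {R M N P : Type*} [Ring R] [AddCommGroup M] [Module R M] [AddCommGroup N] [Module R N]
  [AddCommGroup P] [Module R P]

theorem finitePresentation_of_exact [Module.FinitePresentation R M] [Module.FinitePresentation R P]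
    {f : M →ₗ[R] N} {g : N →ₗ[R] P} (hf : Function.Injective f) (hg : Function.Surjective g)
    (hfg : Function.Exact f g) : Module.FinitePresentation R N := by
  have : Module.FinitePresentation R (LinearMap.ker g) := Module.FinitePresentation.of_equiv <|
    (LinearEquiv.ofInjective f hf).trans (LinearEquiv.ofEq _ _ (LinearMap.exact_iff.1 hfg).symm)
  exact Module.finitePresentation_of_ker g hg

namespace IsPseudoCoherentModule

theorem fg_ker (hN : IsPseudoCoherentModule R N) [Module.Finite R M] (f : M →ₗ[R] N) :
    (LinearMap.ker f).FG := by
  have := hN _ (Module.Finite.iff_fg.1 (Module.Finite.range f))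
  rw [← LinearMap.ker_rangeRestrict]
  exact Module.FinitePresentation.fg_ker f.rangeRestrict f.surjective_rangeRestrict

theorem of_injective (hN : IsPseudoCoherentModule R N) {f : M →ₗ[R] N}
    (hf : Function.Injective f) : IsPseudoCoherentModule R M := fun L hL ↦
  have := hN (L.map f) (hL.map f)
  Module.FinitePresentation.of_equiv (L.equivMapOfInjective f hf).symm

theorem of_exact (hM : IsPseudoCoherentModule R M) (hP : IsPseudoCoherentModule R P)
    {f : M →ₗ[R] N} {g : N →ₗ[R] P} (hf : Function.Injective f) (hfg : Function.Exact f g) :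
    IsPseudoCoherentModule R N := by
  intro L hL
  have : Module.Finite R L := Module.Finite.iff_fg.2 hL
  have hker : IsPseudoCoherentModule R (LinearMap.ker g) :=
    hM.of_injective (f := ((LinearEquiv.ofInjective f hf).trans
      (LinearEquiv.ofEq _ _ (LinearMap.exact_iff.1 hfg).symm)).symm.toLinearMap)
      (LinearEquiv.injective _)
  let p : L →ₗ[R] P := g ∘ₗ L.subtype
  have : Module.FinitePresentation R (LinearMap.range p) :=
    hP _ (Module.Finite.iff_fg.1 (Module.Finite.range p))
  have : Module.FinitePresentation R (LinearMap.ker p.rangeRestrict) := by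
    rw [LinearMap.ker_rangeRestrict]
    have hinj : Function.Injective (L.subtype.restrict (p := LinearMap.ker p)
        (q := LinearMap.ker g) fun _ h ↦ h) := fun _ _ h ↦
      Subtype.ext (Subtype.ext (congrArg (Subtype.val : LinearMap.ker g → N) h))
    have := hker.of_injective hinj ⊤ ((Submodule.fg_top _).2 (hP.fg_ker p))
    exact Module.FinitePresentation.of_equiv Submodule.topEquiv
  exact Module.finitePresentation_of_ker p.rangeRestrict p.surjective_rangeRestrict

theorem pi (hM : IsPseudoCoherentModule R M) : ∀ n : ℕ, IsPseudoCoherentModule R (Fin n → M)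
  | 0 => fun L _ ↦ Module.finitePresentation_of_projective R L
  | n + 1 => by
    refine (pi hM n).of_exact hM (f := LinearMap.vecCons 0 LinearMap.id)
      (g := LinearMap.proj 0) ?_ ?_
    · exact fun v w h ↦ funext fun i ↦ congrFun h i.succ
    · intro v
      refine ⟨fun h ↦ ⟨fun i ↦ v i.succ, funext (Fin.cases h.symm fun _ ↦ rfl)⟩, ?_⟩
      rintro ⟨w, rfl⟩
      rfl

theorem of_surjective (hM : IsPseudoCoherentModule R M) {f : M →ₗ[R] N}
    (hf : Function.Surjective f) (hker : (LinearMap.ker f).FG) : IsPseudoCoherentModule R N := by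
  intro L hL
  have : Module.FinitePresentation R (L.comap f) := by
    refine hM _ (Submodule.fg_of_fg_map_of_fg_inf_ker f ?_ ?_)
    · rwa [Submodule.map_comap_eq_of_surjective hf]
    · rwa [inf_eq_right.2 (LinearMap.ker_le_comap f)]
  refine Module.finitePresentation_of_surjective (f.restrict (p := L.comap f) fun _ h ↦ h)
    (fun ⟨y, hy⟩ ↦ ?_) ?_
  · obtain ⟨x, rfl⟩ := hf y
    exact ⟨⟨x, hy⟩, rfl⟩
  · refine Submodule.fg_of_fg_map_injective (L.comap f).subtype (Submodule.injective_subtype _) ?_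
    rwa [LinearMap.ker_restrict, Submodule.map_comap_subtype,
      inf_eq_right.2 (LinearMap.ker_le_comap f)]

end IsPseudoCoherentModule

end PseudoCoherent

namespace IsLeftCoherentRing

variable {R : Type u} [Ring R]

theorem isPseudoCoherentModule (hR : IsLeftCoherentRing R) (M : Type*) [AddCommGroup M]
    [Module R M] [Module.FinitePresentation R M] : IsPseudoCoherentModule R M := by
  obtain ⟨n, f, hf⟩ := Module.Finite.exists_fin' R M
  exact (IsPseudoCoherentModule.pi hR n).of_surjective hf (Module.FinitePresentation.fg_ker f hf)

theorem isWideSubcategory_finPresModules (hR : IsLeftCoherentRing R) :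
    IsWideSubcategory (finPresModules R) where
  mem_of_iso e (h : Module.FinitePresentation R _) :=
    Module.FinitePresentation.of_equiv e.toLinearEquiv
  kernel_mem {X Y} f (hX : Module.FinitePresentation R X)
      (hY : Module.FinitePresentation R Y) := by
    have := hR.isPseudoCoherentModule X _ ((hR.isPseudoCoherentModule Y).fg_ker f.hom)
    exact Module.FinitePresentation.of_equiv (ModuleCat.kernelIsoKer f).symm.toLinearEquiv
  cokernel_mem {X Y} f (hX : Module.FinitePresentation R X)
      (hY : Module.FinitePresentation R Y) := by
    have : Module.FinitePresentation R (Y ⧸ LinearMap.range f.hom) := by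
      refine Module.finitePresentation_of_surjective (LinearMap.range f.hom).mkQ
        (Submodule.mkQ_surjective _) ?_
      rw [Submodule.ker_mkQ]
      exact Module.Finite.iff_fg.1 (Module.Finite.range f.hom)
    exact Module.FinitePresentation.of_equiv
      (ModuleCat.cokernelIsoRangeQuotient f).symm.toLinearEquiv
  extension_mem S hS (h₁ : Module.FinitePresentation R S.X₁)
      (h₃ : Module.FinitePresentation R S.X₃) :=
    finitePresentation_of_exact hS.moduleCat_injective_f hS.moduleCat_surjective_g
      ((ShortComplex.ShortExact.moduleCat_exact_iff_function_exact _).1 hS.exact)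

end IsLeftCoherentRing

section Quotient

variable {R : Type u} [CommRing R] {a : Ideal R}

theorem finitePresentation_quotient (ha : a.FG) : Module.FinitePresentation R (R ⧸ a) := by
  refine Module.finitePresentation_of_surjective (Submodule.mkQ a) (Submodule.mkQ_surjective _) ?_
  rwa [Submodule.ker_mkQ]

theorem finitePresentation_of_restrictScalars (R S M : Type*) [CommRing R] [CommRing S]
    [Algebra R S] [AddCommGroup M] [Module R M] [Module S M] [IsScalarTower R S M]
    [Module.Finite R S] [Module.FinitePresentation R M] : Module.FinitePresentation S M := by
  have : Module.Finite S M := Module.Finite.of_restrictScalars_finite R _ _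
  obtain ⟨n, f, hf⟩ := Module.Finite.exists_fin' S M
  have hker := Module.FinitePresentation.fg_ker (f.restrictScalars R) hf
  rw [LinearMap.ker_restrictScalars] at hker
  exact Module.finitePresentation_of_surjective f hf (Submodule.FG.of_restrictScalars R hker)

theorem IsLeftCoherentRing.quotient (hR : IsLeftCoherentRing R) (ha : a.FG) :
    IsLeftCoherentRing (R ⧸ a) := by
  intro I hI
  have := finitePresentation_quotient ha
  have : Module.Finite (R ⧸ a) I := Module.Finite.iff_fg.2 hI
  have : Module.Finite R I := Module.Finite.trans (R ⧸ a) I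
  have : Module.FinitePresentation R I := hR.isPseudoCoherentModule (R ⧸ a)
    (I.restrictScalars R) (Module.Finite.iff_fg.1 ‹Module.Finite R I›)
  exact finitePresentation_of_restrictScalars R (R ⧸ a) I

end Quotient

/-! ### Based complexes -/

/-- A bounded complex of finitely generated free modules with a chosen homogeneous basis `ι`,
encoded by the degrees of the basis elements and the square matrix of the total differential. -/
structure BasedComplex (A : Type u) [CommRing A] where
  ι : Type
  fin : Fintype ι
  dec : DecidableEq ι
  deg : ι → ℤ
  d : Matrix ι ι A
  d_sq : d * d = 0
  d_deg : ∀ i j, deg i ≠ deg j + 1 → d i j = 0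

namespace BasedComplex

attribute [instance] BasedComplex.fin BasedComplex.dec

variable {A : Type u} [CommRing A] {P Q S : BasedComplex A}

section Component

/-- The matrix `f` is homogeneous of degree `k` with respect to the bases of `P` and `Q`. -/
def IsHomogeneous (P Q : BasedComplex A) (k : ℤ) (f : Matrix Q.ι P.ι A) : Prop :=
  ∀ j i, Q.deg j ≠ P.deg i + k → f j i = 0

theorem isHomogeneous_d (P : BasedComplex A) : IsHomogeneous P P 1 P.d := P.d_deg

theorem isHomogeneous_one (P : BasedComplex A) : IsHomogeneous P P 0 1 := by
  intro j i h
  rw [Matrix.one_apply_ne]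
  rintro rfl
  simp at h

theorem IsHomogeneous.smul {k : ℤ} {f : Matrix Q.ι P.ι A} (hf : IsHomogeneous P Q k f) (r : A) :
    IsHomogeneous P Q k (r • f) := fun j i h ↦ by
  rw [Matrix.smul_apply, hf j i h, smul_zero]

theorem IsHomogeneous.mul {k l m : ℤ} {f : Matrix Q.ι P.ι A} {g : Matrix S.ι Q.ι A}
    (hf : IsHomogeneous P Q k f) (hg : IsHomogeneous Q S l g) (h : k + l = m) :
    IsHomogeneous P S m (g * f) := by
  intro j i hij
  rw [Matrix.mul_apply]
  refine Finset.sum_eq_zero fun x _ ↦ ?_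
  by_cases h1 : Q.deg x = P.deg i + k
  · rw [hg j x (by omega), zero_mul]
  · rw [hf x i h1, mul_zero]

variable (N : Type u) [AddCommGroup N] [Module A N]

/-- The linear map from the degree `n` part of `P ⊗ N` to the degree `m` part of `Q ⊗ N` given by
the entries of the matrix `f` in these degrees. -/
def component (f : Matrix Q.ι P.ι A) (n m : ℤ) :
    ({i // P.deg i = n} → N) →ₗ[A] ({j // Q.deg j = m} → N) where
  toFun v j := ∑ i, f j.1 i.1 • v i
  map_add' v v' := by
    ext j
    simp [smul_add, Finset.sum_add_distrib]
  map_smul' r v := by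
    ext j
    simp only [Pi.smul_apply, RingHom.id_apply, Finset.smul_sum]
    exact Finset.sum_congr rfl fun x _ ↦ smul_comm _ _ _

theorem component_apply (f : Matrix Q.ι P.ι A) (n m : ℤ) (v : {i // P.deg i = n} → N)
    (j : {j // Q.deg j = m}) : component N f n m v j = ∑ i, f j.1 i.1 • v i := rfl

variable {N} in
theorem component_apply_dite (f : Matrix Q.ι P.ι A) (n m : ℤ) (v : {i // P.deg i = n} → N)
    (j : {j // Q.deg j = m}) : component N f n m v j =
      ∑ i, f j.1 i • (if h : P.deg i = n then v ⟨i, h⟩ else 0) := by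
  rw [component_apply]
  rw [← Finset.sum_subset (Finset.subset_univ (Finset.univ.filter fun i ↦ P.deg i = n))]
  · rw [Finset.sum_subtype (p := fun i ↦ P.deg i = n) _ (by simp)]
    refine Finset.sum_congr rfl fun x _ ↦ ?_
    rw [dif_pos x.2]
  · intro x _ hx
    rw [dif_neg (by simpa using hx), smul_zero]

theorem component_comp {k : ℤ} (f : Matrix Q.ι P.ι A) (g : Matrix S.ι Q.ι A)
    (hf : IsHomogeneous P Q k f) (n m l : ℤ) (h : n + k = m) :
    component N g m l ∘ₗ component N f n m = component N (g * f) n l := by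
  refine LinearMap.ext fun v ↦ funext fun j ↦ ?_
  rw [LinearMap.comp_apply, component_apply_dite, component_apply]
  simp only [Matrix.mul_apply, Finset.sum_smul]
  rw [Finset.sum_comm]
  refine Finset.sum_congr rfl fun x _ ↦ ?_
  split_ifs with h1
  · rw [component_apply, Finset.smul_sum]
    simp only [smul_smul]
  · rw [smul_zero]
    symm
    refine Finset.sum_eq_zero fun i _ ↦ ?_
    rw [hf x i.1 (by rw [i.2]; omega), mul_zero, zero_smul]

theorem component_zero (n m : ℤ) : component N (0 : Matrix Q.ι P.ι A) n m = 0 := by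
  ext v j; simp [component_apply]

theorem component_add (f g : Matrix Q.ι P.ι A) (n m : ℤ) :
    component N (f + g) n m = component N f n m + component N g n m := by
  ext v j; simp [component_apply, add_smul, Finset.sum_add_distrib]

theorem component_smul (r : A) (f : Matrix Q.ι P.ι A) (n m : ℤ) :
    component N (r • f) n m = r • component N f n m := by
  ext v j; simp [component_apply, Finset.smul_sum, smul_smul]

theorem component_one (n : ℤ) : component N (1 : Matrix P.ι P.ι A) n n = LinearMap.id := by
  refine LinearMap.ext fun v ↦ funext fun j ↦ ?_
  rw [component_apply, LinearMap.id_apply, Finset.sum_eq_single j]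
  · simp
  · intro b _ hb
    rw [Matrix.one_apply_ne, zero_smul]
    exact fun h ↦ hb (Subtype.ext h.symm)
  · simp

theorem component_of_ne {k : ℤ} {f : Matrix Q.ι P.ι A} (hf : IsHomogeneous P Q k f) (n m : ℤ)
    (h : n + k ≠ m) : component N f n m = 0 := by
  refine LinearMap.ext fun v ↦ funext fun j ↦ ?_
  rw [component_apply]
  refine Finset.sum_eq_zero fun i _ ↦ ?_
  rw [hf, zero_smul]
  rw [i.2, j.2]; exact h.symm

/-- The complex `P ⊗ N` of `A`-modules, for an `A`-module of coefficients `N`. -/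
def complex (P : BasedComplex A) (N : Type u) [AddCommGroup N] [Module A N] :
    CochainComplex (ModuleCat.{u} A) ℤ where
  X n := ModuleCat.of A ({i // P.deg i = n} → N)
  d n m := ModuleCat.ofHom (component N P.d n m)
  shape n m h := by
    rw [component_of_ne N P.isHomogeneous_d n m h]; rfl
  d_comp_d' n m l h _ := by
    rw [← ModuleCat.ofHom_comp, component_comp N P.d P.d P.isHomogeneous_d n m l h, P.d_sq,
      component_zero]; rfl

/-- The linear map `component N f n m` as a morphism in the category of modules. -/
def componentHom (f : Matrix Q.ι P.ι A) (n m : ℤ) : (P.complex N).X n ⟶ (Q.complex N).X m :=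
  ModuleCat.ofHom (component N f n m)

variable {N}

theorem complex_d (P : BasedComplex A) (n m : ℤ) : (P.complex N).d n m = componentHom N P.d n m :=
    rfl

theorem componentHom_comp {k : ℤ} {f : Matrix Q.ι P.ι A} {g : Matrix S.ι Q.ι A}
    (hf : IsHomogeneous P Q k f) (n m l : ℤ) (h : n + k = m) :
    componentHom N f n m ≫ componentHom N g m l = componentHom N (g * f) n l := by
  unfold componentHom
  rw [← component_comp N f g hf n m l h]; rfl

theorem componentHom_zero (n m : ℤ) : componentHom N (0 : Matrix Q.ι P.ι A) n m = 0 := by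
  unfold componentHom; rw [component_zero]; rfl

theorem componentHom_add (f g : Matrix Q.ι P.ι A) (n m : ℤ) :
    componentHom N (f + g) n m = componentHom N f n m + componentHom N g n m := by
  unfold componentHom; rw [component_add]; rfl

theorem componentHom_smul (r : A) (f : Matrix Q.ι P.ι A) (n m : ℤ) :
    componentHom N (r • f) n m = r • componentHom N f n m := by
  unfold componentHom; rw [component_smul]; rfl

theorem componentHom_one (n : ℤ) : componentHom N (1 : Matrix P.ι P.ι A) n n = 𝟙 _ := by
  unfold componentHom; rw [component_one]; rfl

theorem componentHom_of_ne {k : ℤ} {f : Matrix Q.ι P.ι A} (hf : IsHomogeneous P Q k f) (n m : ℤ)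
    (h : n + k ≠ m) : componentHom N f n m = 0 := by
  unfold componentHom; rw [component_of_ne N hf n m h]; rfl

/-- The chain map `P ⊗ N ⟶ Q ⊗ N` given by a homogeneous matrix of degree `0` commuting with the
differentials. -/
def complexMap (N : Type u) [AddCommGroup N] [Module A N] (f : Matrix Q.ι P.ι A)
    (hf : IsHomogeneous P Q 0 f) (hc : Q.d * f = f * P.d) : P.complex N ⟶ Q.complex N where
  f n := componentHom N f n n
  comm' n m h := by
    rw [complex_d, complex_d, componentHom_comp hf n n m (add_zero n),
      componentHom_comp P.isHomogeneous_d n m m h, hc]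

theorem complexMap_f (f : Matrix Q.ι P.ι A)
    (hf : IsHomogeneous P Q 0 f) (hc : Q.d * f = f * P.d) (n : ℤ) :
    (complexMap N f hf hc).f n = componentHom N f n n := rfl

theorem complexMap_comp (f : Matrix Q.ι P.ι A)
    (hf : IsHomogeneous P Q 0 f) (hc : Q.d * f = f * P.d) (g : Matrix S.ι Q.ι A)
    (hg : IsHomogeneous Q S 0 g) (hc' : S.d * g = g * Q.d) :
    complexMap N f hf hc ≫ complexMap N g hg hc' = complexMap N (g * f) (hf.mul hg (by simp))
      (by rw [← Matrix.mul_assoc, hc', Matrix.mul_assoc, hc, Matrix.mul_assoc]) := by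
  ext1 n
  rw [HomologicalComplex.comp_f, complexMap_f, complexMap_f, complexMap_f,
    componentHom_comp hf n n n (add_zero n)]

theorem complexMap_one : complexMap N (1 : Matrix P.ι P.ι A) P.isHomogeneous_one (by simp) =
    𝟙 _ := by
  ext1 n
  rw [complexMap_f, componentHom_one]; rfl

theorem complexMap_smul (r : A) (f : Matrix Q.ι P.ι A) (hf : IsHomogeneous P Q 0 f)
    (hc : Q.d * f = f * P.d) :
    complexMap N (r • f) (hf.smul r) (by rw [Matrix.mul_smul, hc, Matrix.smul_mul]) =
      r • complexMap N f hf hc := by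
  ext1 n
  rw [complexMap_f, componentHom_smul]; rfl

/-- The chain map `P ⊗ N ⟶ P ⊗ N'` induced by a linear map of coefficients. -/
def coeffMap (P : BasedComplex A) {N N' : Type u} [AddCommGroup N] [Module A N] [AddCommGroup N']
    [Module A N']
    (φ : N →ₗ[A] N') : P.complex N ⟶ P.complex N' where
  f n := ModuleCat.ofHom (φ.compLeft _)
  comm' n m _ := by
    change ModuleCat.ofHom (φ.compLeft _) ≫ ModuleCat.ofHom (component N' P.d n m) =
      ModuleCat.ofHom (component N P.d n m) ≫ ModuleCat.ofHom (φ.compLeft _)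
    rw [← ModuleCat.ofHom_comp, ← ModuleCat.ofHom_comp]
    congr 1
    ext v j
    simp only [LinearMap.comp_apply, component_apply, LinearMap.compLeft_apply, Function.comp_apply,
      map_sum, map_smul]

end Component

section Homotopy

/-- The homogeneous part of degree `k` of a matrix. -/
def homogeneousPart (P Q : BasedComplex A) (k : ℤ) (f : Matrix Q.ι P.ι A) : Matrix Q.ι P.ι A :=
  fun j i ↦ if Q.deg j = P.deg i + k then f j i else 0

theorem isHomogeneous_homogeneousPart (P Q : BasedComplex A) (k : ℤ) (f : Matrix Q.ι P.ι A) :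
    IsHomogeneous P Q k (homogeneousPart P Q k f) :=
  fun _ _ h ↦ if_neg h

theorem homogeneousPart_eq_self {k : ℤ} {f : Matrix Q.ι P.ι A} (hf : IsHomogeneous P Q k f) :
    homogeneousPart P Q k f = f := by
  ext j i
  unfold homogeneousPart
  split_ifs with h
  · rfl
  · exact (hf j i h).symm

theorem homogeneousPart_add (P Q : BasedComplex A) (k : ℤ) (f g : Matrix Q.ι P.ι A) :
    homogeneousPart P Q k (f + g) = homogeneousPart P Q k f + homogeneousPart P Q k g := by
  ext j i
  simp only [homogeneousPart, Matrix.add_apply]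
  split_ifs <;> simp

theorem homogeneousPart_mul_left {k l m : ℤ} (f : Matrix Q.ι P.ι A) {g : Matrix S.ι Q.ι A}
    (hg : IsHomogeneous Q S l g) (h : k + l = m) : homogeneousPart P S m (g * f) =
    g * homogeneousPart P Q k f := by
  ext j i
  simp only [homogeneousPart, Matrix.mul_apply]
  split_ifs with h1
  · refine Finset.sum_congr rfl fun x _ ↦ ?_
    split_ifs with h2
    · rfl
    · rw [hg j x (by omega), zero_mul, zero_mul]
  · symm
    refine Finset.sum_eq_zero fun x _ ↦ ?_
    split_ifs with h2
    · rw [hg j x (by omega), zero_mul]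
    · simp

theorem homogeneousPart_mul_right {k l m : ℤ} {f : Matrix Q.ι P.ι A} (g : Matrix S.ι Q.ι A)
    (hf : IsHomogeneous P Q k f) (h : k + l = m) : homogeneousPart P S m (g * f) =
    homogeneousPart Q S l g * f := by
  ext j i
  simp only [homogeneousPart, Matrix.mul_apply]
  split_ifs with h1
  · refine Finset.sum_congr rfl fun x _ ↦ ?_
    split_ifs with h2
    · rfl
    · rw [hf x i (by omega), mul_zero, mul_zero]
  · symm
    refine Finset.sum_eq_zero fun x _ ↦ ?_
    split_ifs with h2
    · rw [hf x i (by omega), mul_zero]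
    · simp

/-- The matrix `f` is null-homotopic. The homotopy is not required to be homogeneous: for
homogeneous `f` its part of degree `-1` is again a homotopy,
see `IsNullHomotopic.exists_isHomogeneous`. -/
def IsNullHomotopic (P Q : BasedComplex A) (f : Matrix Q.ι P.ι A) : Prop := ∃ h : Matrix Q.ι P.ι A,
  f = Q.d * h + h * P.d

theorem IsNullHomotopic.exists_isHomogeneous {f : Matrix Q.ι P.ι A} (hn : IsNullHomotopic P Q f)
    (hf : IsHomogeneous P Q 0 f) :
    ∃ h : Matrix Q.ι P.ι A, IsHomogeneous P Q (-1) h ∧ f = Q.d * h + h * P.d := by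
  obtain ⟨h, hh⟩ := hn
  refine ⟨homogeneousPart P Q (-1) h, isHomogeneous_homogeneousPart _ _ _ _, ?_⟩
  rw [← homogeneousPart_mul_left h Q.isHomogeneous_d (m := 0) (by simp),
    ← homogeneousPart_mul_right h P.isHomogeneous_d (m := 0)
    (by simp), ← homogeneousPart_add, ← hh, homogeneousPart_eq_self hf]

theorem IsNullHomotopic.nonempty_homotopy {f : Matrix Q.ι P.ι A} (hn : IsNullHomotopic P Q f)
    (hf : IsHomogeneous P Q 0 f) (hc : Q.d * f = f * P.d) (N : Type u) [AddCommGroup N]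
    [Module A N] :
    Nonempty (Homotopy (complexMap N f hf hc) 0) := by
  obtain ⟨h, h1, h2⟩ := hn.exists_isHomogeneous hf
  refine ⟨{ hom := fun i j ↦ componentHom N h i j, zero := ?_, comm := ?_ }⟩
  · intro i j hij
    exact componentHom_of_ne h1 _ _ (fun h ↦ hij (by simp only [ComplexShape.up_Rel]; omega))
  · intro i
    rw [dNext_eq (i' := i + 1) _ (by simp), prevD_eq (j' := i - 1) _ (by simp), complexMap_f,
      complex_d, complex_d,
      componentHom_comp P.isHomogeneous_d i (i+1) i rfl, componentHom_comp h1 i (i-1) i rfl,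
      ← componentHom_add, h2, add_comm (Q.d * h)]
    simp

theorem component_single (f : Matrix Q.ι P.ι A) (n m : ℤ) (i : {i // P.deg i = n})
    (j : {j // Q.deg j = m}) : component A f n m (Pi.single i 1) j = f j.1 i.1 := by
  rw [component_apply, Finset.sum_eq_single i]
  · simp
  · intro b _ hb
    simp [hb]
  · simp

theorem eq_of_component_eq {k : ℤ} {f g : Matrix Q.ι P.ι A} (hf : IsHomogeneous P Q k f)
    (hg : IsHomogeneous P Q k g) (h : ∀ n m, n + k = m → component A f n m = component A g n m) :
    f = g := by
  ext j i
  by_cases hij : Q.deg j = P.deg i + k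
  · rw [← component_single f (P.deg i) (Q.deg j) ⟨i, rfl⟩ ⟨j, rfl⟩, h _ _ hij.symm,
      component_single]
  · rw [hf j i hij, hg j i hij]

theorem eq_of_componentHom_eq {k : ℤ} {f g : Matrix Q.ι P.ι A} (hf : IsHomogeneous P Q k f)
    (hg : IsHomogeneous P Q k g) (h : ∀ n m, n + k = m → componentHom A f n m =
    componentHom A g n m) : f = g :=
  eq_of_component_eq hf hg fun n m hnm ↦ congrArg ModuleCat.Hom.hom (h n m hnm)

theorem exists_componentHom_eq (k : ℤ) (φ : ∀ n m : ℤ, (P.complex A).X n ⟶ (Q.complex A).X m) :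
    ∃ f, IsHomogeneous P Q k f ∧ ∀ n m, n + k = m → componentHom A f n m = φ n m := by
  let f : Matrix Q.ι P.ι A := fun j i ↦
    (φ (P.deg i) (Q.deg j)).hom (Pi.single (M := fun _ ↦ A) (⟨i, rfl⟩ : {x // P.deg x = P.deg i}) 1)
      (⟨j, rfl⟩ : {y // Q.deg y = Q.deg j})
  refine ⟨homogeneousPart P Q k f, isHomogeneous_homogeneousPart _ _ _ _, fun n m h ↦ ?_⟩
  refine ModuleCat.hom_ext ?_
  change component A _ n m = (φ n m).hom
  refine LinearMap.pi_ext' fun i ↦ LinearMap.ext_ring (funext fun j ↦ ?_)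
  refine (component_single _ n m i j).trans ?_
  obtain ⟨i, rfl⟩ := i
  obtain ⟨j, rfl⟩ := j
  exact if_pos h.symm

theorem exists_complexMap_eq (g : P.complex A ⟶ Q.complex A) :
    ∃ (f : Matrix Q.ι P.ι A) (hf : IsHomogeneous P Q 0 f) (hc : Q.d * f = f * P.d),
      complexMap A f hf hc = g := by
  obtain ⟨f, hf, hfg⟩ := exists_componentHom_eq (P := P) (Q := Q) 0
    (fun n m ↦ if h : n = m then g.f n ≫ eqToHom (by rw [h]) else 0)
  have key : ∀ n, componentHom A f n n = g.f n := fun n ↦ by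
    rw [hfg n n (by simp)]; simp
  have hc : Q.d * f = f * P.d := by
    refine eq_of_componentHom_eq (hf.mul Q.isHomogeneous_d (m := 1) (by simp))
      (P.isHomogeneous_d.mul hf (by simp)) ?_
    intro n m h
    rw [← componentHom_comp hf n n m (by simp), ← componentHom_comp P.isHomogeneous_d n m m h, key,
      key, ← complex_d, ← complex_d]
    exact g.comm n m
  refine ⟨f, hf, hc, ?_⟩
  ext1 n
  exact key n

theorem isNullHomotopic_of_homotopy {f : Matrix Q.ι P.ι A} (hf : IsHomogeneous P Q 0 f)
    (hc : Q.d * f = f * P.d) (H : Homotopy (complexMap A f hf hc) 0) : IsNullHomotopic P Q f := by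
  obtain ⟨h, h1, h2⟩ := exists_componentHom_eq (P := P) (Q := Q) (-1) (fun n m ↦ H.hom n m)
  refine ⟨h, eq_of_componentHom_eq hf ?_ ?_⟩
  · rw [← homogeneousPart_eq_self (h1.mul Q.isHomogeneous_d (m := 0) (by simp)),
      ← homogeneousPart_eq_self (P.isHomogeneous_d.mul h1 (m := 0) (by simp)),
      ← homogeneousPart_add]
    exact isHomogeneous_homogeneousPart _ _ _ _
  · intro n m hnm
    obtain rfl : n = m := by omega
    have := H.comm n
    rw [dNext_eq (i' := n + 1) _ (by simp), prevD_eq (j' := n - 1) _ (by simp),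
      complexMap_f] at this
    rw [this, componentHom_add, ← componentHom_comp P.isHomogeneous_d n (n+1) n rfl,
      ← componentHom_comp h1 n (n-1) n rfl,
      h2 _ _ (by omega), h2 _ _ (by omega), complex_d, complex_d]
    simp [add_comm]

instance projective_X (P : BasedComplex A) (n : ℤ) : Projective ((P.complex A).X n) :=
  ModuleCat.projective_of_free (Pi.basisFun A {i // P.deg i = n})

theorem exists_bound (P : BasedComplex A) : ∃ b : ℤ, ∀ i, P.deg i ≤ b := by
  obtain ⟨b, hb⟩ := (Set.finite_range P.deg).bddAbove
  exact ⟨b, fun i ↦ hb ⟨i, rfl⟩⟩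

theorem isZero_complex_X (P : BasedComplex A) (N : Type u) [AddCommGroup N] [Module A N] (n : ℤ)
    (h : ∀ i, P.deg i ≠ n) : IsZero ((P.complex N).X n) := by
  have : IsEmpty {i // P.deg i = n} := ⟨fun x ↦ h x.1 x.2⟩
  exact ModuleCat.isZero_of_subsingleton (ModuleCat.of A ({i // P.deg i = n} → N))

instance isKProjective (P : BasedComplex A) : (P.complex A).IsKProjective := by
  obtain ⟨b, hb⟩ := P.exists_bound
  have : (P.complex A).IsStrictlyLE b := by
    rw [CochainComplex.isStrictlyLE_iff]
    intro n hn
    exact P.isZero_complex_X A n fun i hi ↦ by have := hb i; omega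
  exact CochainComplex.isKProjective_of_projective (P.complex A) b

variable [HasDerivedCategory.{w} (ModuleCat.{u} A)]

/-- The object of the derived category represented by `P`. -/
noncomputable abbrev obj (P : BasedComplex A) : DerivedCategory (ModuleCat.{u} A) :=
    DerivedCategory.Q.obj (P.complex A)

theorem exists_Q_map_eq (P : BasedComplex A) (L : CochainComplex (ModuleCat.{u} A) ℤ)
    (φ : P.obj ⟶ DerivedCategory.Q.obj L) : ∃ g : P.complex A ⟶ L, DerivedCategory.Q.map g = φ := by
  let e := DerivedCategory.quotientCompQhIso (ModuleCat.{u} A)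
  obtain ⟨g, hg⟩ := (CochainComplex.IsKProjective.Qh_map_bijective (P.complex A)
    ((HomotopyCategory.quotient _ _).obj L)).2 (e.hom.app _ ≫ φ ≫ e.inv.app _)
  obtain ⟨g, rfl⟩ := (HomotopyCategory.quotient _ _).map_surjective g
  refine ⟨g, ?_⟩
  have := e.hom.naturality g
  rw [Functor.comp_map, hg] at this
  rw [← cancel_epi (e.hom.app _), ← this]
  simp

theorem nonempty_homotopy_zero (P : BasedComplex A) (L : CochainComplex (ModuleCat.{u} A) ℤ)
    (g : P.complex A ⟶ L) (h : DerivedCategory.Q.map g = 0) : Nonempty (Homotopy g 0) := by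
  let e := DerivedCategory.quotientCompQhIso (ModuleCat.{u} A)
  have h1 := e.hom.naturality g
  rw [h, comp_zero, ← zero_comp (f := e.hom.app L), cancel_mono] at h1
  have h2 := (CochainComplex.IsKProjective.Qh_map_bijective (P.complex A)
    ((HomotopyCategory.quotient _ _).obj L)).1 (a₁ := (HomotopyCategory.quotient _ _).map g)
    (a₂ := 0) (by rw [Functor.map_zero]; exact h1)
  exact ⟨HomotopyCategory.homotopyOfEq _ _ (h2.trans (Functor.map_zero _ _ _).symm)⟩

/-- The morphism of the derived category represented by a matrix. -/
noncomputable def derivedMap (f : Matrix Q.ι P.ι A)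
    (hf : IsHomogeneous P Q 0 f) (hc : Q.d * f = f * P.d) : P.obj ⟶ Q.obj :=
  DerivedCategory.Q.map (complexMap A f hf hc)

theorem exists_derivedMap_eq (φ : P.obj ⟶ Q.obj) :
    ∃ (f : Matrix Q.ι P.ι A) (hf : IsHomogeneous P Q 0 f) (hc : Q.d * f = f * P.d),
      derivedMap f hf hc = φ := by
  obtain ⟨g, rfl⟩ := exists_Q_map_eq P _ φ
  obtain ⟨f, hf, hc, rfl⟩ := exists_complexMap_eq g
  exact ⟨f, hf, hc, rfl⟩

theorem derivedMap_eq_zero_iff (f : Matrix Q.ι P.ι A)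
    (hf : IsHomogeneous P Q 0 f) (hc : Q.d * f = f * P.d) : derivedMap f hf hc = 0 ↔
    IsNullHomotopic P Q f := by
  constructor
  · intro h
    obtain ⟨H⟩ := nonempty_homotopy_zero P _ _ h
    exact isNullHomotopic_of_homotopy hf hc H
  · intro h
    obtain ⟨H⟩ := h.nonempty_homotopy hf hc A
    unfold derivedMap
    rw [DerivedCategory.Q_map_eq_of_homotopy _ H, Functor.map_zero]

theorem derivedMap_smul (r : A) (f : Matrix Q.ι P.ι A) (hf : IsHomogeneous P Q 0 f)
    (hc : Q.d * f = f * P.d) :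
    derivedMap (r • f) (hf.smul r) (by rw [Matrix.mul_smul, hc, Matrix.smul_mul]) =
      r • derivedMap f hf hc := by
  unfold derivedMap
  rw [complexMap_smul, Functor.map_smul]

theorem smul_id_eq_zero_iff (P : BasedComplex A) (s : A) : s • 𝟙 P.obj = 0 ↔
    IsNullHomotopic P P (s • 1) := by
  have h1 : s • 𝟙 P.obj = derivedMap (s • 1) (P.isHomogeneous_one.smul s) (by simp) := by
    rw [derivedMap_smul s 1 P.isHomogeneous_one (by simp), derivedMap, complexMap_one,
      CategoryTheory.Functor.map_id]
  rw [h1, derivedMap_eq_zero_iff]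

end Homotopy

end BasedComplex

namespace BasedComplex

variable {A : Type u} [CommRing A] {P Q : BasedComplex A}

section Shift

theorem nonempty_complex_iso_shift {B P : BasedComplex A} (e : B.ι ≃ P.ι) (k : ℤ)
    (hdeg : ∀ i, B.deg i + k = P.deg (e i)) (ε : ℤˣ)
    (hd : ∀ i j, B.d i j = (ε : ℤ) • P.d (e i) (e j)) (N : Type u) [AddCommGroup N] [Module A N] :
    Nonempty (B.complex N ≅ (P.complex N)⟦k⟧) := by
  let E (n : ℤ) : {j // P.deg j = n + k} ≃ {i // B.deg i = n} :=
    (Equiv.subtypeEquiv e (fun i ↦ by rw [← hdeg]; omega)).symm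
  have hE n j : e (E n j).1 = j.1 := e.apply_symm_apply _
  -- The twist by `ν ^ n` in degree `n` compensates the factor `ν` between the two differentials.
  let ν : ℤˣ := k.negOnePow * ε
  refine ⟨HomologicalComplex.Hom.isoOfComponents
    (fun n ↦ (ν ^ n : ℤˣ) • (LinearEquiv.funCongrLeft A N (E n)).toModuleIso) ?_⟩
  intro n m hnm
  refine ModuleCat.hom_ext (LinearMap.ext fun v ↦ funext fun j ↦ ?_)
  have key (v : {i // B.deg i = n} → N) (j : {j // P.deg j = m + k}) :
      k.negOnePow • component N P.d (n + k) (m + k) (fun i ↦ ν ^ n • v (E n i)) j =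
        ν ^ m • component N B.d n m v (E m j) := by
    obtain rfl : n + 1 = m := hnm
    rw [component_apply, component_apply, ← Equiv.sum_comp (E n), Finset.smul_sum, Finset.smul_sum]
    refine Finset.sum_congr rfl fun i _ ↦ ?_
    have hν : k.negOnePow * ν ^ n = ν ^ (n + 1) * ε := by
      rw [zpow_add_one, mul_assoc, mul_assoc, Int.units_mul_self, mul_one, mul_comm]
    rw [hd, hE, hE, smul_comm (P.d _ _), ← mul_smul, hν, mul_smul, ← Units.smul_def, smul_assoc]
  exact key v j

/-- The shifted complex `P⟦k⟧`, on the same basis. -/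
abbrev shift (P : BasedComplex A) (k : ℤ) : BasedComplex A where
  ι := P.ι
  fin := P.fin
  dec := P.dec
  deg i := P.deg i - k
  d := (k.negOnePow : ℤ) • P.d
  d_sq := by rw [smul_mul_smul_comm, P.d_sq, smul_zero]
  d_deg i j h := by rw [Matrix.smul_apply, P.d_deg i j (by omega), smul_zero]

variable [HasDerivedCategory.{w} (ModuleCat.{u} A)]

theorem nonempty_obj_iso_shift {B P : BasedComplex A} (e : B.ι ≃ P.ι) (k : ℤ)
    (hdeg : ∀ i, B.deg i + k = P.deg (e i)) (ε : ℤˣ)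
    (hd : ∀ i j, B.d i j = (ε : ℤ) • P.d (e i) (e j)) : Nonempty (B.obj ≅ P.obj⟦k⟧) := by
  obtain ⟨i⟩ := nonempty_complex_iso_shift e k hdeg ε hd A
  exact ⟨DerivedCategory.Q.mapIso i ≪≫ (DerivedCategory.Q.commShiftIso k).app _⟩

theorem mem_of_equiv {D : Set (DerivedCategory (ModuleCat.{u} A))} (hD : IsThickSubcategory D)
    {B P : BasedComplex A} (hP : P.obj ∈ D) (e : B.ι ≃ P.ι) (k : ℤ)
    (hdeg : ∀ i, B.deg i + k = P.deg (e i)) (ε : ℤˣ)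
    (hd : ∀ i j, B.d i j = (ε : ℤ) • P.d (e i) (e j)) : B.obj ∈ D := by
  obtain ⟨i⟩ := nonempty_obj_iso_shift e k hdeg ε hd
  exact hD.mem_of_iso i.symm (hD.shift_mem _ k hP)

end Shift

section Extension

/-- The extension of `Q` by `P` with class `g`: the complex `P ⊕ Q` with differential the
block matrix `(d_P, g; 0, d_Q)`. -/
abbrev extension (P Q : BasedComplex A) (g : Matrix P.ι Q.ι A) (hg : IsHomogeneous Q P 1 g)
    (hc : P.d * g + g * Q.d = 0) : BasedComplex A where
  ι := P.ι ⊕ Q.ι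
  fin := inferInstance
  dec := inferInstance
  deg := Sum.elim P.deg Q.deg
  d := Matrix.fromBlocks P.d g 0 Q.d
  d_sq := by
    rw [Matrix.fromBlocks_multiply]
    simp [P.d_sq, Q.d_sq, hc]
  d_deg i j h := by
    rcases i with i | i <;> rcases j with j | j
    · exact P.d_deg i j h
    · exact hg i j h
    · rfl
    · exact Q.d_deg i j h

variable {g : Matrix P.ι Q.ι A} (hg : IsHomogeneous Q P 1 g)
    (hc : P.d * g + g * Q.d = 0)

/-- The matrix of the inclusion of `P` into an extension. -/
def inl : Matrix (extension P Q g hg hc).ι P.ι A :=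
  (Matrix.fromRows 1 0 : Matrix (P.ι ⊕ Q.ι) P.ι A)

/-- The matrix of the inclusion of `Q` into an extension; it does not commute with `d`. -/
def inr : Matrix (extension P Q g hg hc).ι Q.ι A :=
  (Matrix.fromRows 0 1 : Matrix (P.ι ⊕ Q.ι) Q.ι A)

/-- The matrix of the projection of an extension onto `P`; it does not commute with `d`. -/
def fst : Matrix P.ι (extension P Q g hg hc).ι A :=
  (Matrix.fromCols 1 0 : Matrix P.ι (P.ι ⊕ Q.ι) A)

/-- The matrix of the projection of an extension onto `Q`. -/
def snd : Matrix Q.ι (extension P Q g hg hc).ι A :=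
  (Matrix.fromCols 0 1 : Matrix Q.ι (P.ι ⊕ Q.ι) A)

theorem isHomogeneous_inl : IsHomogeneous P (extension P Q g hg hc) 0 (inl hg hc) := by
  rintro (j | j) i h
  · exact P.isHomogeneous_one j i h
  · rfl

theorem isHomogeneous_inr : IsHomogeneous Q (extension P Q g hg hc) 0 (inr hg hc) := by
  rintro (j | j) i h
  · rfl
  · exact Q.isHomogeneous_one j i h

theorem isHomogeneous_fst : IsHomogeneous (extension P Q g hg hc) P 0 (fst hg hc) := by
  rintro j (i | i) h
  · exact P.isHomogeneous_one j i h
  · rfl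

theorem isHomogeneous_snd : IsHomogeneous (extension P Q g hg hc) Q 0 (snd hg hc) := by
  rintro j (i | i) h
  · rfl
  · exact Q.isHomogeneous_one j i h

theorem extension_d_mul_inl : (extension P Q g hg hc).d * inl hg hc = inl hg hc * P.d := by
  rw [inl, Matrix.fromBlocks_mul_fromRows, Matrix.fromRows_mul]
  simp

theorem extension_d_mul_inr :
    (extension P Q g hg hc).d * inr hg hc = inl hg hc * g + inr hg hc * Q.d := by
  rw [inl, inr, Matrix.fromBlocks_mul_fromRows, Matrix.fromRows_mul, Matrix.fromRows_mul]
  ext (i | i) j <;> simp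

theorem d_mul_snd : Q.d * snd hg hc = snd hg hc * (extension P Q g hg hc).d := by
  rw [snd, Matrix.fromCols_mul_fromBlocks, Matrix.mul_fromCols]
  simp

theorem fst_mul_inl : fst hg hc * inl hg hc = 1 :=
  (Matrix.fromCols_mul_fromRows ..).trans (by simp)

theorem snd_mul_inr : snd hg hc * inr hg hc = 1 :=
  (Matrix.fromCols_mul_fromRows ..).trans (by simp)

theorem snd_mul_inl : snd hg hc * inl hg hc = 0 :=
  (Matrix.fromCols_mul_fromRows ..).trans (by simp)

theorem fst_mul_inr : fst hg hc * inr hg hc = 0 :=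
  (Matrix.fromCols_mul_fromRows ..).trans (by simp)

theorem inl_mul_fst_add_inr_mul_snd : inl hg hc * fst hg hc + inr hg hc * snd hg hc = 1 := by
  rw [inl, fst, inr, snd, Matrix.fromRows_mul_fromCols, Matrix.fromRows_mul_fromCols,
    Matrix.fromBlocks_add]
  simp

/-- The inclusion `P ⊗ N ⟶ E ⊗ N` into an extension `E` of `Q` by `P`. -/
def inclusion (N : Type u) [AddCommGroup N] [Module A N] :
    P.complex N ⟶ (extension P Q g hg hc).complex N :=
  complexMap N (inl hg hc) (isHomogeneous_inl hg hc) (extension_d_mul_inl hg hc)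

/-- The projection `E ⊗ N ⟶ Q ⊗ N` from an extension `E` of `Q` by `P`. -/
def projection (N : Type u) [AddCommGroup N] [Module A N] :
    (extension P Q g hg hc).complex N ⟶ Q.complex N :=
  complexMap N (snd hg hc) (isHomogeneous_snd hg hc) (d_mul_snd hg hc)

/-- The short exact sequence of complexes of an extension. -/
def extensionShortComplex (N : Type u) [AddCommGroup N] [Module A N] :
    ShortComplex (CochainComplex (ModuleCat.{u} A) ℤ) :=
  ShortComplex.mk (inclusion hg hc N) (projection hg hc N) (by
    ext1 n
    rw [HomologicalComplex.comp_f, inclusion, projection, complexMap_f, complexMap_f,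
      componentHom_comp (isHomogeneous_inl hg hc) n n n (by simp), snd_mul_inl, componentHom_zero]
    rfl)

theorem extensionShortComplex_shortExact (N : Type u) [AddCommGroup N] [Module A N] :
    (extensionShortComplex hg hc N).ShortExact := by
  refine HomologicalComplex.shortExact_of_degreewise_shortExact _ fun n ↦ ?_
  refine ShortComplex.Splitting.shortExact
    ⟨componentHom N (fst hg hc) n n, componentHom N (inr hg hc) n n, ?_, ?_, ?_⟩
  · exact (componentHom_comp (isHomogeneous_inl hg hc) n n n (by simp)).trans
      ((congrArg (componentHom N · n n) (fst_mul_inl hg hc)).trans (componentHom_one n))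
  · exact (componentHom_comp (isHomogeneous_inr hg hc) n n n (by simp)).trans
      ((congrArg (componentHom N · n n) (snd_mul_inr hg hc)).trans (componentHom_one n))
  · have : componentHom N (fst hg hc) n n ≫ componentHom N (inl hg hc) n n +
        componentHom N (snd hg hc) n n ≫ componentHom N (inr hg hc) n n = 𝟙 _ := by
      rw [componentHom_comp (isHomogeneous_fst hg hc) n n n (by simp),
        componentHom_comp (isHomogeneous_snd hg hc) n n n (by simp),
        ← componentHom_add, inl_mul_fst_add_inr_mul_snd, componentHom_one]
    exact this

variable [HasDerivedCategory.{w} (ModuleCat.{u} A)]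

theorem extension_mem {D : Set (DerivedCategory (ModuleCat.{u} A))}
    (hD : IsThickSubcategory D) (hP : P.obj ∈ D) (hQ : Q.obj ∈ D) :
    (extension P Q g hg hc).obj ∈ D :=
  hD.ext₂ _ (DerivedCategory.triangleOfSES_distinguished
    (extensionShortComplex_shortExact hg hc A)) hP hQ

theorem trW_inclusion {D : Set (DerivedCategory (ModuleCat.{u} A))} (hQ : Q.obj ∈ D) :
    ObjectProperty.trW (· ∈ D) (DerivedCategory.Q.map (inclusion hg hc A)) :=
  ObjectProperty.trW.mk _ (DerivedCategory.triangleOfSES_distinguished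
    (extensionShortComplex_shortExact hg hc A)) hQ

end Extension

end BasedComplex

namespace IsThickSubcategory

theorem trW_id_sub_of_retract {T : Type*} [Category T] [HasZeroObject T] [Preadditive T]
    [HasShift T ℤ] [∀ n : ℤ, (shiftFunctor T n).Additive] [Pretriangulated T] [IsTriangulated T]
    {D : Set T} (hD : IsThickSubcategory D) {X Y : T} (i : X ⟶ Y) (r : Y ⟶ X) (hir : i ≫ r = 𝟙 X)
    (hX : X ∈ D) : ObjectProperty.trW (· ∈ D) (𝟙 Y - r ≫ i) := by
  have split {U V W : T} {j : U ⟶ V} {y : V ⟶ W} {δ : W ⟶ U⟦(1 : ℤ)⟧} (s : V ⟶ U)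
      (hjs : j ≫ s = 𝟙 U) (hT : Triangle.mk j y δ ∈ distTriang T) : δ = 0 := by
    have h : δ ≫ j⟦(1 : ℤ)⟧' = 0 := comp_distTriang_mor_zero₃₁ _ hT
    simpa [← Functor.map_comp, hjs] using congrArg (· ≫ s⟦(1 : ℤ)⟧') h
  obtain ⟨Z, y, δ, hT⟩ := distinguished_cocone_triangle i
  have hy : Epi y := Triangle.epi₂ _ hT (split r hir hT)
  have hiy : i ≫ y = 0 := comp_distTriang_mor_zero₁₂ _ hT
  obtain ⟨q, hq⟩ : ∃ q, 𝟙 Y - r ≫ i = y ≫ q :=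
    Triangle.yoneda_exact₂ _ hT (𝟙 Y - r ≫ i) (by
      change i ≫ _ = 0
      rw [Preadditive.comp_sub, ← Category.assoc, hir, Category.comp_id, Category.id_comp,
        sub_self])
  have hqy : q ≫ y = 𝟙 Z := by
    rw [← cancel_epi y, ← Category.assoc, ← hq, Preadditive.sub_comp, Category.assoc, hiy]; simp
  -- `Y` is the direct sum of `X` and `Z`, so the cone `W` of `q` is a retract of `X`.
  obtain ⟨W, p, δ', hT'⟩ := distinguished_cocone_triangle q
  obtain ⟨s, hs⟩ : ∃ s, 𝟙 W = s ≫ p :=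
    Triangle.coyoneda_exact₃ _ hT' (𝟙 W) ((Category.id_comp _).trans (split y hqy hT'))
  have hqp : q ≫ p = 0 := comp_distTriang_mor_zero₁₂ _ hT'
  have hW : (s ≫ r) ≫ i ≫ p = 𝟙 W := by
    have h : r ≫ i = 𝟙 Y - y ≫ q := by rw [← hq]; abel
    rw [Category.assoc, ← Category.assoc r, h, Preadditive.sub_comp, Category.assoc, hqp, hs]
    simp
  have := hD.isTriangulated
  have hq' : ObjectProperty.trW (· ∈ D) q :=
    ObjectProperty.trW.mk _ hT' (hD.retract_mem _ _ _ _ hW hX)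
  have hy' : ObjectProperty.trW (· ∈ D) y := ObjectProperty.trW.mk' _ hT hX
  exact hq ▸ MorphismProperty.comp_mem _ _ _ hy' hq'

end IsThickSubcategory

namespace BasedComplex

variable {A : Type u} [CommRing A] {P Q : BasedComplex A}

section Cone

theorem isHomogeneous_cone {f : Matrix Q.ι P.ι A} (hf : IsHomogeneous P Q 0 f) :
    IsHomogeneous (P.shift 1) Q 1 f := fun j i h ↦ hf j i (by
      intro h'; apply h; change _ = P.deg i - 1 + 1; omega)

theorem cone_d_sq {f : Matrix Q.ι P.ι A} (hc : Q.d * f = f * P.d) :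
    Q.d * f + f * (P.shift 1).d = 0 := by
  change Q.d * f + f * (((1 : ℤ).negOnePow : ℤˣ) : ℤ) • P.d = 0
  rw [hc]; simp

/-- The mapping cone of the chain map with matrix `f`. -/
abbrev cone (f : Matrix Q.ι P.ι A) (hf : IsHomogeneous P Q 0 f) (hc : Q.d * f = f * P.d) :
    BasedComplex A := extension Q (P.shift 1) f (isHomogeneous_cone hf) (cone_d_sq hc)

variable {f : Matrix Q.ι P.ι A} (hf : IsHomogeneous P Q 0 f) (hc : Q.d * f = f * P.d)

/-- The first inclusion `Q → cone f`. -/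
abbrev coneInl : Matrix (cone f hf hc).ι Q.ι A := inl (isHomogeneous_cone hf) (cone_d_sq hc)

/-- The first projection `cone f → Q`, a map of graded modules. -/
abbrev coneFst : Matrix Q.ι (cone f hf hc).ι A := fst (isHomogeneous_cone hf) (cone_d_sq hc)

/-- The second inclusion `P → cone f`, a map of graded modules of degree `-1`. -/
def coneInr : Matrix (cone f hf hc).ι P.ι A := inr (isHomogeneous_cone hf) (cone_d_sq hc)

/-- The second projection `cone f → P`, of degree `1`. -/
def coneSnd : Matrix P.ι (cone f hf hc).ι A := snd (isHomogeneous_cone hf) (cone_d_sq hc)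

theorem isHomogeneous_coneInr : IsHomogeneous P (cone f hf hc) (-1) (coneInr hf hc) := fun j i h ↦
  isHomogeneous_inr (isHomogeneous_cone hf) (cone_d_sq hc) j i fun h' ↦
    h (h'.trans (add_zero (P.deg i - 1)))

theorem isHomogeneous_coneSnd : IsHomogeneous (cone f hf hc) P 1 (coneSnd hf hc) := fun j i h ↦
  isHomogeneous_snd (isHomogeneous_cone hf) (cone_d_sq hc) j i fun h' ↦
    h (sub_eq_iff_eq_add.1 (h'.trans (add_zero _)))

theorem cone_d_mul_coneInr :
    (cone f hf hc).d * coneInr hf hc = coneInl hf hc * f - coneInr hf hc * P.d := by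
  have h : coneInr hf hc * (P.shift 1).d = -(coneInr hf hc * P.d) := by
    change coneInr hf hc * ((((1 : ℤ).negOnePow : ℤˣ) : ℤ) • P.d) = _
    simp
  rw [sub_eq_add_neg, ← h]
  exact extension_d_mul_inr (isHomogeneous_cone hf) (cone_d_sq hc)

theorem coneSnd_mul_coneInr : coneSnd hf hc * coneInr hf hc = 1 :=
  snd_mul_inr (isHomogeneous_cone hf) (cone_d_sq hc)

theorem coneSnd_mul_coneInl : coneSnd hf hc * coneInl hf hc = 0 :=
  snd_mul_inl (isHomogeneous_cone hf) (cone_d_sq hc)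

theorem coneFst_mul_coneInr : coneFst hf hc * coneInr hf hc = 0 :=
  fst_mul_inr (isHomogeneous_cone hf) (cone_d_sq hc)

theorem coneInl_mul_coneFst_add_coneInr_mul_coneSnd :
    coneInl hf hc * coneFst hf hc + coneInr hf hc * coneSnd hf hc = 1 :=
  inl_mul_fst_add_inr_mul_snd (isHomogeneous_cone hf) (cone_d_sq hc)

open CochainComplex HomComplex

/-- The comparison map from the mapping cone in the category of complexes. -/
noncomputable def mappingConeDesc :
    mappingCone (complexMap A f hf hc) ⟶ (cone f hf hc).complex A :=
  mappingCone.desc (complexMap A f hf hc)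
    (Cochain.mk fun p q _ ↦ componentHom A (coneInr hf hc) p q)
    (inclusion (isHomogeneous_cone hf) (cone_d_sq hc) A) <| by
      ext p
      have hβ : (inclusion (isHomogeneous_cone hf) (cone_d_sq hc) A).f p =
        componentHom A (coneInl hf hc) p p := rfl
      rw [δ_v (-1) 0 (by simp) _ p p (by simp) (p - 1) (p + 1) rfl rfl, Cochain.mk_v, Cochain.mk_v,
        Cochain.ofHom_v, HomologicalComplex.comp_f, complexMap_f, hβ,
        componentHom_comp hf p p p (by simp), complex_d, complex_d,
        componentHom_comp (isHomogeneous_coneInr hf hc) p (p - 1) p rfl,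
        componentHom_comp P.isHomogeneous_d p (p + 1) p rfl, cone_d_mul_coneInr,
        Int.negOnePow_zero, one_smul, ← componentHom_add, sub_add_cancel]

theorem inl_v_mappingConeDesc_f (n : ℤ) :
    (mappingCone.inl (complexMap A f hf hc)).v (n + 1) n (by lia) ≫ (mappingConeDesc hf hc).f n =
      componentHom A (coneInr hf hc) (n + 1) n :=
  mappingCone.inl_v_desc_f ..

theorem inr_f_mappingConeDesc_f (n : ℤ) :
    (mappingCone.inr (complexMap A f hf hc)).f n ≫ (mappingConeDesc hf hc).f n =
      componentHom A (coneInl hf hc) n n :=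
  mappingCone.inr_f_desc_f ..

instance isIso_mappingConeDesc : IsIso (mappingConeDesc hf hc) := by
  have hInl := isHomogeneous_inl (isHomogeneous_cone hf) (cone_d_sq hc)
  have hFst := isHomogeneous_fst (isHomogeneous_cone hf) (cone_d_sq hc)
  have (n : ℤ) : IsIso ((mappingConeDesc hf hc).f n) := by
    refine ⟨componentHom A (coneSnd hf hc) n (n + 1) ≫
      (mappingCone.inl (complexMap A f hf hc)).v (n + 1) n (by lia) +
      componentHom A (coneFst hf hc) n n ≫ (mappingCone.inr (complexMap A f hf hc)).f n, ?_, ?_⟩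
    · refine mappingCone.ext_from (complexMap A f hf hc) (n + 1) n rfl ?_ ?_
      · rw [← Category.assoc, inl_v_mappingConeDesc_f, Preadditive.comp_add, ← Category.assoc,
          ← Category.assoc, componentHom_comp (isHomogeneous_coneInr hf hc) _ n _ (by lia),
          componentHom_comp (isHomogeneous_coneInr hf hc) _ n n (by lia), coneSnd_mul_coneInr,
          coneFst_mul_coneInr, componentHom_one, componentHom_zero]
        simp
      · rw [← Category.assoc, inr_f_mappingConeDesc_f, Preadditive.comp_add, ← Category.assoc,
          ← Category.assoc, componentHom_comp hInl n n _ (by lia),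
          componentHom_comp hInl n n n (by lia), coneSnd_mul_coneInl, fst_mul_inl,
          componentHom_one, componentHom_zero]
        simp
    · rw [Preadditive.add_comp, Category.assoc, Category.assoc, inl_v_mappingConeDesc_f,
        inr_f_mappingConeDesc_f, componentHom_comp (isHomogeneous_coneSnd hf hc) n _ n rfl,
        componentHom_comp hFst n n n (by lia), ← componentHom_add, add_comm,
        coneInl_mul_coneFst_add_coneInr_mul_coneSnd, componentHom_one]
  exact HomologicalComplex.Hom.isIso_of_components _

variable [HasDerivedCategory.{w} (ModuleCat.{u} A)]

theorem exists_cone_distinguished : ∃ (α : Q.obj ⟶ (cone f hf hc).obj)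
    (β : (cone f hf hc).obj ⟶ P.obj⟦(1 : ℤ)⟧),
    Triangle.mk (derivedMap f hf hc) α β ∈ distTriang (DerivedCategory (ModuleCat.{u} A)) := by
  let e := DerivedCategory.Q.mapIso (asIso (mappingConeDesc hf hc))
  let T := DerivedCategory.Q.mapTriangle.obj (mappingCone.triangle (complexMap A f hf hc))
  refine ⟨T.mor₂ ≫ e.hom, e.inv ≫ T.mor₃, isomorphic_distinguished _
    (DerivedCategory.mappingCone_triangle_distinguished (complexMap A f hf hc)) _ (Iso.symm
      (Triangle.isoMk T (Triangle.mk (derivedMap f hf hc) (T.mor₂ ≫ e.hom) (e.inv ≫ T.mor₃))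
        (Iso.refl _) (Iso.refl _) e ?_ ?_ ?_))⟩
  · exact (Category.comp_id _).trans (Category.id_comp _).symm
  · exact (Category.id_comp _).symm
  · have h : T.mor₃ ≫ (CategoryTheory.shiftFunctor _ (1 : ℤ)).map (𝟙 T.obj₁) = T.mor₃ := by
      rw [CategoryTheory.Functor.map_id, Category.comp_id]
    exact h.trans (e.hom_inv_id_assoc T.mor₃).symm

end Cone

section Based

variable [HasDerivedCategory.{w} (ModuleCat.{u} A)]

/-- The objects of the derived category which are isomorphic to a based complex. -/
def isBased : ObjectProperty (DerivedCategory (ModuleCat.{u} A)) := fun X ↦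
  ∃ P : BasedComplex A, Nonempty (P.obj ≅ X)

theorem isBased_shift (X : DerivedCategory (ModuleCat.{u} A)) (k : ℤ) (h : isBased X) :
    isBased (X⟦k⟧) := by
  obtain ⟨P, ⟨i⟩⟩ := h
  obtain ⟨e⟩ := nonempty_obj_iso_shift (B := P.shift k) (P := P) (Equiv.refl _) k
    (fun i ↦ sub_add_cancel (P.deg i) k) k.negOnePow (fun i j ↦ rfl)
  exact ⟨P.shift k, ⟨e ≪≫ (shiftFunctor _ k).mapIso i⟩⟩

theorem isBased_obj₃ (T : Triangle (DerivedCategory (ModuleCat.{u} A))) (hT : T ∈ distTriang _)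
    (h1 : isBased T.obj₁) (h2 : isBased T.obj₂) : isBased T.obj₃ := by
  obtain ⟨P, ⟨i⟩⟩ := h1
  obtain ⟨Q, ⟨j⟩⟩ := h2
  obtain ⟨f, hf, hc, h⟩ := exists_derivedMap_eq (i.hom ≫ T.mor₁ ≫ j.inv)
  obtain ⟨α, β, hab⟩ := exists_cone_distinguished hf hc
  obtain ⟨e, -, -⟩ := exists_iso_of_arrow_iso _ T hab hT (Arrow.isoMk i j (by
    change i.hom ≫ T.mor₁ = derivedMap f hf hc ≫ j.hom
    rw [h]; simp))
  exact ⟨cone f hf hc, ⟨Triangle.π₃.mapIso e⟩⟩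

theorem isBased_obj₂ (T : Triangle (DerivedCategory (ModuleCat.{u} A))) (hT : T ∈ distTriang _)
    (h1 : isBased T.obj₁) (h3 : isBased T.obj₃) : isBased T.obj₂ :=
  isBased_obj₃ _ (inv_rot_of_distTriang _ hT) (isBased_shift _ _ h3) h1

variable (A) in
/-- The module `A`, concentrated in degree `0`. -/
abbrev unit : BasedComplex A where
  ι := Unit
  fin := inferInstance
  dec := inferInstance
  deg _ := 0
  d := 0
  d_sq := by simp
  d_deg _ _ _ := rfl

variable (A) in
theorem nonempty_unit_obj_iso : Nonempty ((unit A).obj ≅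
    (DerivedCategory.singleFunctor (ModuleCat.{u} A) 0).obj (ModuleCat.of A A)) := by
  refine ⟨DerivedCategory.Q.mapIso ?_ ≪≫ ((DerivedCategory.singleFunctorIsoCompQ _ 0).app _).symm⟩
  have hz : ∀ n : ℤ, n ≠ 0 → IsZero (((unit A).complex A).X n) := fun n hn ↦
    isZero_complex_X _ _ _ (fun i h ↦ hn h.symm)
  let e0 : ((unit A).complex A).X 0 ≅ ModuleCat.of A A :=
    ({ toFun := fun v ↦ v ⟨(), rfl⟩
       invFun := fun a _ ↦ a
       map_add' := fun _ _ ↦ rfl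
       map_smul' := fun _ _ ↦ rfl
       left_inv := fun v ↦ by funext ⟨⟨⟩, _⟩; rfl
       right_inv := fun a ↦ rfl } : ({i // (unit A).deg i = 0} → A) ≃ₗ[A] A).toModuleIso
  refine HomologicalComplex.Hom.isoOfComponents (fun n ↦ if h : n = 0 then ?_ else ?_) ?_
  · subst h
    exact e0 ≪≫ (HomologicalComplex.singleObjXSelf (ComplexShape.up ℤ) 0 (ModuleCat.of A A)).symm
  · exact (hz n h).iso (HomologicalComplex.isZero_single_obj_X _ _ _ _ h)
  · intro i j hij
    by_cases hi : i = 0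
    · refine (HomologicalComplex.isZero_single_obj_X _ _ _ j ?_).eq_of_tgt _ _
      rintro rfl
      simp at hij; omega
    · exact (hz i hi).eq_of_src _ _

theorem isBased_zero : isBased (0 : DerivedCategory (ModuleCat.{u} A)) := by
  let Z : BasedComplex A :=
    { ι := Empty
      fin := inferInstance
      dec := inferInstance
      deg := Empty.elim
      d := 0
      d_sq := by simp
      d_deg := fun _ _ _ ↦ rfl }
  have : IsZero (Z.complex A) := by
    rw [IsZero.iff_id_eq_zero]
    ext1 n
    exact (Z.isZero_complex_X A n (fun i ↦ i.elim)).eq_of_src _ _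
  exact ⟨Z, ⟨(DerivedCategory.Q.map_isZero this).iso (isZero_zero _)⟩⟩

theorem isThick_retractClosure_isBased : IsThickSubcategory
    {X : DerivedCategory (ModuleCat.{u} A) | isBased.retractClosure X} where
  mem_of_iso e hX := ObjectProperty.prop_of_iso (isBased (A := A)).retractClosure e hX
  zero_mem := ObjectProperty.le_retractClosure _ _ isBased_zero
  shift_mem X n hX := by
    obtain ⟨Y, hY, ⟨r⟩⟩ := hX
    exact ⟨_, isBased_shift Y n hY, ⟨r.map (shiftFunctor _ n)⟩⟩
  ext₂ T hT h1 h3 := by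
    obtain ⟨Y, ⟨X₁, X₃, f, g, h, hT', h1', h3'⟩, r⟩ :=
      ObjectProperty.extensionProduct_retractClosure_retractClosure_le (isBased (A := A)) isBased
        T.obj₂ ⟨_, _, _, _, _, hT, h1, h3⟩
    exact ⟨Y, isBased_obj₂ _ hT' h1' h3', r⟩
  retract_mem X Y i r h hY := by
    obtain ⟨Z, hZ, ⟨r'⟩⟩ := hY
    exact ⟨Z, hZ, ⟨(Retract.mk i r h).trans r'⟩⟩

theorem exists_retract_of_retract {X : DerivedCategory (ModuleCat.{u} A)} (i : X ⟶ P.obj)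
    (r : P.obj ⟶ X) (hir : i ≫ r = 𝟙 X) : ∃ (Z : BasedComplex A) (i' : X ⟶ Z.obj) (r' : Z.obj ⟶ X),
      i' ≫ r' = 𝟙 X ∧ ∀ D : Set (DerivedCategory (ModuleCat.{u} A)), IsThickSubcategory D →
        X ∈ D → Z.obj ∈ D := by
  -- `Z` is the cone of the idempotent complementary to `r ≫ i`.
  obtain ⟨f, hf, hc, h⟩ := exists_derivedMap_eq (𝟙 P.obj - r ≫ i)
  obtain ⟨α, β, hT⟩ := exists_cone_distinguished hf hc
  obtain ⟨r', hr'⟩ : ∃ r', r = α ≫ r' := Triangle.yoneda_exact₂ _ hT r (by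
    change derivedMap f hf hc ≫ r = 0
    simp [h, hir])
  refine ⟨cone f hf hc, i ≫ α, r', by rw [Category.assoc, ← hr', hir], fun D hD hX ↦ ?_⟩
  have : ObjectProperty.IsClosedUnderIsomorphisms (· ∈ D) := ⟨fun e h ↦ hD.mem_of_iso e h⟩
  have := hD.isTriangulated
  exact (ObjectProperty.trW_iff_of_distinguished (· ∈ D) _ hT).1
    (h ▸ hD.trW_id_sub_of_retract i r hir hX)

theorem exists_retract_of_isSmallObject {X : DerivedCategory (ModuleCat.{u} A)}
    (hX : IsSmallObject X) : ∃ (Z : BasedComplex A) (i : X ⟶ Z.obj) (r : Z.obj ⟶ X),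
      i ≫ r = 𝟙 X ∧ ∀ D : Set (DerivedCategory (ModuleCat.{u} A)), IsThickSubcategory D →
        X ∈ D → Z.obj ∈ D := by
  obtain ⟨Y, ⟨P, ⟨e⟩⟩, ⟨r⟩⟩ := hX _ isThick_retractClosure_isBased
    (ObjectProperty.le_retractClosure _ _ ⟨unit A, nonempty_unit_obj_iso A⟩)
  exact exists_retract_of_retract (r.i ≫ e.inv) (e.hom ≫ r.r) (by simp)

end Based

end BasedComplex

namespace BasedComplex

section Filtration

variable {A : Type u} [CommRing A]

/-- The complex spanned by the basis elements satisfying `p`, for `p` cutting out a subquotient. -/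
abbrev restrict (B : BasedComplex A) (p : B.ι → Prop) [DecidablePred p]
    (hp : ∀ i j k, p i → p j → ¬ p k → B.d i k * B.d k j = 0) : BasedComplex A where
  ι := {i // p i}
  fin := inferInstance
  dec := inferInstance
  deg i := B.deg i.1
  d := B.d.submatrix Subtype.val Subtype.val
  d_sq := by
    ext i j
    have h := congrFun (congrFun B.d_sq i.1) j.1
    rw [Matrix.mul_apply, ← Finset.sum_subset (Finset.subset_univ {i | p i})
      fun k _ hk ↦ hp _ _ _ i.2 j.2 (by simpa using hk),
      Finset.sum_subtype (p := p) _ (by simp)] at h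
    exact h
  d_deg i j h := B.d_deg _ _ h

variable [HasDerivedCategory.{w} (ModuleCat.{u} A)] {D : Set (DerivedCategory (ModuleCat.{u} A))}
  (hD : IsThickSubcategory D) {B : BasedComplex A}
include hD

theorem obj_mem_of_isEmpty [IsEmpty B.ι] : B.obj ∈ D := by
  have : IsZero (B.complex A) := by
    rw [IsZero.iff_id_eq_zero]
    ext1 n
    exact (B.isZero_complex_X A n isEmptyElim).eq_of_src _ _
  exact hD.isZero_mem (DerivedCategory.Q.map_isZero this)

theorem obj_mem_of_restrict (p : B.ι → Prop) [DecidablePred p]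
    (hp : ∀ i j, p j → ¬ p i → B.d i j = 0)
    (hsub : (B.restrict p fun i j k _ hj hk ↦ by rw [hp k j hj hk, mul_zero]).obj ∈ D)
    (hquot : (B.restrict (¬ p ·) fun i j k hi _ hk ↦ by
      rw [hp i k (not_not.1 hk) hi, zero_mul]).obj ∈ D) : B.obj ∈ D := by
  let P := B.restrict p fun i j k _ hj hk ↦ by rw [hp k j hj hk, mul_zero]
  let Q := B.restrict (¬ p ·) fun i j k hi _ hk ↦ by rw [hp i k (not_not.1 hk) hi, zero_mul]
  let e : P.ι ⊕ Q.ι ≃ B.ι := Equiv.sumCompl p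
  let g : Matrix P.ι Q.ι A := fun i j ↦ B.d i.1 j.1
  have hg : IsHomogeneous Q P 1 g := fun i j h ↦ B.d_deg _ _ h
  have hc : P.d * g + g * Q.d = 0 := by
    ext i j
    have h := congrFun (congrFun B.d_sq i.1) j.1
    rw [Matrix.mul_apply, ← Equiv.sum_comp e, Fintype.sum_sum_type] at h
    rw [Matrix.add_apply, Matrix.mul_apply, Matrix.mul_apply]
    exact h
  refine mem_of_equiv hD (extension_mem hg hc hD hsub hquot) e.symm 0 (fun i ↦ ?_) 1 fun i j ↦ ?_
  · obtain ⟨i | i, rfl⟩ := e.surjective i <;> rw [e.symm_apply_apply, add_zero] <;> rfl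
  · obtain ⟨i | i, rfl⟩ := e.surjective i <;> obtain ⟨j | j, rfl⟩ := e.surjective j <;>
      rw [e.symm_apply_apply, e.symm_apply_apply, Units.val_one, one_smul]
    · rfl
    · rfl
    · exact hp i.1 j.1 j.2 i.2
    · rfl

/-- If the differential is block triangular with respect to a partition `π` of the basis whose
blocks are ordered by `v`, then `B` is built from its diagonal blocks. -/
theorem obj_mem_of_filtration {κ : Type} [DecidableEq κ] (v : κ → ℤ) (π : B.ι → κ)
    (hd : ∀ i j, B.d i j ≠ 0 → π i = π j ∨ v (π j) < v (π i))
    (hπ : ∀ t hp, (B.restrict (π · = t) hp).obj ∈ D) : B.obj ∈ D := by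
  obtain ⟨s, hs⟩ : ∃ s : Finset κ, ∀ i, π i ∈ s :=
    ⟨Finset.univ.image π, fun i ↦ Finset.mem_image_of_mem π (Finset.mem_univ i)⟩
  induction s using Finset.strongInduction generalizing B with
  | H s ih =>
    rcases s.eq_empty_or_nonempty with rfl | hne
    · have : IsEmpty B.ι := ⟨fun i ↦ Finset.notMem_empty _ (hs i)⟩
      exact obj_mem_of_isEmpty hD
    obtain ⟨t, hts, ht⟩ := s.exists_max_image v hne
    have hsub i j (hj : π j = t) (hi : π i ≠ t) : B.d i j = 0 := by
      by_contra h
      rcases hd i j h with h | h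
      · exact hi (h.trans hj)
      · exact (ht _ (hs i)).not_gt (hj ▸ h)
    refine obj_mem_of_restrict hD (π · = t) hsub (hπ t _) (ih _ (Finset.erase_ssubset hts)
      (fun i ↦ π i.1) (fun i j ↦ hd _ _) (fun t' hp ↦ ?_) fun i ↦ Finset.mem_erase.2 ⟨i.2, hs _⟩)
    by_cases htt : t' = t
    · have : IsEmpty {i : {i // π i ≠ t} // π i.1 = t'} := ⟨fun i ↦ i.1.2 (i.2.trans htt)⟩
      exact obj_mem_of_isEmpty hD
    · let e : {i : {i // π i ≠ t} // π i.1 = t'} ≃ {i // π i = t'} :=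
        Equiv.subtypeSubtypeEquivSubtype (p := (π · ≠ t)) (q := (π · = t')) fun h ↦ h.trans_ne htt
      refine mem_of_equiv hD (hπ t' fun i j k hi hj hk ↦ ?_) e 0 (fun i ↦ add_zero _) 1 fun i j ↦ ?_
      · by_cases hkt : π k = t
        · rw [hsub i k hkt (hi.trans_ne htt), zero_mul]
        · exact hp ⟨i, hi.trans_ne htt⟩ ⟨j, hj.trans_ne htt⟩ ⟨k, hkt⟩ hi hj hk
      · rw [Units.val_one, one_smul]
        rfl

end Filtration

end BasedComplex

section MatrixContraction

open Matrix

section Field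

variable {K ι : Type*} [Field K] [Fintype ι] (d : Matrix ι ι K)

theorem exists_matrix_mul_mul_eq_self : ∃ h : Matrix ι ι K, d * h * d = d := by
  classical
  let f := Matrix.toLin' d
  obtain ⟨σ, hσ⟩ := f.rangeRestrict.exists_rightInverse_of_surjective f.range_rangeRestrict
  obtain ⟨τ, hτ⟩ := LinearMap.exists_extend σ
  refine ⟨LinearMap.toMatrix' τ, Matrix.toLin'.injective ?_⟩
  rw [Matrix.toLin'_mul, Matrix.toLin'_mul, Matrix.toLin'_toMatrix']
  refine LinearMap.ext fun y ↦ ?_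
  have h : τ (f y) = σ (f.rangeRestrict y) := by rw [← hτ]; rfl
  change f (τ (f y)) = f y
  rw [h]
  exact congrArg Subtype.val (LinearMap.congr_fun hσ (f.rangeRestrict y))

theorem exists_matrix_contraction [DecidableEq ι] (hdd : d * d = 0)
    (hd : ∀ v, d *ᵥ v = 0 → ∃ w, d *ᵥ w = v) :
    ∃ h : Matrix ι ι K, d * h + h * d = 1 := by
  obtain ⟨h, hh⟩ := exists_matrix_mul_mul_eq_self d
  have hker : d * (1 - h * d) = 0 := by rw [mul_sub, mul_one, ← mul_assoc, hh, sub_self]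
  obtain ⟨k, hk⟩ : ∃ k : Matrix ι ι K, d * k = 1 - h * d := by
    choose w hw using fun j ↦ hd ((1 - h * d).col j) (funext fun i ↦ congrFun (congrFun hker i) j)
    exact ⟨.of fun i j ↦ w j i, Matrix.ext fun i j ↦ congrFun (hw j) i⟩
  refine ⟨h * (d * k), ?_⟩
  calc d * (h * (d * k)) + h * (d * k) * d = d * h * d * k + h * (d * k) * d := by
        rw [← mul_assoc, ← mul_assoc]
    _ = 1 - h * d + h * (1 - h * d) * d := by rw [hh, hk]
    _ = 1 - h * (h * (d * d)) := by noncomm_ring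
    _ = 1 := by rw [hdd, mul_zero, mul_zero, sub_zero]

theorem exists_vecMul_eq_zero_of_forall_mulVec_ne {v : ι → K} (hv : ∀ w, d *ᵥ w ≠ v) :
    ∃ l : ι → K, l ᵥ* d = 0 ∧ l ⬝ᵥ v ≠ 0 := by
  classical
  obtain ⟨g, hgv, hgd⟩ := Submodule.exists_le_ker_of_notMem
    (show v ∉ LinearMap.range (Matrix.toLin' d) by rintro ⟨w, hw⟩; exact hv w hw)
  have hg w : g w = (fun i ↦ g (Pi.single i 1)) ⬝ᵥ w := by
    conv_lhs => rw [pi_eq_sum_univ' w, map_sum]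
    exact Finset.sum_congr rfl fun i _ ↦ by rw [map_smul, smul_eq_mul, mul_comm]
  refine ⟨fun i ↦ g (Pi.single i 1), funext fun i ↦ ?_, hg v ▸ hgv⟩
  have h := hgd (LinearMap.mem_range_self (Matrix.toLin' d) (Pi.single i 1))
  rwa [LinearMap.mem_ker, hg, Matrix.toLin'_apply, Matrix.mulVec_single_one] at h

end Field

theorem exists_mul_eq_det_smul_one {A ι : Type*} [CommRing A] [Fintype ι] [DecidableEq ι]
    (M : Matrix ι ι A) :
    ∃ N : Matrix ι ι A, M * N = M.det • 1 ∧ ∀ L, Commute L M → Commute L N := by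
  let q := Polynomial.aeval M M.charpoly.divX
  have hq : q * M + algebraMap A _ (M.charpoly.coeff 0) = 0 := by
    have h := M.aeval_self_charpoly
    rw [← Polynomial.divX_mul_X_add M.charpoly] at h
    simpa using h
  have hcomm L (hL : Commute L M) : Commute L q :=
    Algebra.commute_of_mem_adjoin_singleton_of_commute
      (Polynomial.aeval_mem_adjoin_singleton A M) hL
  refine ⟨(-1 : A) ^ Fintype.card ι • -q, ?_, fun L hL ↦ (hcomm L hL).neg_right.smul_right _⟩
  rw [Matrix.det_eq_sign_charpoly_coeff, mul_smul_comm, mul_neg, (hcomm M rfl).eq, mul_smul,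
    eq_neg_of_add_eq_zero_left hq, neg_neg, Algebra.algebraMap_eq_smul_one]

section ResidueField

variable {A : Type*} [CommRing A] (p : Ideal A) [p.IsPrime]

theorem exists_notMem_algebraMap_residueField_eq_mul {ι : Type*} [Finite ι]
    (x : ι → p.ResidueField) :
    ∃ s ∉ p, ∃ a : ι → A, ∀ i, algebraMap A p.ResidueField (a i) = algebraMap A _ s * x i := by
  obtain ⟨b, hb⟩ := IsLocalization.exist_integer_multiples_of_finite (nonZeroDivisors (A ⧸ p)) x
  choose c hc using hb
  choose a ha using fun i ↦ Ideal.Quotient.mk_surjective (c i)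
  obtain ⟨s, hs⟩ := Ideal.Quotient.mk_surjective (b : A ⧸ p)
  refine ⟨s, fun h ↦ nonZeroDivisors.ne_zero b.2 ?_, a, fun i ↦ ?_⟩
  · rw [← hs, Ideal.Quotient.eq_zero_iff_mem.2 h]
  · rw [IsScalarTower.algebraMap_apply A (A ⧸ p), IsScalarTower.algebraMap_apply A (A ⧸ p) _ s,
      Ideal.Quotient.algebraMap_eq, ha, hs]
    exact (hc i).trans (Algebra.smul_def _ _)

variable {p} {ι : Type*} [Fintype ι] {d : Matrix ι ι A}

theorem exists_mulVec_eq_of_forall_dotProduct_mem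
    (hd : ∀ v l : ι → A, (∀ i, (d *ᵥ v) i ∈ p) → (∀ i, (l ᵥ* d) i ∈ p) → l ⬝ᵥ v ∈ p)
    {v : ι → p.ResidueField} (hv : d.map (algebraMap A _) *ᵥ v = 0) :
    ∃ w, d.map (algebraMap A _) *ᵥ w = v := by
  by_contra! hw
  obtain ⟨l, hl, hlv⟩ := exists_vecMul_eq_zero_of_forall_mulVec_ne _ hw
  obtain ⟨s, hs, a, ha⟩ := exists_notMem_algebraMap_residueField_eq_mul p v
  obtain ⟨t, ht, b, hb⟩ := exists_notMem_algebraMap_residueField_eq_mul p l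
  replace ha : algebraMap A p.ResidueField ∘ a = algebraMap A p.ResidueField s • v := funext ha
  replace hb : algebraMap A p.ResidueField ∘ b = algebraMap A p.ResidueField t • l := funext hb
  have hba := hd a b
    (fun i ↦ by
      rw [← Ideal.algebraMap_residueField_eq_zero, RingHom.map_mulVec, ha, Matrix.mulVec_smul, hv,
        smul_zero, Pi.zero_apply])
    fun i ↦ by
      rw [← Ideal.algebraMap_residueField_eq_zero, RingHom.map_vecMul, hb, Matrix.smul_vecMul, hl,
        smul_zero, Pi.zero_apply]
  rw [← Ideal.algebraMap_residueField_eq_zero, RingHom.map_dotProduct, ha, hb, smul_dotProduct,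
    dotProduct_smul, smul_eq_mul, smul_eq_mul] at hba
  rw [← Ideal.algebraMap_residueField_eq_zero] at hs ht
  exact mul_ne_zero ht (mul_ne_zero hs hlv) hba

theorem exists_det_notMem_of_contraction [DecidableEq ι] {h : Matrix ι ι p.ResidueField}
    (hh : d.map (algebraMap A _) * h + h * d.map (algebraMap A _) = 1) :
    ∃ H : Matrix ι ι A, (d * H + H * d).det ∉ p := by
  obtain ⟨s, hs, H, hH⟩ :=
    exists_notMem_algebraMap_residueField_eq_mul p fun x : ι × ι ↦ h x.1 x.2
  let H' : Matrix ι ι A := .of fun i j ↦ H (i, j)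
  have hH' : H'.map (algebraMap A _) = algebraMap A p.ResidueField s • h := by
    ext i j
    exact hH (i, j)
  have hM : (d * H' + H' * d).map (algebraMap A p.ResidueField) =
      algebraMap A p.ResidueField s • (1 : Matrix ι ι p.ResidueField) := by
    rw [Matrix.map_add _ (map_add _), Matrix.map_mul, Matrix.map_mul, hH', ← hh, Matrix.mul_smul,
      Matrix.smul_mul, smul_add]
  refine ⟨H', fun hdet ↦ hs ?_⟩
  rw [← Ideal.algebraMap_residueField_eq_zero, RingHom.map_det, RingHom.mapMatrix_apply, hM,
    Matrix.det_smul, Matrix.det_one, mul_one] at hdet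
  exact Ideal.algebraMap_residueField_eq_zero.1 (eq_zero_of_pow_eq_zero hdet)

end ResidueField

end MatrixContraction

namespace BasedComplex

variable {A : Type u} [CommRing A] (Y : BasedComplex A)

theorem isNullHomotopic_det_smul_one (H : Matrix Y.ι Y.ι A) :
    IsNullHomotopic Y Y ((Y.d * H + H * Y.d).det • 1) := by
  obtain ⟨N, hN, hcomm⟩ := exists_mul_eq_det_smul_one (Y.d * H + H * Y.d)
  have hd : Commute Y.d N := hcomm _ <| by
    rw [commute_iff_eq, mul_add, add_mul, ← mul_assoc, Y.d_sq, zero_mul, mul_assoc H, Y.d_sq,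
      mul_zero, mul_assoc, zero_add, add_zero]
  exact ⟨H * N, by rw [← hN, add_mul, mul_assoc, mul_assoc, hd.eq, mul_assoc]⟩

theorem exists_dotProduct_notMem (p : Ideal A) [p.IsPrime]
    (hY : ∀ s ∉ p, ¬ IsNullHomotopic Y Y (s • 1)) :
    ∃ v l : Y.ι → A, (∀ i, (Y.d.mulVec v) i ∈ p) ∧ (∀ i, (Matrix.vecMul l Y.d) i ∈ p) ∧
      l ⬝ᵥ v ∉ p := by
  by_contra! hd
  obtain ⟨h, hh⟩ := exists_matrix_contraction
    (Y.d.map (algebraMap A p.ResidueField))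
    (by rw [← Matrix.map_mul, Y.d_sq, Matrix.map_zero _ (map_zero _)]) fun _ ↦
      exists_mulVec_eq_of_forall_dotProduct_mem hd
  obtain ⟨H, hH⟩ := exists_det_notMem_of_contraction (p := p) hh
  exact hY _ hH (Y.isNullHomotopic_det_smul_one H)

end BasedComplex

/-! ### Null homotopies modulo an ideal -/

section MatrixIdeal

variable {A X W Z : Type*} [CommRing A] [Fintype W] (f : Matrix Z W A) (g : Matrix W X A)
  {I J : Ideal A}

theorem matrix_mul_apply_mem_mul (hf : ∀ i j, f i j ∈ I) (hg : ∀ i j, g i j ∈ J) (i : Z) (j : X) :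
    (f * g) i j ∈ I * J := by
  rw [Matrix.mul_apply]
  exact Ideal.sum_mem _ fun x _ ↦ Ideal.mul_mem_mul (hf _ _) (hg _ _)

theorem matrix_mul_apply_mem_of_left (hf : ∀ i j, f i j ∈ I) (i : Z) (j : X) :
    (f * g) i j ∈ I := by
  rw [Matrix.mul_apply]
  exact Ideal.sum_mem _ fun x _ ↦ I.mul_mem_right _ (hf _ _)

theorem matrix_mul_apply_mem_of_right (hg : ∀ i j, g i j ∈ J) (i : Z) (j : X) :
    (f * g) i j ∈ J := by
  rw [Matrix.mul_apply]
  exact Ideal.sum_mem _ fun x _ ↦ J.mul_mem_left _ (hg _ _)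

end MatrixIdeal

namespace BasedComplex

variable {A : Type u} [CommRing A]

section SubBoundary

variable {P Q S : BasedComplex A}

/-- The chain map `f` minus the boundary of `h` in the Hom complex; it vanishes when `h` is a null
homotopy of `f`. -/
def subBoundary (f h : Matrix Q.ι P.ι A) : Matrix Q.ι P.ι A := f - (Q.d * h + h * P.d)

theorem d_mul_subBoundary {f : Matrix Q.ι P.ι A} (hf : Q.d * f = f * P.d) (h : Matrix Q.ι P.ι A) :
    Q.d * subBoundary f h = subBoundary f h * P.d := by
  simp only [subBoundary, Matrix.mul_sub, Matrix.sub_mul, Matrix.mul_add, Matrix.add_mul,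
    Matrix.mul_assoc, hf, P.d_sq]
  simp only [← Matrix.mul_assoc, Q.d_sq, Matrix.zero_mul, Matrix.mul_zero, zero_add, add_zero]

theorem subBoundary_mul {f h : Matrix Q.ι P.ι A} {g k : Matrix S.ι Q.ι A} (hf : Q.d * f = f * P.d)
    (hg : S.d * g = g * Q.d) :
    subBoundary (g * f) (k * f + subBoundary g k * h) = subBoundary g k * subBoundary f h := by
  have hgk := d_mul_subBoundary hg k
  have hg' : g = subBoundary g k + (S.d * k + k * Q.d) := (sub_add_cancel _ _).symm
  generalize subBoundary g k = g' at *
  subst hg'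
  simp only [subBoundary, Matrix.mul_add, Matrix.add_mul, Matrix.mul_sub, Matrix.mul_assoc, hf]
  rw [← Matrix.mul_assoc S.d g' h, hgk, Matrix.mul_assoc]
  abel

theorem subBoundary_mul_eq {f h f₁ f₂ : Matrix Q.ι P.ι A} {g k : Matrix S.ι Q.ι A} {s : A}
    (hg : S.d * g = g * Q.d) (hf : subBoundary f h = s • f₁ + f₂) :
    subBoundary (g * f) (g * h + k * f₁) =
      subBoundary (s • g) k * f₁ + g * f₂ + k * (Q.d * f₁ - f₁ * P.d) := by
  rw [subBoundary, sub_eq_iff_eq_add] at hf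
  subst hf
  simp only [subBoundary, Matrix.mul_add, Matrix.add_mul, Matrix.mul_sub, Matrix.sub_mul,
    Matrix.mul_assoc, Matrix.smul_mul, Matrix.mul_smul]
  rw [← Matrix.mul_assoc S.d g h, hg, Matrix.mul_assoc]
  abel

/-- If a null homotopy of `f` modulo `p` leaves an error `s • f₁ + f₂` with `f₂` in `p` and `s ∉ p`,
then `f₁` is a chain map modulo `p`. -/
theorem d_mul_sub_mul_d_apply_mem {f h f₁ f₂ : Matrix Q.ι P.ι A} {s : A} {p : Ideal A}
    [hp : p.IsPrime] (hs : s ∉ p) (hf : Q.d * f = f * P.d) (hfh : subBoundary f h = s • f₁ + f₂)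
    (hf₂ : ∀ i j, f₂ i j ∈ p) (i : Q.ι) (j : P.ι) : (Q.d * f₁ - f₁ * P.d) i j ∈ p := by
  have h₁ : s • (Q.d * f₁ - f₁ * P.d) = f₂ * P.d - Q.d * f₂ := by
    have hch := d_mul_subBoundary hf h
    rw [hfh, Matrix.mul_add, Matrix.add_mul, Matrix.mul_smul, Matrix.smul_mul] at hch
    rw [smul_sub, sub_eq_sub_iff_add_eq_add, hch, add_comm]
  refine (hp.mem_or_mem (x := s) ?_).resolve_left hs
  rw [← smul_eq_mul, ← Matrix.smul_apply, h₁, Matrix.sub_apply]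
  exact p.sub_mem (matrix_mul_apply_mem_of_left _ _ hf₂ i j)
    (matrix_mul_apply_mem_of_right _ _ hf₂ i j)

end SubBoundary

variable [HasDerivedCategory.{w} (ModuleCat.{u} A)] {D : Set (DerivedCategory (ModuleCat.{u} A))}

theorem derivedMap_comp {P Q S : BasedComplex A} {f : Matrix Q.ι P.ι A} {g : Matrix S.ι Q.ι A}
    (hf : IsHomogeneous P Q 0 f) (hcf : Q.d * f = f * P.d) (hg : IsHomogeneous Q S 0 g)
    (hcg : S.d * g = g * Q.d) :
    derivedMap f hf hcf ≫ derivedMap g hg hcg = derivedMap (g * f) (hf.mul hg (add_zero 0))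
      (by rw [← Matrix.mul_assoc, hcg, Matrix.mul_assoc, hcf, Matrix.mul_assoc]) := by
  rw [derivedMap, derivedMap, derivedMap, ← Functor.map_comp, complexMap_comp]

theorem derivedMap_one (P : BasedComplex A) :
    derivedMap (1 : Matrix P.ι P.ι A) P.isHomogeneous_one (by simp) = 𝟙 P.obj := by
  rw [derivedMap, complexMap_one]
  exact CategoryTheory.Functor.map_id _ _

/-- A differential graded endofunctor of based complexes, with a natural transformation `η` from the
identity functor whose components become invertible modulo `D`. On maps of odd degree the functor
acts by `twist` instead of `map`, to account for signs. Only the identities needed to transport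
null homotopies modulo an ideal are imposed. -/
structure CoaugmentedFunctor (D : Set (DerivedCategory (ModuleCat.{u} A))) where
  obj : BasedComplex A → BasedComplex A
  map : ∀ {P Q : BasedComplex A}, Matrix Q.ι P.ι A → Matrix (obj Q).ι (obj P).ι A
  twist : ∀ {P Q : BasedComplex A}, Matrix Q.ι P.ι A → Matrix (obj Q).ι (obj P).ι A
  map_sub : ∀ {P Q : BasedComplex A} (f g : Matrix Q.ι P.ι A), map (f - g) = map f - map g
  map_smul_one : ∀ (P : BasedComplex A) (s : A), map (s • (1 : Matrix P.ι P.ι A)) = s • 1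
  map_comm : ∀ {P Q : BasedComplex A} (f : Matrix Q.ι P.ι A), Q.d * f = f * P.d →
    (obj Q).d * map f = map f * (obj P).d
  map_mem : ∀ {P Q : BasedComplex A} (f : Matrix Q.ι P.ι A) (I : Ideal A), (∀ i j, f i j ∈ I) →
    ∀ i j, map f i j ∈ I
  boundary_twist : ∀ {P Q : BasedComplex A} (h : Matrix Q.ι P.ι A),
    (obj Q).d * twist h + twist h * (obj P).d = map (Q.d * h + h * P.d)
  η : ∀ P : BasedComplex A, Matrix (obj P).ι P.ι A
  isHomogeneous_η : ∀ P, IsHomogeneous P (obj P) 0 (η P)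
  η_comm : ∀ P, (obj P).d * η P = η P * P.d
  η_naturality : ∀ {P Q : BasedComplex A} (f : Matrix Q.ι P.ι A), map f * η P = η Q * f
  trW_η : ∀ P, ObjectProperty.trW (· ∈ D) (derivedMap (η P) (isHomogeneous_η P) (η_comm P))

namespace CoaugmentedFunctor

/-- The identity functor with the identity coaugmentation. -/
def id (hD : IsThickSubcategory D) : CoaugmentedFunctor D where
  obj P := P
  map f := f
  twist f := f
  map_sub _ _ := rfl
  map_smul_one _ _ := rfl
  map_comm _ h := h
  map_mem _ _ h := h
  boundary_twist _ := rfl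
  η P := 1
  isHomogeneous_η P := isHomogeneous_one P
  η_comm P := by rw [mul_one, one_mul]
  η_naturality f := by rw [Matrix.mul_one, Matrix.one_mul]
  trW_η P := by
    have := hD.isTriangulated
    have : ObjectProperty.IsClosedUnderIsomorphisms (· ∈ D) := ⟨fun e h ↦ hD.mem_of_iso e h⟩
    rw [derivedMap_one]
    exact ObjectProperty.trW_of_isIso _ _

/-- The composition of two functors with the composed coaugmentation. -/
def comp (hD : IsThickSubcategory D) (F G : CoaugmentedFunctor D) : CoaugmentedFunctor D where
  obj P := F.obj (G.obj P)
  map f := F.map (G.map f)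
  twist f := F.twist (G.twist f)
  map_sub _ _ := by rw [G.map_sub, F.map_sub]
  map_smul_one _ _ := by rw [G.map_smul_one, F.map_smul_one]
  map_comm _ h := F.map_comm _ (G.map_comm _ h)
  map_mem _ _ h := F.map_mem _ _ (G.map_mem _ _ h)
  boundary_twist _ := by rw [F.boundary_twist, G.boundary_twist]
  η P := F.η (G.obj P) * G.η P
  isHomogeneous_η P := (G.isHomogeneous_η P).mul (F.isHomogeneous_η _) rfl
  η_comm P := by
    rw [← Matrix.mul_assoc, F.η_comm, Matrix.mul_assoc, G.η_comm, Matrix.mul_assoc]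
  η_naturality f := by
    rw [← Matrix.mul_assoc, F.η_naturality, Matrix.mul_assoc, G.η_naturality, Matrix.mul_assoc]
  trW_η P := by
    have := hD.isTriangulated
    have : ObjectProperty.IsClosedUnderIsomorphisms (· ∈ D) := ⟨fun e h ↦ hD.mem_of_iso e h⟩
    rw [← derivedMap_comp (G.isHomogeneous_η P) (G.η_comm P) (F.isHomogeneous_η _) (F.η_comm _)]
    exact MorphismProperty.comp_mem _ _ _ (G.trW_η P) (F.trW_η _)

theorem map_subBoundary (F : CoaugmentedFunctor D) {P Q : BasedComplex A}
    (f h : Matrix Q.ι P.ι A) : F.map (subBoundary f h) = subBoundary (F.map f) (F.twist h) := by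
  rw [subBoundary, F.map_sub, subBoundary, F.boundary_twist]

end CoaugmentedFunctor

/-- Some coaugmented functor has a coaugmentation `X ⟶ F X` that is null-homotopic modulo the ideal
`I`. For `I = 0` this forces `X.obj ∈ D`. -/
def IsNullModulo (D : Set (DerivedCategory (ModuleCat.{u} A))) (X : BasedComplex A)
    (I : Ideal A) : Prop :=
  ∃ (F : CoaugmentedFunctor D) (h : Matrix (F.obj X).ι X.ι A), ∀ i j, subBoundary (F.η X) h i j ∈ I

namespace IsNullModulo

theorem mono {X : BasedComplex A} {I J : Ideal A} (h : IsNullModulo D X I) (hIJ : I ≤ J) :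
    IsNullModulo D X J := by
  obtain ⟨F, h, hh⟩ := h
  exact ⟨F, h, fun i j ↦ hIJ (hh i j)⟩

variable (hD : IsThickSubcategory D) {X : BasedComplex A}
include hD

theorem mul {I J : Ideal A} (hI : IsNullModulo D X I) (hJ : IsNullModulo D X J) :
    IsNullModulo D X (J * I) := by
  obtain ⟨F, h, hh⟩ := hI
  obtain ⟨G, k, hk⟩ := hJ
  refine ⟨F.comp hD G, F.twist k * F.η X + F.map (subBoundary (G.η X) k) * h, ?_⟩
  change ∀ i j, subBoundary (F.η (G.obj X) * G.η X) _ i j ∈ _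
  rw [← F.η_naturality, F.map_subBoundary,
    subBoundary_mul (F.η_comm X) (F.map_comm _ (G.η_comm X)), ← F.map_subBoundary]
  exact matrix_mul_apply_mem_mul _ _ (F.map_mem _ _ hk) hh

theorem top (X : BasedComplex A) : IsNullModulo D X ⊤ :=
  ⟨CoaugmentedFunctor.id hD, 0, fun _ _ ↦ trivial⟩

theorem obj_mem (h : IsNullModulo D X ⊥) : X.obj ∈ D := by
  obtain ⟨F, h, hh⟩ := h
  have hη : IsNullHomotopic X (F.obj X) (F.η X) :=
    ⟨h, sub_eq_zero.1 (Matrix.ext fun i j ↦ hh i j)⟩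
  have := F.trW_η X
  rw [(derivedMap_eq_zero_iff _ (F.isHomogeneous_η X) (F.η_comm X)).2 hη] at this
  exact hD.mem_of_trW_zero this

theorem of_span_singleton_sup {p : Ideal A} [p.IsPrime] {s : A} (hs : s ∉ p)
    (h : IsNullModulo D X (Ideal.span {s} ⊔ p))
    (hp : ∀ F : CoaugmentedFunctor D,
      ∃ (G : CoaugmentedFunctor D) (k : Matrix (G.obj (F.obj X)).ι (F.obj X).ι A),
        ∀ i j, subBoundary (s • G.η (F.obj X)) k i j ∈ p) :
    IsNullModulo D X p := by
  obtain ⟨F, h, hh⟩ := h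
  obtain ⟨G, k, hk⟩ := hp F
  simp only [Ideal.mem_span_singleton_sup] at hh
  choose f₁ f₂ hf₂ hf using hh
  have hf' : subBoundary (F.η X) h = s • Matrix.of f₁ + Matrix.of f₂ := by
    ext i j
    rw [← hf i j, Matrix.add_apply, Matrix.smul_apply, Matrix.of_apply, Matrix.of_apply,
      smul_eq_mul, mul_comm]
  have hf₁ := d_mul_sub_mul_d_apply_mem hs (F.η_comm X) hf' hf₂
  refine ⟨G.comp hD F, G.η (F.obj X) * h + k * Matrix.of f₁, ?_⟩
  change ∀ i j, subBoundary (G.η (F.obj X) * F.η X) _ i j ∈ _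
  rw [subBoundary_mul_eq (G.η_comm _) hf']
  exact fun i j ↦ p.add_mem (p.add_mem (matrix_mul_apply_mem_of_left _ _ hk i j)
    (matrix_mul_apply_mem_of_right _ _ hf₂ i j)) (matrix_mul_apply_mem_of_right _ _ hf₁ i j)

omit hD in
theorem exists_mem_of_sSup {c : Set (Ideal A)} (hc : DirectedOn (· ≤ ·) c) (hne : c.Nonempty)
    (h : IsNullModulo D X (sSup c)) : ∃ I ∈ c, IsNullModulo D X I := by
  obtain ⟨F, h, hh⟩ := h
  let J : Ideal A := Ideal.span (Set.range fun x : (F.obj X).ι × X.ι ↦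
    subBoundary (F.η X) h x.1 x.2)
  have hJ : IsCompactElement J :=
    (Submodule.fg_iff_compact J).1 (Submodule.fg_span (Set.finite_range _))
  have hJc : J ≤ sSup c := Ideal.span_le.2 (Set.range_subset_iff.2 fun x ↦ hh x.1 x.2)
  obtain ⟨I, hI, hJI⟩ :=
    (CompleteLattice.isCompactElement_iff_le_of_directed_sSup_le _ J).1 hJ c hne hc hJc
  exact ⟨I, hI, F, h, fun i j ↦ hJI (Ideal.subset_span ⟨(i, j), rfl⟩)⟩

end IsNullModulo

theorem exists_isPrime_not_isNullModulo (hD : IsThickSubcategory D) {X : BasedComplex A}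
    (h : ¬ IsNullModulo D X ⊥) : ∃ p : Ideal A, p.IsPrime ∧ ¬ IsNullModulo D X p ∧
      ∀ s ∉ p, IsNullModulo D X (Ideal.span {s} ⊔ p) := by
  obtain ⟨p, -, hp⟩ := zorn_le_nonempty₀ {I : Ideal A | ¬ IsNullModulo D X I}
    (fun c hc hch y hy ↦ ⟨sSup c, fun hsup ↦ by
      obtain ⟨I, hI, hI'⟩ := hsup.exists_mem_of_sSup hch.directedOn ⟨y, hy⟩
      exact hc hI hI', fun z hz ↦ le_sSup hz⟩) ⊥ h
  have hmax s (hs : s ∉ p) : IsNullModulo D X (Ideal.span {s} ⊔ p) := by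
    by_contra hcon
    exact hs (hp.2 hcon le_sup_right (Ideal.mem_sup_left (Ideal.mem_span_singleton_self s)))
  refine ⟨p, ⟨fun htop ↦ hp.1 (htop ▸ .top hD X), fun {x y} hxy ↦ ?_⟩, hp.1, hmax⟩
  by_contra! hcon
  refine hp.1 ((IsNullModulo.mul hD (hmax x hcon.1) (hmax y hcon.2)).mono ?_)
  rw [Ideal.sup_mul, Ideal.mul_sup, Ideal.span_singleton_mul_span_singleton]
  refine sup_le (sup_le ?_ Ideal.mul_le_right) Ideal.mul_le_left
  rwa [Ideal.span_singleton_le_iff_mem, mul_comm]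

end BasedComplex

namespace BasedComplex

open scoped Kronecker Matrix

variable {A : Type u} [CommRing A]

section RowColKronecker

variable {E E' W W' W'' : Type*}

/-- The matrix of `γ ⊗ m`, where `γ` is a linear form and `m` a matrix. -/
def rowKronecker (γ : E → A) (m : Matrix W' W A) : Matrix W' (E × W) A :=
  Matrix.of fun w x ↦ γ x.1 * m w x.2

/-- The matrix of `b ⊗ m`, where `b` is a vector and `m` a matrix. -/
def colKronecker (b : E → A) (m : Matrix W W' A) : Matrix (E × W) W' A :=
  Matrix.of fun x w ↦ b x.1 * m x.2 w

theorem rowKronecker_zero (m : Matrix W W' A) : rowKronecker (0 : E → A) m = 0 := by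
  ext
  simp [rowKronecker]

theorem rowKronecker_neg (γ : E → A) (m : Matrix W W' A) :
    rowKronecker (-γ) m = -rowKronecker γ m := by
  ext
  simp [rowKronecker]

theorem colKronecker_neg (b : E → A) (m : Matrix W W' A) :
    colKronecker (-b) m = -colKronecker b m := by
  ext
  simp [colKronecker]

variable [Fintype W]

theorem mul_rowKronecker (γ : E → A) (m : Matrix W W' A) (n : Matrix W'' W A) :
    n * rowKronecker γ m = rowKronecker γ (n * m) := by
  ext w x
  simp only [rowKronecker, Matrix.mul_apply, Matrix.of_apply, Finset.mul_sum]
  exact Finset.sum_congr rfl fun _ _ ↦ by ring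

theorem colKronecker_mul (b : E → A) (m : Matrix W' W A) (n : Matrix W W'' A) :
    colKronecker b m * n = colKronecker b (m * n) := by
  ext w x
  simp only [colKronecker, Matrix.mul_apply, Matrix.of_apply, Finset.mul_sum]
  exact Finset.sum_congr rfl fun _ _ ↦ by ring

variable [Fintype E]

theorem rowKronecker_mul_kronecker (γ : E → A) (m : Matrix W' W A) (M : Matrix E E' A)
    (N : Matrix W W'' A) : rowKronecker γ m * (M ⊗ₖ N) = rowKronecker (γ ᵥ* M) (m * N) := by
  ext w x
  simp only [rowKronecker, Matrix.mul_apply, Matrix.of_apply, Matrix.kroneckerMap_apply,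
    Matrix.vecMul, dotProduct, Fintype.sum_prod_type, Finset.sum_mul_sum]
  exact Finset.sum_congr rfl fun _ _ ↦ Finset.sum_congr rfl fun _ _ ↦ by ring

theorem kronecker_mul_colKronecker (b : E → A) (m : Matrix W W'' A) (M : Matrix E' E A)
    (N : Matrix W' W A) : (M ⊗ₖ N) * colKronecker b m = colKronecker (M *ᵥ b) (N * m) := by
  ext x w
  simp only [colKronecker, Matrix.mul_apply, Matrix.of_apply, Matrix.kroneckerMap_apply,
    Matrix.mulVec, dotProduct, Fintype.sum_prod_type, Finset.sum_mul_sum]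
  exact Finset.sum_congr rfl fun _ _ ↦ Finset.sum_congr rfl fun _ _ ↦ by ring

theorem rowKronecker_mul_colKronecker (γ b : E → A) (m : Matrix W' W A) (n : Matrix W W'' A) :
    rowKronecker γ m * colKronecker b n = (γ ⬝ᵥ b) • (m * n) := by
  ext w x
  simp only [colKronecker, rowKronecker, Matrix.mul_apply, Matrix.of_apply, Matrix.smul_apply,
    smul_eq_mul, dotProduct, Fintype.sum_prod_type, Finset.sum_mul_sum]
  exact Finset.sum_congr rfl fun _ _ ↦ Finset.sum_congr rfl fun _ _ ↦ by ring

end RowColKronecker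

section SignMatrix

/-- The diagonal matrix acting by `(-1) ^ n` in degree `n`. -/
def signMatrix (E : BasedComplex A) : Matrix E.ι E.ι A :=
  Matrix.diagonal fun i ↦ (((E.deg i).negOnePow : ℤ) : A)

variable (E : BasedComplex A)

theorem signMatrix_transpose : E.signMatrixᵀ = E.signMatrix := Matrix.diagonal_transpose _

theorem signMatrix_mul_self : E.signMatrix * E.signMatrix = 1 := by
  rw [signMatrix, Matrix.diagonal_mul_diagonal]
  simp only [← Int.cast_mul, ← Units.val_mul, Int.units_mul_self]
  simp

theorem signMatrix_mul_d : E.signMatrix * E.d = -(E.d * E.signMatrix) := by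
  ext i j
  rw [signMatrix, Matrix.neg_apply, Matrix.mul_diagonal, Matrix.diagonal_mul]
  by_cases h : E.deg i = E.deg j + 1
  · rw [h, Int.negOnePow_succ]
    push_cast
    ring
  · rw [E.d_deg i j h, mul_zero, zero_mul, neg_zero]

variable {E} {γ : E.ι → A} (hγ : ∀ e, E.deg e ≠ -1 → γ e = 0)
include hγ

theorem vecMul_signMatrix : γ ᵥ* E.signMatrix = -γ := by
  ext e
  rw [signMatrix, Matrix.vecMul_diagonal]
  by_cases h : E.deg e = -1
  · simp [h]
  · simp [hγ e h]

theorem signMatrix_mulVec : E.signMatrix *ᵥ γ = -γ := by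
  rw [← Matrix.vecMul_transpose, signMatrix_transpose, vecMul_signMatrix hγ]

end SignMatrix

section Tensor

/-- The tensor product of two complexes, with the product basis. -/
abbrev tensor (E W : BasedComplex A) : BasedComplex A where
  ι := E.ι × W.ι
  fin := inferInstance
  dec := inferInstance
  deg x := E.deg x.1 + W.deg x.2
  d := E.d ⊗ₖ 1 + E.signMatrix ⊗ₖ W.d
  d_sq := by
    rw [Matrix.mul_add, Matrix.add_mul, Matrix.add_mul]
    simp only [← Matrix.mul_kronecker_mul, Matrix.one_mul, Matrix.mul_one, E.d_sq, W.d_sq,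
      signMatrix_mul_d]
    ext
    simp
  d_deg x y h := by
    rw [Matrix.add_apply, Matrix.kroneckerMap_apply, Matrix.kroneckerMap_apply]
    have h₁ : E.d x.1 y.1 * (1 : Matrix W.ι W.ι A) x.2 y.2 = 0 := by
      by_cases hx : x.2 = y.2
      · rw [hx] at h
        rw [E.d_deg _ _ (by omega), zero_mul]
      · rw [Matrix.one_apply_ne hx, mul_zero]
    have h₂ : E.signMatrix x.1 y.1 * W.d x.2 y.2 = 0 := by
      by_cases hx : x.1 = y.1
      · rw [hx] at h
        rw [W.d_deg _ _ (by omega), mul_zero]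
      · rw [signMatrix, Matrix.diagonal_apply_ne _ hx, zero_mul]
    rw [h₁, h₂, add_zero]

theorem tensor_d_apply (E W : BasedComplex A) (x y : (tensor E W).ι) : (tensor E W).d x y =
    E.d x.1 y.1 * (1 : Matrix W.ι W.ι A) x.2 y.2 + E.signMatrix x.1 y.1 * W.d x.2 y.2 := rfl

variable [HasDerivedCategory.{w} (ModuleCat.{u} A)] {D : Set (DerivedCategory (ModuleCat.{u} A))}
  (hD : IsThickSubcategory D) (E W : BasedComplex A)
include hD

theorem tensor_obj_mem_of_right (hW : W.obj ∈ D) : (tensor E W).obj ∈ D := by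
  refine obj_mem_of_filtration hD E.deg Prod.fst (fun x y h ↦ ?_) fun e _ ↦ ?_
  · by_contra! hcon
    rw [tensor_d_apply, E.d_deg _ _ (by omega), signMatrix, Matrix.diagonal_apply_ne _ hcon.1,
      zero_mul, zero_mul, add_zero] at h
    exact h rfl
  · refine mem_of_equiv hD hW ⟨fun x ↦ x.1.2, fun w ↦ ⟨(e, w), rfl⟩,
      fun x ↦ Subtype.ext (Prod.ext x.2.symm rfl), fun _ ↦ rfl⟩ (-E.deg e) (fun x ↦ ?_)
      (E.deg e).negOnePow fun x y ↦ ?_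
    · change E.deg x.1.1 + W.deg x.1.2 + -E.deg e = W.deg x.1.2
      rw [x.2]
      ring
    · change (tensor E W).d x.1 y.1 = _
      rw [tensor_d_apply, x.2, y.2, E.d_deg e e (by omega), zero_mul, zero_add, signMatrix,
        Matrix.diagonal_apply_eq, zsmul_eq_mul]
      rfl

theorem tensor_obj_mem_of_left (hE : E.obj ∈ D) : (tensor E W).obj ∈ D := by
  refine obj_mem_of_filtration hD W.deg Prod.snd (fun x y h ↦ ?_) fun w _ ↦ ?_
  · by_contra! hcon
    rw [tensor_d_apply, W.d_deg _ _ (by omega), Matrix.one_apply_ne hcon.1, mul_zero, mul_zero,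
      add_zero] at h
    exact h rfl
  · refine mem_of_equiv hD hE ⟨fun x ↦ x.1.1, fun e ↦ ⟨(e, w), rfl⟩,
      fun x ↦ Subtype.ext (Prod.ext rfl x.2.symm), fun _ ↦ rfl⟩ (-W.deg w) (fun x ↦ ?_)
      1 fun x y ↦ ?_
    · change E.deg x.1.1 + W.deg x.1.2 + -W.deg w = E.deg x.1.1
      rw [x.2]
      ring
    · change (tensor E W).d x.1 y.1 = _
      rw [tensor_d_apply, x.2, y.2, W.d_deg w w (by omega), Matrix.one_apply_eq, mul_zero,
        mul_one, add_zero, Units.val_one, one_smul]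
      rfl

end Tensor

section OfLinearForm

variable {E : BasedComplex A} {γ : E.ι → A} (hγ : ∀ e, E.deg e ≠ -1 → γ e = 0)

include hγ in
theorem isHomogeneous_rowKronecker (W : BasedComplex A) :
    IsHomogeneous (tensor E W) W 1 (rowKronecker γ (1 : Matrix W.ι W.ι A)) := by
  rintro w ⟨e, w'⟩ h
  change γ e * (1 : Matrix W.ι W.ι A) w w' = 0
  by_cases hw : w = w'
  · subst hw
    rw [hγ e (by change W.deg w ≠ E.deg e + W.deg w + 1 at h; omega), zero_mul]
  · rw [Matrix.one_apply_ne hw, mul_zero]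

variable (hγd : γ ᵥ* E.d = 0)

include hγ hγd in
theorem d_mul_rowKronecker_add (W : BasedComplex A) :
    W.d * rowKronecker γ (1 : Matrix W.ι W.ι A) +
      rowKronecker γ (1 : Matrix W.ι W.ι A) * (tensor E W).d = 0 := by
  rw [Matrix.mul_add, rowKronecker_mul_kronecker, rowKronecker_mul_kronecker, mul_rowKronecker,
    vecMul_signMatrix hγ, hγd, rowKronecker_neg, rowKronecker_zero]
  simp

variable [HasDerivedCategory.{w} (ModuleCat.{u} A)] {D : Set (DerivedCategory (ModuleCat.{u} A))}
  (hE : ∀ W, (tensor E W).obj ∈ D)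

/-- The functor `W ↦ cone (E⟦-1⟧ ⊗ W ⟶ W)` for a chain map `γ : E⟦-1⟧ ⟶ A`, where `E ⊗ W` lies in
`D` for all `W`. -/
def CoaugmentedFunctor.ofLinearForm : CoaugmentedFunctor D where
  obj W := extension W (tensor E W) (rowKronecker γ (1 : Matrix W.ι W.ι A))
    (isHomogeneous_rowKronecker hγ W) (d_mul_rowKronecker_add hγ hγd W)
  map f := Matrix.fromBlocks f 0 0 ((1 : Matrix E.ι E.ι A) ⊗ₖ f)
  twist h := Matrix.fromBlocks h 0 0 (E.signMatrix ⊗ₖ h)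
  map_sub f g := by
    ext (i | i) (j | j) <;>
      simp [mul_sub, Matrix.sub_apply (Matrix.fromBlocks f _ _ _) (Matrix.fromBlocks g _ _ _)]
  map_smul_one P s := by
    rw [Matrix.kronecker_smul, Matrix.one_kronecker_one]
    ext (i | i) (j | j) <;> simp [Matrix.one_apply]
  map_comm f hf := by
    rw [Matrix.fromBlocks_multiply, Matrix.fromBlocks_multiply]
    simp only [rowKronecker_mul_kronecker, mul_rowKronecker, Matrix.mul_add, Matrix.add_mul,
      ← Matrix.mul_kronecker_mul, hf, Matrix.mul_zero, Matrix.zero_mul, Matrix.mul_one,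
      Matrix.one_mul, Matrix.vecMul_one, zero_add, add_zero]
  map_mem f I hf := by
    rintro (i | i) (j | j)
    exacts [hf i j, I.zero_mem, I.zero_mem, I.mul_mem_left _ (hf _ _)]
  boundary_twist h := by
    rw [Matrix.fromBlocks_multiply, Matrix.fromBlocks_multiply, Matrix.fromBlocks_add]
    simp only [rowKronecker_mul_kronecker, mul_rowKronecker, Matrix.mul_add, Matrix.add_mul,
      ← Matrix.mul_kronecker_mul, vecMul_signMatrix hγ, rowKronecker_neg, signMatrix_mul_self,
      signMatrix_mul_d, Matrix.mul_zero, Matrix.zero_mul, Matrix.mul_one, Matrix.one_mul,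
      zero_add, add_zero, neg_add_cancel, Matrix.kronecker_add]
    congr 1
    ext
    simp
    ring
  η P := inl _ _
  isHomogeneous_η P := isHomogeneous_inl _ _
  η_comm P := extension_d_mul_inl _ _
  η_naturality f := by
    rw [inl, inl, Matrix.fromBlocks_mul_fromRows, Matrix.fromRows_mul]
    simp
  trW_η P := trW_inclusion _ _ (hE P)

theorem exists_subBoundary_smul_η_mem {p : Ideal A} {s : A} {b : E.ι → A}
    (hb : ∀ e, E.deg e ≠ -1 → b e = 0) (hbd : ∀ e, (E.d *ᵥ b) e ∈ p) (hs : γ ⬝ᵥ b = s)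
    (W : BasedComplex A) :
    ∃ k, ∀ i j, subBoundary (s • (CoaugmentedFunctor.ofLinearForm hγ hγd hE).η W) k i j ∈ p := by
  refine ⟨Matrix.fromRows 0 (colKronecker b 1), ?_⟩
  have key : s • (Matrix.fromRows 1 0 : Matrix (W.ι ⊕ E.ι × W.ι) W.ι A) -
      (Matrix.fromBlocks W.d (rowKronecker γ 1) 0 (E.d ⊗ₖ 1 + E.signMatrix ⊗ₖ W.d) *
        (Matrix.fromRows 0 (colKronecker b 1) : Matrix (W.ι ⊕ E.ι × W.ι) W.ι A) +
        Matrix.fromRows 0 (colKronecker b (1 : Matrix W.ι W.ι A)) * W.d) =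
      Matrix.fromRows 0 (-colKronecker (E.d *ᵥ b) (1 : Matrix W.ι W.ι A)) := by
    rw [Matrix.fromBlocks_mul_fromRows, Matrix.fromRows_mul, rowKronecker_mul_colKronecker,
      colKronecker_mul, Matrix.add_mul, kronecker_mul_colKronecker, kronecker_mul_colKronecker,
      signMatrix_mulVec hb, hs, colKronecker_neg]
    ext (i | i) j <;> simp
  intro i j
  refine Set.mem_of_eq_of_mem (congrFun₂ key i j) ?_
  rcases i with _ | i
  · exact p.zero_mem
  · exact p.neg_mem (p.mul_mem_right _ (hbd _))

end OfLinearForm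

section ShiftedDual

/-- The complex `Hom (Y, A⟦1⟧)` with the dual basis. -/
abbrev shiftedDual (Y : BasedComplex A) : BasedComplex A where
  ι := Y.ι
  fin := Y.fin
  dec := Y.dec
  deg i := -Y.deg i - 1
  d := Y.dᵀ * Y.signMatrix
  d_sq := by
    have h := congrArg Matrix.transpose Y.signMatrix_mul_d
    rw [Matrix.transpose_mul, Matrix.transpose_neg, Matrix.transpose_mul, signMatrix_transpose] at h
    rw [Matrix.mul_assoc, ← Matrix.mul_assoc Y.signMatrix, ← neg_eq_iff_eq_neg.2 h, Matrix.neg_mul,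
      Matrix.mul_neg, Matrix.mul_assoc, ← Matrix.mul_assoc, ← Matrix.transpose_mul, Y.d_sq]
    simp
  d_deg i j h := by
    rw [signMatrix, Matrix.mul_diagonal, Matrix.transpose_apply, Y.d_deg j i (by omega), zero_mul]

variable {Y : BasedComplex A}

theorem signMatrix_shiftedDual : Y.shiftedDual.signMatrix = -Y.signMatrix := by
  rw [signMatrix, signMatrix, Matrix.diagonal_neg]
  refine congrArg Matrix.diagonal (funext fun i ↦ ?_)
  simp [Int.negOnePow_sub]

theorem vec_one_apply_eq_zero (x : (tensor Y.shiftedDual Y).ι)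
    (hx : (tensor Y.shiftedDual Y).deg x ≠ -1) : (1 : Matrix Y.ι Y.ι A).vec x = 0 :=
  Matrix.one_apply_ne fun h ↦ hx (by
    change -Y.deg x.1 - 1 + Y.deg x.2 = -1
    rw [h]
    ring)

/-- Evaluation `Hom (Y, A⟦1⟧) ⊗ Y ⟶ A⟦1⟧` is a chain map. -/
theorem vec_one_vecMul_d : (1 : Matrix Y.ι Y.ι A).vec ᵥ* (tensor Y.shiftedDual Y).d = 0 := by
  rw [Matrix.vecMul_add, Matrix.vec_vecMul_kronecker, Matrix.vec_vecMul_kronecker,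
    signMatrix_shiftedDual, Matrix.mul_neg, Matrix.mul_one, Matrix.mul_one, Matrix.transpose_one,
    Matrix.one_mul]
  exact add_neg_cancel _

theorem exists_isHomogeneous_vec {E : BasedComplex A} {p : Ideal A} {b : E.ι → A} (n : ℤ)
    (hb : ∀ e, (E.d *ᵥ b) e ∈ p) :
    ∃ c : E.ι → A, (∀ e, E.deg e ≠ n → c e = 0) ∧ (∀ e, (E.d *ᵥ c) e ∈ p) ∧
      ∀ γ : E.ι → A, (∀ e, E.deg e ≠ n → γ e = 0) → γ ⬝ᵥ c = γ ⬝ᵥ b := by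
  refine ⟨fun e ↦ if E.deg e = n then b e else 0, fun e he ↦ if_neg he, fun e ↦ ?_, fun γ hγ ↦ ?_⟩
  · by_cases he : E.deg e = n + 1
    · convert hb e using 1
      refine Finset.sum_congr rfl fun x _ ↦ ?_
      dsimp only
      split_ifs with hx
      · rfl
      · rw [E.d_deg e x (by omega), zero_mul, zero_mul]
    · refine Ideal.sum_mem _ fun x _ ↦ ?_
      dsimp only
      split_ifs with hx
      · rw [E.d_deg e x (by omega), zero_mul]
        exact p.zero_mem
      · rw [mul_zero]
        exact p.zero_mem
  · refine Finset.sum_congr rfl fun x _ ↦ ?_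
    dsimp only
    split_ifs with hx
    · rfl
    · rw [hγ x hx, zero_mul, zero_mul]

theorem d_mulVec_vec_vecMulVec_mem {p : Ideal A} {v l : Y.ι → A} (hv : ∀ i, (Y.d *ᵥ v) i ∈ p)
    (hl : ∀ i, (l ᵥ* Y.d) i ∈ p) (e : (tensor Y.shiftedDual Y).ι) :
    ((tensor Y.shiftedDual Y).d *ᵥ (Matrix.vecMulVec v l).vec) e ∈ p := by
  rw [Matrix.add_mulVec, Matrix.kronecker_mulVec_vec, Matrix.kronecker_mulVec_vec,
    signMatrix_shiftedDual, Matrix.transpose_mul, Matrix.transpose_transpose, signMatrix_transpose,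
    signMatrix_mul_d, Matrix.one_mul, Matrix.vecMulVec_mul, Matrix.mul_vecMulVec,
    Matrix.vecMulVec_mul, Matrix.vecMul_neg, ← Matrix.vecMul_vecMul, signMatrix,
    Pi.add_apply]
  refine p.add_mem (p.mul_mem_left _ (p.neg_mem ?_)) (p.mul_mem_right _ (hv _))
  rw [Matrix.vecMul_diagonal]
  exact p.mul_mem_right _ (hl _)

theorem vec_one_dotProduct_vec_vecMulVec {ι : Type*} [Fintype ι] [DecidableEq ι] (v l : ι → A) :
    (1 : Matrix ι ι A).vec ⬝ᵥ (Matrix.vecMulVec v l).vec = l ⬝ᵥ v := by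
  rw [Matrix.vec_dotProduct_vec, Matrix.transpose_one, Matrix.one_mul, Matrix.trace_vecMulVec,
    dotProduct_comm]

end ShiftedDual

variable [HasDerivedCategory.{w} (ModuleCat.{u} A)] {D : Set (DerivedCategory (ModuleCat.{u} A))}

theorem IsNullModulo.of_obj_mem (hD : IsThickSubcategory D) {X Y : BasedComplex A} (hY : Y.obj ∈ D)
    {p : Ideal A} [p.IsPrime] (hp : ∀ s ∉ p, ¬ IsNullHomotopic Y Y (s • 1))
    (hX : ∀ s ∉ p, IsNullModulo D X (Ideal.span {s} ⊔ p)) : IsNullModulo D X p := by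
  obtain ⟨v, l, hv, hl, hs⟩ := exists_dotProduct_notMem Y p hp
  obtain ⟨b, hb, hbd, hbγ⟩ := exists_isHomogeneous_vec (-1) (d_mulVec_vec_vecMulVec_mem hv hl)
  have hE W : (tensor (tensor Y.shiftedDual Y) W).obj ∈ D :=
    tensor_obj_mem_of_left hD _ W (tensor_obj_mem_of_right hD _ Y hY)
  refine of_span_singleton_sup hD hs (hX _ hs) fun F ↦
    ⟨.ofLinearForm vec_one_apply_eq_zero vec_one_vecMul_d hE, ?_⟩
  refine exists_subBoundary_smul_η_mem _ _ hE hb hbd ?_ _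
  exact (hbγ _ vec_one_apply_eq_zero).trans (vec_one_dotProduct_vec_vecMulVec v l)

theorem IsNullModulo.of_isNullHomotopic (hD : IsThickSubcategory D) {X : BasedComplex A}
    {p : Ideal A} [p.IsPrime] {s : A} (hs : s ∉ p) (h : IsNullHomotopic X X (s • 1))
    (hX : IsNullModulo D X (Ideal.span {s} ⊔ p)) : IsNullModulo D X p := by
  obtain ⟨k, hk⟩ := h
  refine of_span_singleton_sup hD hs hX fun F ↦ ⟨.id hD, F.twist k, ?_⟩
  have : subBoundary (s • (1 : Matrix (F.obj X).ι (F.obj X).ι A)) (F.twist k) = 0 := by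
    rw [subBoundary, F.boundary_twist, ← hk, F.map_smul_one, sub_self]
  exact fun i j ↦ (congrFun₂ this i j).symm ▸ p.zero_mem

theorem obj_mem_of_forall_isPrime (hD : IsThickSubcategory D) (X : BasedComplex A)
    (hX : ∀ p : Ideal A, p.IsPrime → (∀ s ∉ p, ¬ IsNullHomotopic X X (s • 1)) →
      ∃ Y : BasedComplex A, Y.obj ∈ D ∧ ∀ s ∉ p, ¬ IsNullHomotopic Y Y (s • 1)) : X.obj ∈ D := by
  refine IsNullModulo.obj_mem hD ?_
  by_contra hcon
  obtain ⟨p, hp, hnp, hmax⟩ := exists_isPrime_not_isNullModulo hD hcon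
  refine hnp ?_
  by_cases hXp : ∀ s ∉ p, ¬ IsNullHomotopic X X (s • 1)
  · obtain ⟨Y, hY, hYp⟩ := hX p hp hXp
    exact .of_obj_mem hD hY hYp hmax
  · push Not at hXp
    obtain ⟨s, hs, hk⟩ := hXp
    exact .of_isNullHomotopic hD hs hk (hmax s hs)

end BasedComplex

section Annihilator

variable {A : Type u} [CommRing A]

theorem mem_annihilator_iff_smul_id_eq_zero {M : ModuleCat.{u} A} {s : A} :
    s ∈ Module.annihilator A M ↔ s • 𝟙 M = 0 := by
  rw [Module.mem_annihilator]
  exact ⟨fun h ↦ ModuleCat.hom_ext (LinearMap.ext h), fun h x ↦ congrArg (fun f : M ⟶ M ↦ f x) h⟩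

theorem annihilator_eq_of_iso {M N : ModuleCat.{u} A} (e : M ≅ N) :
    Module.annihilator A M = Module.annihilator A N :=
  e.toLinearEquiv.annihilator_eq

instance homologyFunctor_linear {ι : Type*} (c : ComplexShape ι) (n : ι) :
    (HomologicalComplex.homologyFunctor (ModuleCat.{u} A) c n).Linear A where
  map_smul f r := ShortComplex.homologyMap_smul
    ((HomologicalComplex.shortComplexFunctor (ModuleCat.{u} A) c n).map f) r

instance derivedHomologyFunctor_linear [HasDerivedCategory.{w} (ModuleCat.{u} A)] (n : ℤ) :
    (DerivedCategory.homologyFunctor (ModuleCat.{u} A) n).Linear A :=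
  letI : Localization.Lifting DerivedCategory.Q
      (HomologicalComplex.quasiIso (ModuleCat.{u} A) (ComplexShape.up ℤ))
      (HomologicalComplex.homologyFunctor (ModuleCat.{u} A) (ComplexShape.up ℤ) n)
      (DerivedCategory.homologyFunctor (ModuleCat.{u} A) n) :=
    ⟨DerivedCategory.homologyFunctorFactors (ModuleCat.{u} A) n⟩
  (Localization.functor_linear_iff DerivedCategory.Q
    (HomologicalComplex.quasiIso (ModuleCat.{u} A) (ComplexShape.up ℤ)) A
    (HomologicalComplex.homologyFunctor (ModuleCat.{u} A) (ComplexShape.up ℤ) n) _).1 inferInstance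

theorem mem_annihilator_map_of_smul_id_eq_zero {T : Type*} [Category T] [Preadditive T] [Linear A T]
    (F : T ⥤ ModuleCat.{u} A) [F.Additive] [F.Linear A] {X : T} {s : A} (h : s • 𝟙 X = 0) :
    s ∈ Module.annihilator A (F.obj X) := by
  rw [mem_annihilator_iff_smul_id_eq_zero, ← CategoryTheory.Functor.map_id, ← F.map_smul, h,
    F.map_zero]

theorem exists_f_eq_smul_of_mem_annihilator_homology {S : ShortComplex (ModuleCat.{u} A)} {s : A}
    (hs : s ∈ Module.annihilator A S.homology) {z : S.X₂} (hz : S.g z = 0) :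
    ∃ y, S.f y = s • z := by
  rw [annihilator_eq_of_iso S.moduleCatHomologyIso, Module.mem_annihilator] at hs
  have h := hs (Submodule.Quotient.mk ⟨z, hz⟩)
  erw [← Submodule.Quotient.mk_smul, Submodule.Quotient.mk_eq_zero] at h
  obtain ⟨y, hy⟩ := h
  exact ⟨y, congrArg Subtype.val hy⟩

theorem exists_d_eq_smul_of_mem_annihilator_homology {K : CochainComplex (ModuleCat.{u} A) ℤ}
    {s : A} {n : ℤ} (hs : s ∈ Module.annihilator A (K.homology n)) {z : K.X n}
    (hz : K.d n (n + 1) z = 0) : ∃ y, K.d (n - 1) n y = s • z := by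
  have e := ShortComplex.homologyMapIso (K.isoSc' (n - 1) n (n + 1) (by simp) (by simp))
  exact exists_f_eq_smul_of_mem_annihilator_homology (S := K.sc' (n - 1) n (n + 1))
    (annihilator_eq_of_iso e ▸ hs) hz

end Annihilator

theorem isThick_exists_pow_smul_eq_zero {R T : Type*} [CommRing R] [Category T] [HasZeroObject T]
    [Preadditive T] [Linear R T] [HasShift T ℤ] [∀ n : ℤ, (shiftFunctor T n).Additive]
    [∀ n : ℤ, (shiftFunctor T n).Linear R] [Pretriangulated T] (V : T) (s : R) :
    IsThickSubcategory {X : T | ∀ k : ℤ, ∃ N : ℕ, ∀ ψ : X ⟶ V⟦k⟧, s ^ N • ψ = 0} where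
  mem_of_iso {X Y} e hX k := by
    obtain ⟨N, hN⟩ := hX k
    refine ⟨N, fun ψ ↦ ?_⟩
    have := hN (e.hom ≫ ψ)
    rw [← Linear.comp_smul] at this
    exact (cancel_epi e.hom).1 (this.trans comp_zero.symm)
  zero_mem k := ⟨0, fun ψ ↦ (isZero_zero _).eq_of_src _ _⟩
  shift_mem X n hX k := by
    obtain ⟨N, hN⟩ := hX (k + -n)
    refine ⟨N, fun ψ ↦ (shiftFunctor T (-n)).map_injective ?_⟩
    rw [Functor.map_zero, Functor.map_smul]
    let α := (shiftFunctorCompIsoId T n (-n) (by simp)).app X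
    let β := (shiftFunctorAdd T k (-n)).app V
    have h : α.inv ≫ (s ^ N • ψ⟦-n⟧') ≫ β.inv = 0 := by
      rw [Linear.smul_comp, Linear.comp_smul]
      exact hN (α.inv ≫ ψ⟦-n⟧' ≫ β.inv)
    rwa [Preadditive.IsIso.comp_left_eq_zero, Preadditive.IsIso.comp_right_eq_zero] at h
  ext₂ T hT h1 h3 k := by
    obtain ⟨N, hN⟩ := h1 k
    obtain ⟨M, hM⟩ := h3 k
    refine ⟨M + N, fun ψ ↦ ?_⟩
    obtain ⟨φ, hφ⟩ := Triangle.yoneda_exact₂ _ hT (s ^ N • ψ) (by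
      rw [Linear.comp_smul]; exact hN _)
    rw [pow_add, mul_smul, hφ, ← Linear.comp_smul, hM, comp_zero]
  retract_mem X Y i r hir hY k := by
    obtain ⟨N, hN⟩ := hY k
    refine ⟨N, fun ψ ↦ ?_⟩
    rw [← Category.id_comp ψ, ← hir, Category.assoc, ← Linear.comp_smul, hN, comp_zero]

namespace BasedComplex

open Matrix

variable {A : Type u} [CommRing A] {P Q : BasedComplex A}

theorem exists_mulVec_eq_smul {s : A} {n : ℤ}
    (hs : s ∈ Module.annihilator A ((P.complex A).homology n)) {z : P.ι → A}
    (hz : ∀ i, P.deg i ≠ n → z i = 0) (hd : P.d *ᵥ z = 0) : ∃ y, P.d *ᵥ y = s • z := by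
  obtain ⟨y, hy⟩ := exists_d_eq_smul_of_mem_annihilator_homology hs
    (z := (fun i ↦ z i.1 : {i // P.deg i = n} → A)) (by
      refine funext fun j ↦ Eq.trans (component_apply_dite _ _ _ _ _) ?_
      refine Eq.trans (Finset.sum_congr rfl fun i _ ↦ ?_) (congrFun hd j.1)
      split_ifs with h
      · rfl
      · rw [hz i h, smul_zero, mul_zero])
  refine ⟨fun i ↦ if h : P.deg i = n - 1 then (y : {i // P.deg i = n - 1} → A) ⟨i, h⟩ else 0,
    funext fun j ↦ ?_⟩
  by_cases hj : P.deg j = n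
  · exact (component_apply_dite P.d _ _ y ⟨j, hj⟩).symm.trans (congrFun hy ⟨j, hj⟩)
  · rw [Pi.smul_apply, hz j hj, smul_zero]
    refine Finset.sum_eq_zero fun i _ ↦ ?_
    dsimp only
    split_ifs with h
    · rw [P.d_deg _ _ (by omega), zero_mul]
    · rw [mul_zero]

theorem isNullHomotopic_unit_smul {s : A}
    (hs : s ∈ Module.annihilator A ((Q.complex A).homology 0)) {f : Matrix Q.ι Unit A}
    (hf : IsHomogeneous (unit A) Q 0 f) (hc : Q.d * f = f * (unit A).d) :
    IsNullHomotopic (unit A) Q (s • f) := by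
  have hd : Q.d *ᵥ (fun i ↦ f i ()) = 0 :=
    funext fun i ↦ congrFun₂ (hc.trans (Matrix.mul_zero f)) i ()
  obtain ⟨y, hy⟩ := exists_mulVec_eq_smul hs (fun i hi ↦ hf i () hi) hd
  refine ⟨Matrix.of fun i _ ↦ y i, ?_⟩
  ext i ⟨⟩
  rw [Matrix.mul_zero, add_zero]
  exact (congrFun hy i).symm

variable [HasDerivedCategory.{w} (ModuleCat.{u} A)]

/-- The homology of `P.obj` is that of the complex `P.complex A` representing it. -/
noncomputable def homologyIso (P : BasedComplex A) (n : ℤ) :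
    (DerivedCategory.homologyFunctor (ModuleCat.{u} A) n).obj P.obj ≅ (P.complex A).homology n :=
  (DerivedCategory.homologyFunctorFactors (ModuleCat.{u} A) n).app (P.complex A)

theorem smul_unit_hom_eq_zero {s : A} {k : ℤ} (hs : s ∈ Module.annihilator A
      ((DerivedCategory.homologyFunctor (ModuleCat.{u} A) k).obj P.obj))
    (ψ : (unit A).obj ⟶ P.obj⟦k⟧) : s • ψ = 0 := by
  obtain ⟨e⟩ := nonempty_obj_iso_shift (B := P.shift k) (P := P) (Equiv.refl _) k
    (fun i ↦ sub_add_cancel _ _) k.negOnePow (fun i j ↦ rfl)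
  have i : (DerivedCategory.homologyFunctor (ModuleCat.{u} A) k).obj P.obj ≅
      ((P.shift k).complex A).homology 0 :=
    ((DerivedCategory.homologyFunctor (ModuleCat.{u} A) 0).shiftIso k 0 k
      (add_zero k)).symm.app P.obj ≪≫ (DerivedCategory.homologyFunctor _ 0).mapIso e.symm ≪≫
        (P.shift k).homologyIso 0
  rw [annihilator_eq_of_iso i] at hs
  obtain ⟨f, hf, hc, h⟩ := exists_derivedMap_eq (ψ ≫ e.inv)
  have h0 := (derivedMap_eq_zero_iff _ (hf.smul s)
    (by rw [Matrix.mul_smul, hc, Matrix.smul_mul])).2 (isNullHomotopic_unit_smul hs hf hc)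
  rwa [derivedMap_smul s f hf hc, h, ← Linear.smul_comp,
    Preadditive.IsIso.comp_right_eq_zero] at h0

theorem exists_isNullHomotopic_pow_smul_one (hP : IsSmallObject P.obj) {s : A}
    (hs : ∀ n : ℤ, s ∈ Module.annihilator A
      ((DerivedCategory.homologyFunctor (ModuleCat.{u} A) n).obj P.obj)) :
    ∃ N : ℕ, IsNullHomotopic P P (s ^ N • 1) := by
  have hthick := isThick_exists_pow_smul_eq_zero P.obj s
  obtain ⟨N, hN⟩ := hP _ hthick (hthick.mem_of_iso (nonempty_unit_obj_iso A).some fun k ↦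
    ⟨1, fun ψ ↦ by rw [pow_one]; exact smul_unit_hom_eq_zero (hs k) ψ⟩) 0
  refine ⟨N, (smul_id_eq_zero_iff P _).1 ?_⟩
  have h := hN ((shiftFunctorZero _ ℤ).inv.app P.obj)
  rw [← Category.id_comp ((shiftFunctorZero _ ℤ).inv.app P.obj), ← Linear.smul_comp] at h
  exact (Preadditive.IsIso.comp_right_eq_zero _ _).1 h

end BasedComplex

/-! ### Supports -/

namespace IsWideSubcategory

variable {C : Type*} [Category C] [Abelian C] {D D' : Set C}

theorem inter (hD : IsWideSubcategory D) (hD' : IsWideSubcategory D') :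
    IsWideSubcategory (D ∩ D') where
  mem_of_iso e hX := ⟨hD.mem_of_iso e hX.1, hD'.mem_of_iso e hX.2⟩
  kernel_mem f hX hY := ⟨hD.kernel_mem f hX.1 hY.1, hD'.kernel_mem f hX.2 hY.2⟩
  cokernel_mem f hX hY := ⟨hD.cokernel_mem f hX.1 hY.1, hD'.cokernel_mem f hX.2 hY.2⟩
  extension_mem S hS h₁ h₃ :=
    ⟨hD.extension_mem S hS h₁.1 h₃.1, hD'.extension_mem S hS h₁.2 h₃.2⟩

theorem homology_mem (hD : IsWideSubcategory D) (S : ShortComplex C) (h₁ : S.X₁ ∈ D)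
    (h₂ : S.X₂ ∈ D) (h₃ : S.X₃ ∈ D) : S.homology ∈ D := by
  have hc : S.cycles ∈ D := hD.mem_of_iso
    ((limit.isLimit (parallelPair S.g 0)).conePointUniqueUpToIso S.cyclesIsKernel)
    (hD.kernel_mem S.g h₂ h₃)
  exact hD.mem_of_iso
    ((colimit.isColimit (parallelPair S.toCycles 0)).coconePointUniqueUpToIso S.homologyIsCokernel)
    (hD.cokernel_mem S.toCycles h₁ hc)

end IsWideSubcategory

section Support

variable {A : Type u} [CommRing A]

theorem annihilator_mul_annihilator_le {S : ShortComplex (ModuleCat.{u} A)} (hS : S.Exact) :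
    Module.annihilator A S.X₁ * Module.annihilator A S.X₃ ≤ Module.annihilator A S.X₂ := by
  refine Ideal.mul_le.2 fun r hr s hs ↦ ?_
  rw [Module.mem_annihilator] at hr hs ⊢
  intro x
  have hx : S.g (s • x) = 0 := (map_smul S.g.hom s x).trans (hs _)
  obtain ⟨y, hy⟩ := (ShortComplex.ShortExact.moduleCat_exact_iff_function_exact S).1 hS _ |>.1 hx
  rw [mul_smul, ← hy]
  exact (map_smul S.f.hom r y).symm.trans (by rw [hr, map_zero])

/-- The modules all of whose prime ideals containing the annihilator lie in `Z`; a finitely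
generated module belongs to it if and only if its support is contained in `Z`. -/
def supportSubcategory (Z : Set (Ideal A)) : Set (ModuleCat.{u} A) :=
  {M | ∀ p : Ideal A, p.IsPrime → Module.annihilator A M ≤ p → p ∈ Z}

theorem isWideSubcategory_supportSubcategory (Z : Set (Ideal A)) :
    IsWideSubcategory (supportSubcategory Z) where
  mem_of_iso e hX p hp h := hX p hp ((annihilator_eq_of_iso e).trans_le h)
  kernel_mem f hX _ p hp h := hX p hp ((LinearMap.annihilator_le_of_injective (kernel.ι f).hom
    ((ModuleCat.mono_iff_injective _).1 inferInstance)).trans h)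
  cokernel_mem f _ hY p hp h := hY p hp ((LinearMap.annihilator_le_of_surjective (cokernel.π f).hom
    ((ModuleCat.epi_iff_surjective _).1 inferInstance)).trans h)
  extension_mem _ hS h₁ h₃ p hp h :=
    (hp.mul_le.1 ((annihilator_mul_annihilator_le hS.exact).trans h)).elim (h₁ p hp) (h₃ p hp)

theorem punit_mem_supportSubcategory (Z : Set (Ideal A)) :
    ModuleCat.of A PUnit.{u + 1} ∈ supportSubcategory Z := fun _ hp h ↦
  absurd (top_le_iff.1 ((Module.annihilator_eq_top_iff.2
    (inferInstanceAs (Subsingleton PUnit.{u + 1}))).ge.trans h)) hp.ne_top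

end Support

section SupportClassification

variable {A : Type u} [CommRing A]

namespace BasedComplex

variable (P : BasedComplex A)

theorem complex_X_mem_finPresModules (N : Type u) [AddCommGroup N] [Module A N]
    [Module.FinitePresentation A N] (n : ℤ) : (P.complex N).X n ∈ finPresModules A :=
  inferInstanceAs (Module.FinitePresentation A ({i // P.deg i = n} → N))

theorem homology_mem_finPresModules (hA : IsLeftCoherentRing A) (N : Type u) [AddCommGroup N]
    [Module A N] [Module.FinitePresentation A N] (n : ℤ) :
    (P.complex N).homology n ∈ finPresModules A :=
  hA.isWideSubcategory_finPresModules.homology_mem _ (P.complex_X_mem_finPresModules N _)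
    (P.complex_X_mem_finPresModules N _) (P.complex_X_mem_finPresModules N _)

theorem exists_notMem_forall_mem_annihilator_homology (p : Ideal A) [p.IsPrime]
    (h : ∀ n, ¬ Module.annihilator A ((P.complex A).homology n) ≤ p) :
    ∃ s ∉ p, ∀ n, s ∈ Module.annihilator A ((P.complex A).homology n) := by
  choose s hs hsp using fun n ↦ SetLike.not_le_iff_exists.1 (h n)
  refine ⟨∏ i, s (P.deg i), ?_, fun n ↦ ?_⟩
  · rw [‹p.IsPrime›.prod_mem_iff]
    push Not
    exact fun i _ ↦ hsp _
  · by_cases hn : ∃ i, P.deg i = n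
    · obtain ⟨i, rfl⟩ := hn
      exact Ideal.prod_mem _ (Finset.mem_univ i) (hs _)
    · push Not at hn
      have hz : IsZero ((P.complex A).homology n) :=
        ShortComplex.isZero_homology_of_isZero_X₂ _ (P.isZero_complex_X A n hn)
      have := ModuleCat.subsingleton_of_isZero hz
      exact Module.mem_annihilator.2 fun x ↦ Subsingleton.elim _ _

end BasedComplex

variable [HasDerivedCategory.{w} (ModuleCat.{u} A)]

open BasedComplex

theorem IsSmallObject.homology_mem_finPresModules {X : DerivedCategory (ModuleCat.{u} A)}
    (hX : IsSmallObject X) (hA : IsLeftCoherentRing A) (n : ℤ) :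
    (DerivedCategory.homologyFunctor (ModuleCat.{u} A) n).obj X ∈ finPresModules A := by
  have hw := hA.isWideSubcategory_finPresModules
  have : Module.FinitePresentation A A := Module.finitePresentation_of_projective A A
  have ht := hw.isThick_homologyFunctor_mem ⟨ModuleCat.of A A, this⟩
  exact hX _ ht (ht.mem_of_iso (nonempty_unit_obj_iso A).some fun m ↦
    hw.mem_of_iso ((unit A).homologyIso m).symm ((unit A).homology_mem_finPresModules hA A m)) n

/-- The primes at which some object of `D` represented by a complex in `BasedComplex` is nonzero:
localizing at `p` kills `Y.obj` exactly when some `s ∉ p` acts on it by zero. -/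
def supportPrimes (D : Set (DerivedCategory (ModuleCat.{u} A))) : Set (Ideal A) :=
  {p | ∃ Y : BasedComplex A, Y.obj ∈ D ∧ ∀ s ∉ p, ¬ IsNullHomotopic Y Y (s • 1)}

theorem mem_of_homology_mem_supportSubcategory {D : Set (DerivedCategory (ModuleCat.{u} A))}
    (hD : IsThickSubcategory D) {X : DerivedCategory (ModuleCat.{u} A)} (hX : IsSmallObject X)
    (hH : ∀ n, (DerivedCategory.homologyFunctor (ModuleCat.{u} A) n).obj X ∈
      supportSubcategory (supportPrimes D)) : X ∈ D := by
  obtain ⟨P, i, r, hir, hP⟩ := exists_retract_of_isSmallObject hX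
  have hPH := hP _ ((isWideSubcategory_supportSubcategory
    (supportPrimes D)).isThick_homologyFunctor_mem ⟨_, punit_mem_supportSubcategory _⟩) hH
  refine hD.retract_mem _ _ i r hir (obj_mem_of_forall_isPrime hD P fun p hp hnull ↦ ?_)
  by_contra hpD
  obtain ⟨s, hs, hann⟩ := exists_notMem_forall_mem_annihilator_homology P p fun n hn ↦
    hpD (hPH n p hp ((annihilator_eq_of_iso (P.homologyIso n)).trans_le hn))
  obtain ⟨N, hN⟩ := exists_isNullHomotopic_pow_smul_one (hP _ isThick_isSmallObject hX)
    fun n ↦ (annihilator_eq_of_iso (P.homologyIso n)).ge (hann n)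
  exact hnull (s ^ N) (fun h ↦ hs (hp.mem_of_pow_mem _ h)) hN

theorem homology_mem_supportSubcategory {D : Set (DerivedCategory (ModuleCat.{u} A))}
    {X : DerivedCategory (ModuleCat.{u} A)} (hX : IsSmallObject X) (hXD : X ∈ D)
    (hD : IsThickSubcategory D) (n : ℤ) :
    (DerivedCategory.homologyFunctor (ModuleCat.{u} A) n).obj X ∈
      supportSubcategory (supportPrimes D) := by
  intro p _ hle
  obtain ⟨P, i, r, hir, hP⟩ := exists_retract_of_isSmallObject hX
  refine ⟨P, hP D hD hXD, fun s hs hn ↦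
    hs (hle (mem_annihilator_map_of_smul_id_eq_zero _ ?_))⟩
  have hsX : s • 𝟙 X = i ≫ (s • 𝟙 P.obj) ≫ r := by
    rw [Linear.smul_comp, Linear.comp_smul, Category.id_comp, hir]
  rw [hsX, (smul_id_eq_zero_iff P s).2 hn, zero_comp, comp_zero]

theorem exists_mem_wideLatticeFP_fSet_eq (hA : IsLeftCoherentRing A)
    {D : Set (DerivedCategory (ModuleCat.{u} A))} (hD : D ∈ thickLatticeSmall A) :
    ∃ C ∈ wideLatticeFP A, fSet C = D := by
  refine ⟨finPresModules A ∩ supportSubcategory (supportPrimes D),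
    ⟨hA.isWideSubcategory_finPresModules.inter (isWideSubcategory_supportSubcategory _),
      ⟨ModuleCat.of A PUnit.{u + 1}, Module.finitePresentation_of_projective A PUnit.{u + 1},
        punit_mem_supportSubcategory _⟩, Set.inter_subset_left⟩,
    Set.Subset.antisymm (fun X hX ↦ ?_) fun X hX ↦ ?_⟩
  · exact mem_of_homology_mem_supportSubcategory hD.1 hX.1 fun n ↦ (hX.2 n).2
  · have hXs := hD.2 X hX
    exact ⟨hXs, fun n ↦ ⟨hXs.homology_mem_finPresModules hA n,
      homology_mem_supportSubcategory hXs hX hD.1 n⟩⟩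

end SupportClassification

section Splitting

variable {T : Type*} [Category T] [HasZeroObject T] [Preadditive T] [HasShift T ℤ]
  [∀ n : ℤ, (shiftFunctor T n).Additive] [Pretriangulated T]

theorem exists_shift_retraction {X Y Z : T} {i : X ⟶ Y} {r : Y ⟶ X} {α : Y ⟶ Z} {β : Z ⟶ Y⟦(1 : ℤ)⟧}
    (hT : Triangle.mk (𝟙 Y - r ≫ i) α β ∈ distTriang T) (h : i ≫ r = 𝟙 X) :
    ∃ s : X⟦(1 : ℤ)⟧ ⟶ Z, s ≫ β ≫ r⟦(1 : ℤ)⟧' = 𝟙 _ := by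
  obtain ⟨s, hs⟩ : ∃ s, i⟦(1 : ℤ)⟧' = s ≫ β := Triangle.coyoneda_exact₁ _ hT (i⟦(1 : ℤ)⟧') (by
    change i⟦(1 : ℤ)⟧' ≫ (𝟙 Y - r ≫ i)⟦(1 : ℤ)⟧' = 0
    rw [← Functor.map_comp, Preadditive.comp_sub, reassoc_of% h, Category.comp_id, sub_self,
      Functor.map_zero])
  exact ⟨s, by rw [← Category.assoc, ← hs, ← Functor.map_comp, h, CategoryTheory.Functor.map_id]⟩

theorem exists_splitting_of_retract {X Y Z : T} {i : X ⟶ Y} {r : Y ⟶ X} {α : Y ⟶ Z}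
    {β : Z ⟶ Y⟦(1 : ℤ)⟧} (hT : Triangle.mk (𝟙 Y - r ≫ i) α β ∈ distTriang T) (h : i ≫ r = 𝟙 X) :
    ∃ (j : X ⟶ Z) (t : Z ⟶ X⟦(1 : ℤ)⟧) (w : j ≫ t = 0),
      Nonempty (ShortComplex.mk j t w).Splitting := by
  have hα : r ≫ i ≫ α = α := by
    have h₁ : (𝟙 Y - r ≫ i) ≫ α = 0 := comp_distTriang_mor_zero₁₂ _ hT
    rw [Preadditive.sub_comp, Category.id_comp, Category.assoc, sub_eq_zero] at h₁
    exact h₁.symm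
  have hβ : β ≫ r⟦(1 : ℤ)⟧' ≫ i⟦(1 : ℤ)⟧' = β := by
    have h₃ : β ≫ (𝟙 Y - r ≫ i)⟦(1 : ℤ)⟧' = 0 := comp_distTriang_mor_zero₃₁ _ hT
    rw [Functor.map_sub, Preadditive.comp_sub, Functor.map_comp, CategoryTheory.Functor.map_id,
      Category.comp_id, sub_eq_zero] at h₃
    exact h₃.symm
  have hαβ : α ≫ β = 0 := comp_distTriang_mor_zero₂₃ _ hT
  obtain ⟨ρ, hρ⟩ : ∃ ρ, r = α ≫ ρ := Triangle.yoneda_exact₂ _ hT r (by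
    change (𝟙 Y - r ≫ i) ≫ r = 0
    rw [Preadditive.sub_comp, Category.assoc, h, Category.id_comp, Category.comp_id, sub_self])
  obtain ⟨g, hg⟩ : ∃ g, 𝟙 Z - ρ ≫ i ≫ α = β ≫ g := Triangle.yoneda_exact₃ _ hT _ (by
    change α ≫ (𝟙 Z - ρ ≫ i ≫ α) = 0
    rw [Preadditive.comp_sub, ← reassoc_of% hρ, hα, Category.comp_id, sub_self])
  let t := β ≫ r⟦(1 : ℤ)⟧'
  let s := i⟦(1 : ℤ)⟧' ≫ g
  have hts : 𝟙 Z - ρ ≫ i ≫ α = t ≫ s := by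
    rw [hg, Category.assoc, reassoc_of% hβ]
  have hjt : (i ≫ α) ≫ t = 0 := by
    rw [Category.assoc, reassoc_of% hαβ, zero_comp, comp_zero]
  obtain ⟨σ, hσ⟩ := exists_shift_retraction hT h
  have : Epi t := (SplitEpi.mk σ hσ).epi
  refine ⟨i ≫ α, t, hjt, ⟨{ r := ρ, s := s, f_r := ?_, s_g := ?_, id := ?_ }⟩⟩
  · rw [Category.assoc, ← hρ, h]
  · rw [← cancel_epi t, ← reassoc_of% hts, Preadditive.sub_comp, Category.assoc, hjt]
    simp
  · rw [← hts, add_sub_cancel]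

theorem smul_id_eq_zero_of_splitting {R C : Type*} [Semiring R] [Category C] [Preadditive C]
    [Linear R C] {S : ShortComplex C} (h : S.Splitting) {x : R} (h₁ : x • 𝟙 S.X₁ = 0)
    (h₃ : x • 𝟙 S.X₃ = 0) : x • 𝟙 S.X₂ = 0 := by
  have h₁' : x • h.r = 0 := by rw [← Category.comp_id h.r, ← Linear.comp_smul, h₁, comp_zero]
  have h₃' : x • h.s = 0 := by rw [← Category.id_comp h.s, ← Linear.smul_comp, h₃, zero_comp]
  rw [← h.id, smul_add, ← Linear.smul_comp, h₁', ← Linear.comp_smul, h₃', zero_comp, comp_zero,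
    add_zero]

end Splitting

namespace BasedComplex

variable {A : Type u} [CommRing A]

theorem eq_zero_of_isNullHomotopic_unit {s : A} (h : IsNullHomotopic (unit A) (unit A) (s • 1)) :
    s = 0 := by
  obtain ⟨k, hk⟩ := h
  have hd : (unit A).d = 0 := rfl
  rw [hd, Matrix.zero_mul, Matrix.mul_zero, add_zero] at hk
  simpa using congrFun₂ hk () ()

variable [HasDerivedCategory.{w} (ModuleCat.{u} A)]

theorem isSmallObject_obj (P : BasedComplex A) : IsSmallObject P.obj :=
  obj_mem_of_forall_isPrime isThick_isSmallObject P fun p _ _ ↦ ⟨unit A,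
    isThick_isSmallObject.mem_of_iso (nonempty_unit_obj_iso A).some.symm fun _ _ h ↦ h,
    fun _ hs hn ↦ hs (eq_zero_of_isNullHomotopic_unit hn ▸ p.zero_mem)⟩

theorem exists_splitting_of_isSmallObject {X : DerivedCategory (ModuleCat.{u} A)}
    (hX : IsSmallObject X) :
    ∃ (Z : BasedComplex A) (j : X ⟶ Z.obj) (t : Z.obj ⟶ X⟦(1 : ℤ)⟧) (w : j ≫ t = 0),
      Nonempty (ShortComplex.mk j t w).Splitting := by
  obtain ⟨P, i, r, hir, -⟩ := exists_retract_of_isSmallObject hX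
  obtain ⟨f, hf, hc, h⟩ := exists_derivedMap_eq (𝟙 P.obj - r ≫ i)
  obtain ⟨α, β, hT⟩ := exists_cone_distinguished hf hc
  rw [h] at hT
  exact ⟨cone f hf hc, exists_splitting_of_retract hT hir⟩

end BasedComplex

/-! ### Finite projective dimension -/

section ProjectiveDimension

variable {A : Type u} [Ring A]

theorem HasFiniteProjectiveDimension.exists_hasProjectiveDimensionLT {M : ModuleCat.{u} A}
    (hM : HasFiniteProjectiveDimension A M) : ∃ n : ℕ, HasProjectiveDimensionLT M n := by
  obtain ⟨i, hi⟩ := hM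
  let P := projectiveResolution M
  refine ⟨i + 1, (hasProjectiveDimensionLT_iff _ _).2 fun j hj N e ↦ ?_⟩
  obtain ⟨j, rfl⟩ := Nat.exists_eq_add_of_lt hj
  obtain ⟨f, hf, rfl⟩ := P.extMk_surjective e _ rfl
  refine (P.extMk_eq_zero_iff f _ rfl hf _ rfl).2 ?_
  have hExt : IsZero ((P.complex.linearYonedaObj ℤ N).homology (i + j + 1)) := by
    have := hi N (i + j + 1) (by omega)
    exact (ModuleCat.isZero_of_subsingleton _).of_iso (P.isoExt (R := ℤ) (i + j + 1) N).symm
  rw [← HomologicalComplex.exactAt_iff_isZero_homology, HomologicalComplex.exactAt_iff' _ (i + j)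
    (i + j + 1) (i + j + 1 + 1) (by simp) (by simp)] at hExt
  exact (ShortComplex.moduleCat_exact_iff _).1 hExt f hf

variable {𝒩 : Set (ModuleCat.{u} A)}
  (hretract : ∀ {M N : ModuleCat.{u} A} (i : M ⟶ N) (r : N ⟶ M), i ≫ r = 𝟙 M → N ∈ 𝒩 → M ∈ 𝒩)
  (hext : ∀ {S : ShortComplex (ModuleCat.{u} A)}, S.ShortExact → S.X₁ ∈ 𝒩 → S.X₃ ∈ 𝒩 → S.X₂ ∈ 𝒩)
  (hquot : ∀ {S : ShortComplex (ModuleCat.{u} A)}, S.ShortExact → S.X₁ ∈ 𝒩 → S.X₂ ∈ 𝒩 → S.X₃ ∈ 𝒩)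
  (hA : ModuleCat.of A A ∈ 𝒩)

include hretract hext hA

theorem pi_fin_mem_of_extension (n : ℕ) : ModuleCat.of A (Fin n → A) ∈ 𝒩 := by
  induction n with
  | zero => exact hretract 0 0 ((ModuleCat.isZero_of_subsingleton _).eq_of_src _ _) hA
  | succ n ih =>
    have hprod : ModuleCat.of A (A × (Fin n → A)) ∈ 𝒩 :=
      hext (ModuleCat.shortComplex_shortExact (ModuleCat.shortComplexOfCompEqZero
        (LinearMap.inl A A (Fin n → A)) (LinearMap.snd A A (Fin n → A))
        (LinearMap.snd_comp_inl _ _ _)) Function.Exact.inl_snd LinearMap.inl_injective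
        LinearMap.snd_surjective) hA ih
    let e : ModuleCat.of A (A × (Fin n → A)) ≅ ModuleCat.of A (Fin (n + 1) → A) :=
      (Fin.consLinearEquiv A (fun _ ↦ A)).toModuleIso
    exact hretract e.inv e.hom e.inv_hom_id hprod

include hquot

theorem mem_of_hasProjectiveDimensionLT_succ (hcoh : IsLeftCoherentRing A) (n : ℕ)
    {M : ModuleCat.{u} A} (hM : M ∈ finPresModules A)
    (hn : HasProjectiveDimensionLT M (n + 1)) : M ∈ 𝒩 := by
  induction n generalizing M with
  | zero =>
    have : Module.FinitePresentation A M := hM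
    obtain ⟨k, f, hf⟩ := Module.Finite.exists_fin' A M
    have : Projective M := projective_iff_hasProjectiveDimensionLT_one.2 hn
    have : Epi (ModuleCat.ofHom f) := (ModuleCat.epi_iff_surjective _).2 hf
    exact hretract (Projective.factorThru (𝟙 M) (ModuleCat.ofHom f)) (ModuleCat.ofHom f)
      (Projective.factorThru_comp _ _) (pi_fin_mem_of_extension hretract hext hA k)
  | succ n ih =>
    have : Module.FinitePresentation A M := hM
    obtain ⟨k, f, hf⟩ := Module.Finite.exists_fin' A M
    have hS : (ModuleCat.shortComplexOfCompEqZero (LinearMap.ker f).subtype f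
        (LinearMap.comp_ker_subtype f)).ShortExact :=
      ModuleCat.shortComplex_shortExact _ (LinearMap.exact_subtype_ker_map f)
        (Submodule.subtype_injective _) hf
    have hker : ModuleCat.of A (LinearMap.ker f) ∈ finPresModules A :=
      hcoh.isPseudoCoherentModule _ _ ((hcoh.isPseudoCoherentModule M).fg_ker f)
    have : Projective (ModuleCat.of A (Fin k → A)) :=
      (IsProjective.iff_projective _).1 inferInstance
    exact hquot hS (ih hker (hS.hasProjectiveDimensionLT_X₁ (n + 1)
      (hasProjectiveDimensionLT_of_ge (ModuleCat.of A (Fin k → A)) 1 _ (by omega)) hn))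
      (pi_fin_mem_of_extension hretract hext hA k)

theorem mem_of_hasFiniteProjectiveDimension (hcoh : IsLeftCoherentRing A)
    {M : ModuleCat.{u} A} (hM : M ∈ finPresModules A) (hpd : HasFiniteProjectiveDimension A M) :
    M ∈ 𝒩 := by
  obtain ⟨n, hn⟩ := hpd.exists_hasProjectiveDimensionLT
  exact mem_of_hasProjectiveDimensionLT_succ hretract hext hquot hA hcoh n hM
    (hasProjectiveDimensionLT_of_ge M n _ n.le_succ)

end ProjectiveDimension

/-! ### Quotient rings -/

section EssentialImage

variable {A B : Type*} [Category A] [Category B] (F : A ⥤ B) {C : Set A}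

/-- The essential image of a full subcategory `C`, given as a set of objects, under `F`. -/
def essentialImage (C : Set A) : Set B :=
  {Y | ∃ X ∈ C, Nonempty (F.obj X ≅ Y)}

variable {F}

theorem mem_essentialImage_of_iso {X Y : B} (e : X ≅ Y) (hX : X ∈ essentialImage F C) :
    Y ∈ essentialImage F C := by
  obtain ⟨X', hX', ⟨e'⟩⟩ := hX
  exact ⟨X', hX', ⟨e' ≪≫ e⟩⟩

namespace IsWideSubcategory

variable [Abelian A] [F.Full] (hC : IsWideSubcategory C)
include hC

theorem mem_of_obj_mem_essentialImage [F.Faithful] {X : A} (hX : F.obj X ∈ essentialImage F C) :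
    X ∈ C := by
  obtain ⟨Y, hY, ⟨e⟩⟩ := hX
  exact hC.mem_of_iso (F.preimageIso e) hY

variable [Abelian B]

theorem kernel_mem_essentialImage [PreservesFiniteLimits F] {X Y : B} (f : X ⟶ Y)
    (hX : X ∈ essentialImage F C) (hY : Y ∈ essentialImage F C) :
    kernel f ∈ essentialImage F C := by
  obtain ⟨X', hX', ⟨e⟩⟩ := hX
  obtain ⟨Y', hY', ⟨e'⟩⟩ := hY
  exact ⟨kernel (F.preimage (e.hom ≫ f ≫ e'.inv)), hC.kernel_mem _ hX' hY',
    ⟨PreservesKernel.iso F _ ≪≫ kernel.mapIso _ _ e e' (by simp)⟩⟩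

theorem cokernel_mem_essentialImage [F.PreservesZeroMorphisms] [PreservesFiniteColimits F]
    {X Y : B} (f : X ⟶ Y) (hX : X ∈ essentialImage F C) (hY : Y ∈ essentialImage F C) :
    cokernel f ∈ essentialImage F C := by
  obtain ⟨X', hX', ⟨e⟩⟩ := hX
  obtain ⟨Y', hY', ⟨e'⟩⟩ := hY
  exact ⟨cokernel (F.preimage (e.hom ≫ f ≫ e'.inv)), hC.cokernel_mem _ hX' hY',
    ⟨PreservesCokernel.iso F _ ≪≫ cokernel.mapIso _ _ e e' (by simp)⟩⟩

theorem retract_mem_essentialImage [PreservesFiniteLimits F] {X Y : B} (i : X ⟶ Y) (r : Y ⟶ X)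
    (h : i ≫ r = 𝟙 X) (hY : Y ∈ essentialImage F C) : X ∈ essentialImage F C :=
  mem_essentialImage_of_iso (kernelIsoOfRetract i r h) (hC.kernel_mem_essentialImage _ hY hY)

theorem extension_mem_essentialImage [F.Faithful] [F.PreservesHomology] {S : ShortComplex B}
    (hS : S.ShortExact) (h₁ : S.X₁ ∈ essentialImage F C) (h₂ : F.essImage S.X₂)
    (h₃ : S.X₃ ∈ essentialImage F C) : S.X₂ ∈ essentialImage F C := by
  obtain ⟨X₁, hX₁, ⟨e₁⟩⟩ := h₁
  obtain ⟨X₂, ⟨e₂⟩⟩ := h₂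
  obtain ⟨X₃, hX₃, ⟨e₃⟩⟩ := h₃
  let T := ShortComplex.mk (F.preimage (e₁.hom ≫ S.f ≫ e₂.inv))
    (F.preimage (e₂.hom ≫ S.g ≫ e₃.inv)) (F.map_injective (by simp))
  let e : T.map F ≅ S := ShortComplex.isoMk e₁ e₂ e₃
    (((F.map_preimage _).symm ▸ by simp : e₁.hom ≫ S.f = F.map T.f ≫ e₂.hom))
    (((F.map_preimage _).symm ▸ by simp : e₂.hom ≫ S.g = F.map T.g ≫ e₃.hom))
  have hTF : (T.map F).ShortExact := ShortComplex.shortExact_of_iso e.symm hS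
  have hT : T.ShortExact :=
    { exact := (T.exact_map_iff_of_faithful F).1 hTF.exact
      mono_f := F.mono_of_mono_map hTF.mono_f
      epi_g := F.epi_of_epi_map hTF.epi_g }
  exact ⟨X₂, hC.extension_mem T hT hX₁ hX₃, ⟨e₂⟩⟩

/-- An essential image need not be closed under extensions, so the middle term has to be in the
essential image of `F`. -/
theorem exact_five_mem_essentialImage [F.Faithful] [PreservesFiniteLimits F]
    [PreservesFiniteColimits F] {A₁ A₂ A₃ A₄ A₅ : B} {f₁ : A₁ ⟶ A₂} {f₂ : A₂ ⟶ A₃} {f₃ : A₃ ⟶ A₄}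
    {f₄ : A₄ ⟶ A₅} {w₁ : f₁ ≫ f₂ = 0} {w₂ : f₂ ≫ f₃ = 0} {w₃ : f₃ ≫ f₄ = 0}
    (e₁ : (ShortComplex.mk _ _ w₁).Exact) (e₂ : (ShortComplex.mk _ _ w₂).Exact)
    (e₃ : (ShortComplex.mk _ _ w₃).Exact)
    (h₁ : A₁ ∈ essentialImage F C) (h₂ : A₂ ∈ essentialImage F C) (h₃ : F.essImage A₃)
    (h₄ : A₄ ∈ essentialImage F C) (h₅ : A₅ ∈ essentialImage F C) : A₃ ∈ essentialImage F C := by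
  obtain ⟨_, _, _, hS⟩ := exists_shortExact_cokernel_kernel e₁ e₂ e₃
  exact hC.extension_mem_essentialImage hS (hC.cokernel_mem_essentialImage _ h₁ h₂) h₃
    (hC.kernel_mem_essentialImage _ h₄ h₅)

end IsWideSubcategory

end EssentialImage

section RestrictScalars

variable {A : Type u} [CommRing A] (a : Ideal A)

instance full_restrictScalars_quotientMk :
    (ModuleCat.restrictScalars.{u} (Ideal.Quotient.mk a)).Full where
  map_surjective {M N} g :=
    ⟨ModuleCat.ofHom (X := M) (Y := N)
      { toFun := g.hom
        map_add' := g.hom.map_add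
        map_smul' := Ideal.Quotient.mk_surjective.forall.2 g.hom.map_smul }, rfl⟩

variable {a}

theorem essImage_restrictScalars_quotientMk {N : ModuleCat.{u} A}
    (hN : a ≤ Module.annihilator A N) :
    (ModuleCat.restrictScalars.{u} (Ideal.Quotient.mk a)).essImage N := by
  have h : Module.IsTorsionBySet A N a := fun n x ↦ Module.mem_annihilator.1 (hN x.2) n
  let := h.module
  let e : (ModuleCat.restrictScalars.{u} (Ideal.Quotient.mk a)).obj (ModuleCat.of (A ⧸ a) N) ≃ₗ[A]
      N := { AddEquiv.refl N with map_smul' := fun _ _ ↦ rfl }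
  exact ⟨ModuleCat.of (A ⧸ a) N, ⟨e.toModuleIso⟩⟩

end RestrictScalars

section Coefficients

namespace BasedComplex

variable {A : Type u} [CommRing A] (P : BasedComplex A)

section CoeffMap

variable (N : Type u) [AddCommGroup N] [Module A N] {N' N'' : Type u} [AddCommGroup N']
  [Module A N'] [AddCommGroup N''] [Module A N'']

@[simp]
theorem coeffMap_id : P.coeffMap (LinearMap.id : N →ₗ[A] N) = 𝟙 _ := rfl

variable {N}

theorem coeffMap_comp (φ : N →ₗ[A] N') (ψ : N' →ₗ[A] N'') :
    P.coeffMap φ ≫ P.coeffMap ψ = P.coeffMap (ψ ∘ₗ φ) := rfl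

@[simp]
theorem coeffMap_zero : P.coeffMap (0 : N →ₗ[A] N') = 0 := rfl

end CoeffMap

theorem le_annihilator_homology {a : Ideal A} (hP : ∀ x ∈ a, IsNullHomotopic P P (x • 1))
    (N : Type u) [AddCommGroup N] [Module A N] (n : ℤ) :
    a ≤ Module.annihilator A ((P.complex N).homology n) := by
  intro x hx
  have hf := P.isHomogeneous_one.smul x
  have hc : P.d * (x • (1 : Matrix P.ι P.ι A)) = (x • (1 : Matrix P.ι P.ι A)) * P.d := by simp
  obtain ⟨h⟩ := (hP x hx).nonempty_homotopy hf hc N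
  have hmap : complexMap N _ hf hc = x • 𝟙 (P.complex N) := by
    rw [complexMap_smul x 1 P.isHomogeneous_one (by simp), complexMap_one]
  have hzero := h.homologyMap_eq n
  rw [hmap, HomologicalComplex.homologyMap_zero] at hzero
  rw [mem_annihilator_iff_smul_id_eq_zero, ← hzero]
  exact (((HomologicalComplex.homologyFunctor _ _ n).map_smul _ _).trans
    (congrArg (x • ·) (CategoryTheory.Functor.map_id _ _))).symm

/-- The short complex of complexes obtained from `P` by varying the coefficients along `S`. -/
noncomputable def coeffShortComplex (S : ShortComplex (ModuleCat.{u} A)) :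
    ShortComplex (CochainComplex (ModuleCat.{u} A) ℤ) :=
  ShortComplex.mk (P.coeffMap S.f.hom) (P.coeffMap S.g.hom) (by
    rw [coeffMap_comp, ← ModuleCat.hom_comp, S.zero, ModuleCat.hom_zero, coeffMap_zero])

theorem coeffShortComplex_shortExact {S : ShortComplex (ModuleCat.{u} A)} (hS : S.ShortExact) :
    (P.coeffShortComplex S).ShortExact := by
  have hexact := (ShortComplex.ShortExact.moduleCat_exact_iff_function_exact S).1 hS.exact
  refine HomologicalComplex.shortExact_of_degreewise_shortExact _ fun n ↦
    ModuleCat.shortComplex_shortExact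
      ((P.coeffShortComplex S).map (HomologicalComplex.eval _ _ n)) (fun v ↦ ?_) ?_ ?_
  · constructor
    · intro h
      choose w hw using fun i ↦ (hexact (v i)).1 (congrFun h i)
      exact ⟨w, funext hw⟩
    · rintro ⟨w, rfl⟩
      exact funext fun i ↦ (hexact _).2 ⟨w i, rfl⟩
  · exact hS.moduleCat_injective_f.comp_left
  · exact hS.moduleCat_surjective_g.comp_left

theorem homology_mem_essentialImage {a : Ideal A} {C : Set (ModuleCat.{u} (A ⧸ a))}
    (hC : IsWideSubcategory C) (hP : ∀ x ∈ a, IsNullHomotopic P P (x • 1))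
    (hPA : ∀ n, (P.complex A).homology n ∈
      essentialImage (ModuleCat.restrictScalars.{u} (Ideal.Quotient.mk a)) C)
    (hcoh : IsLeftCoherentRing A) {M : ModuleCat.{u} A} (hM : M ∈ finPresModules A)
    (hpd : HasFiniteProjectiveDimension A M) (n : ℤ) :
    (P.complex M).homology n ∈
      essentialImage (ModuleCat.restrictScalars.{u} (Ideal.Quotient.mk a)) C := by
  have himage (N : Type u) [AddCommGroup N] [Module A N] (n : ℤ) :=
    essImage_restrictScalars_quotientMk (P.le_annihilator_homology hP N n)
  refine mem_of_hasFiniteProjectiveDimension (𝒩 := {N | ∀ n, (P.complex N).homology n ∈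
    essentialImage (ModuleCat.restrictScalars (Ideal.Quotient.mk a)) C}) ?_ ?_ ?_ hPA hcoh hM hpd n
  · intro M N i r hir hN n
    refine hC.retract_mem_essentialImage (HomologicalComplex.homologyMap (P.coeffMap i.hom) n)
      (HomologicalComplex.homologyMap (P.coeffMap r.hom) n) ?_ (hN n)
    rw [← HomologicalComplex.homologyMap_comp, coeffMap_comp, ← ModuleCat.hom_comp, hir,
      ModuleCat.hom_id, coeffMap_id, HomologicalComplex.homologyMap_id]
  · intro S hS h₁ h₃ n
    have H := P.coeffShortComplex_shortExact hS
    exact hC.exact_five_mem_essentialImage (H.homology_exact₁ (n - 1) n (by simp))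
      (H.homology_exact₂ n) (H.homology_exact₃ n (n + 1) (by simp))
      (h₃ _) (h₁ _) (himage _ _) (h₃ _) (h₁ _)
  · intro S hS h₁ h₂ n
    have H := P.coeffShortComplex_shortExact hS
    exact hC.exact_five_mem_essentialImage (H.homology_exact₂ n)
      (H.homology_exact₃ n (n + 1) (by simp)) (H.homology_exact₁ n (n + 1) (by simp))
      (h₁ _) (h₂ _) (himage _ _) (h₁ _) (h₂ _)

end BasedComplex

end Coefficients

section BaseChange

namespace BasedComplex

variable {A : Type u} [CommRing A] (P : BasedComplex A) (B : Type u) [CommRing B] [Algebra A B]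

/-- The base change of a based complex along `A → B`. -/
def baseChange : BasedComplex B where
  ι := P.ι
  fin := P.fin
  dec := P.dec
  deg := P.deg
  d := P.d.map (algebraMap A B)
  d_sq := by rw [← Matrix.map_mul, P.d_sq, Matrix.map_zero _ (map_zero _)]
  d_deg i j h := by rw [Matrix.map_apply, P.d_deg i j h, map_zero]

/-- The base change `P ⊗ B`, with its scalars restricted to `A`, is `P` with coefficients `B`. -/
noncomputable def baseChangeComplexIso :
    ((ModuleCat.restrictScalars (algebraMap A B)).mapHomologicalComplex _).obj
      ((P.baseChange B).complex B) ≅ P.complex B :=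
  HomologicalComplex.Hom.isoOfComponents
    (fun n ↦
      let e : (ModuleCat.restrictScalars (algebraMap A B)).obj
          (ModuleCat.of B ({i // P.deg i = n} → B)) ≃ₗ[A] ({i // P.deg i = n} → B) :=
        { AddEquiv.refl _ with
          map_smul' := fun r v ↦ funext fun i ↦ (Algebra.smul_def r (v i)).symm }
      e.toModuleIso)
    (fun _ _ _ ↦ ModuleCat.hom_ext <| LinearMap.ext fun _ ↦ funext fun _ ↦
      Finset.sum_congr rfl fun _ _ ↦ Algebra.smul_def _ _)

/-- The homology of `P ⊗ B` over `B`, with its scalars restricted to `A`, is the homology of `P`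
with coefficients `B`. -/
noncomputable def baseChangeHomologyIso (n : ℤ) :
    (ModuleCat.restrictScalars (algebraMap A B)).obj (((P.baseChange B).complex B).homology n) ≅
      (P.complex B).homology n :=
  (ShortComplex.mapHomologyIso (((P.baseChange B).complex B).sc n)
    (ModuleCat.restrictScalars (algebraMap A B))).symm ≪≫
    HomologicalComplex.homologyMapIso (P.baseChangeComplexIso B) n

end BasedComplex

end BaseChange

section SingleFunctor

open DerivedCategory

section Homology

variable {A : Type*} [Category A] [Abelian A] [HasDerivedCategory A]

/-- The homology in degree `0` of an object placed in degree `0` is that object. -/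
noncomputable def homologySingleIso (N : A) :
    (homologyFunctor A 0).obj ((singleFunctor A 0).obj N) ≅ N :=
  (homologyFunctorFactors A 0).app ((CochainComplex.singleFunctor A 0).obj N) ≪≫
    HomologicalComplex.singleObjHomologySelfIso (ComplexShape.up ℤ) 0 N

theorem isZero_homology_single (N : A) {n : ℤ} (hn : n ≠ 0) :
    IsZero ((homologyFunctor A n).obj ((singleFunctor A 0).obj N)) :=
  (HomologicalComplex.isZero_single_obj_homology (ComplexShape.up ℤ) 0 N n hn).of_iso
    ((homologyFunctorFactors A n).app ((CochainComplex.singleFunctor A 0).obj N))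

end Homology

theorem isSmallObject_singleFunctor {A : Type u} [Ring A] [HasDerivedCategory.{w} (ModuleCat.{u} A)]
    (hcoh : IsLeftCoherentRing A) {M : ModuleCat.{u} A} (hM : M ∈ finPresModules A)
    (hpd : HasFiniteProjectiveDimension A M) :
    IsSmallObject ((singleFunctor (ModuleCat.{u} A) 0).obj M) :=
  mem_of_hasFiniteProjectiveDimension (𝒩 := {N | IsSmallObject ((singleFunctor _ 0).obj N)})
    (fun i r h hN ↦ isThick_isSmallObject.retract_mem _ _ ((singleFunctor _ 0).map i)
      ((singleFunctor _ 0).map r)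
      (by rw [← Functor.map_comp, h, CategoryTheory.Functor.map_id]) hN)
    (fun hS h₁ h₃ ↦ isThick_isSmallObject.ext₂ _ hS.singleTriangle_distinguished h₁ h₃)
    (fun hS h₁ h₂ ↦ isThick_isSmallObject.ext₃ _ hS.singleTriangle_distinguished h₁ h₂)
    (fun _ _ h ↦ h) hcoh hM hpd

variable {A : Type u} [CommRing A] {a : Ideal A}

theorem le_annihilator_single_X {N : ModuleCat.{u} A} (hN : a ≤ Module.annihilator A N) (n : ℤ) :
    a ≤ Module.annihilator A (((CochainComplex.singleFunctor (ModuleCat.{u} A) 0).obj N).X n) := by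
  by_cases hn : n = 0
  · subst hn
    exact hN.trans (annihilator_eq_of_iso
      (HomologicalComplex.singleObjXSelf (ComplexShape.up ℤ) 0 N)).ge
  · have := ModuleCat.subsingleton_of_isZero
      (HomologicalComplex.isZero_single_obj_X (ComplexShape.up ℤ) 0 N n hn)
    exact fun x _ ↦ Module.mem_annihilator.2 fun m ↦
      Subsingleton.elim (α := ((HomologicalComplex.single _ (ComplexShape.up ℤ) 0).obj N).X n) _ _

theorem le_annihilator_of_mem_essentialImage {C : Set (ModuleCat.{u} (A ⧸ a))}
    {N : ModuleCat.{u} A}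
    (hN : N ∈ essentialImage (ModuleCat.restrictScalars.{u} (Ideal.Quotient.mk a)) C) :
    a ≤ Module.annihilator A N := by
  obtain ⟨M, -, ⟨e⟩⟩ := hN
  rw [← annihilator_eq_of_iso e]
  exact fun x hx ↦ Module.mem_annihilator.2 fun m ↦ show Ideal.Quotient.mk a x • (m : M) = 0 by
    rw [Ideal.Quotient.eq_zero_iff_mem.2 hx, zero_smul]

variable [HasDerivedCategory.{w} (ModuleCat.{u} A)]

theorem smul_id_single_eq_zero {N : ModuleCat.{u} A} {x : A} (hx : x ∈ Module.annihilator A N) :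
    x • 𝟙 ((singleFunctor (ModuleCat.{u} A) 0).obj N) = 0 := by
  rw [← CategoryTheory.Functor.map_id, ← Functor.map_smul,
    mem_annihilator_iff_smul_id_eq_zero.1 hx, Functor.map_zero]

end SingleFunctor

section Reflection

namespace BasedComplex

variable {A : Type u} [CommRing A] {a : Ideal A}

theorem exists_coeffMap_mkQ_comp_eq (P : BasedComplex A) {L : CochainComplex (ModuleCat.{u} A) ℤ}
    (hL : ∀ n, a ≤ Module.annihilator A (L.X n)) (ρ : P.complex A ⟶ L) :
    ∃ ρ' : P.complex (A ⧸ a) ⟶ L, P.coeffMap (Submodule.mkQ a) ≫ ρ' = ρ := by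
  let q := P.coeffMap (Submodule.mkQ a)
  have hepi (n : ℤ) : Epi (q.f n) :=
    (ModuleCat.epi_iff_surjective _).2 (Submodule.mkQ_surjective a).comp_left
  have : Epi q := HomologicalComplex.epi_of_epi_f _ hepi
  have hker (n : ℤ) (v : {i // P.deg i = n} → A) (hv : q.f n v = 0) : ρ.f n v = 0 := by
    let g : ({i // P.deg i = n} → A) →ₗ[A] L.X n := (ρ.f n).hom
    change g v = 0
    rw [pi_eq_sum_univ' v, map_sum]
    refine Finset.sum_eq_zero fun i _ ↦ ?_
    rw [map_smul]
    exact Module.mem_annihilator.1 (hL n ((Submodule.Quotient.mk_eq_zero a).1 (congrFun hv i))) _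
  have hzero : kernel.ι q ≫ ρ = 0 := by
    ext1 n
    refine ModuleCat.hom_ext (LinearMap.ext fun v ↦ hker n ((kernel.ι q).f n v) ?_)
    exact congrArg (fun φ ↦ ModuleCat.Hom.hom (HomologicalComplex.Hom.f φ n) v) (kernel.condition q)
  exact ⟨Abelian.epiDesc q ρ hzero, Abelian.comp_epiDesc _ _ _⟩

theorem baseChange_obj_mem_fSet_iff {P : BasedComplex A}
    [HasDerivedCategory.{w} (ModuleCat.{u} (A ⧸ a))] {C : Set (ModuleCat.{u} (A ⧸ a))}
    (hC : IsWideSubcategory C) :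
    (P.baseChange (A ⧸ a)).obj ∈ fSet C ↔ ∀ n, (P.complex (A ⧸ a)).homology n ∈
      essentialImage (ModuleCat.restrictScalars.{u} (Ideal.Quotient.mk a)) C := by
  constructor
  · exact fun h n ↦ ⟨_, hC.mem_of_iso ((P.baseChange _).homologyIso n) (h.2 n),
      ⟨P.baseChangeHomologyIso _ n⟩⟩
  · exact fun h ↦ ⟨isSmallObject_obj _, fun n ↦ hC.mem_of_iso
      ((P.baseChange _).homologyIso n).symm (IsWideSubcategory.mem_of_obj_mem_essentialImage
        (F := ModuleCat.restrictScalars (Ideal.Quotient.mk a)) hC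
        (mem_essentialImage_of_iso (P.baseChangeHomologyIso _ n).symm (h n)))⟩

end BasedComplex

theorem IsWideSubcategory.homology_single_mem_essentialImage {A B : Type*} [Category A]
    [Abelian A] [Category B] [Abelian B] [HasDerivedCategory B] {F : A ⥤ B} [F.Full]
    [PreservesFiniteLimits F] {C : Set A} (hC : IsWideSubcategory C) {N : B}
    (hN : N ∈ essentialImage F C) (n : ℤ) :
    (DerivedCategory.homologyFunctor B n).obj ((DerivedCategory.singleFunctor B 0).obj N) ∈
      essentialImage F C := by
  obtain rfl | hn := eq_or_ne n 0
  · exact mem_essentialImage_of_iso (homologySingleIso N).symm hN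
  · exact hC.retract_mem_essentialImage 0 0 ((isZero_homology_single N hn).eq_of_src _ _) hN

namespace BasedComplex

variable {A : Type u} [CommRing A] [HasDerivedCategory.{w} (ModuleCat.{u} A)] {a : Ideal A}
  {N : ModuleCat.{u} A} {Z : BasedComplex A}

section Splitting

variable {j : (DerivedCategory.singleFunctor (ModuleCat.{u} A) 0).obj N ⟶ Z.obj}
  {t : Z.obj ⟶ ((DerivedCategory.singleFunctor (ModuleCat.{u} A) 0).obj N)⟦(1 : ℤ)⟧}
  {w : j ≫ t = 0} (h : (ShortComplex.mk j t w).Splitting)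
include h

theorem isNullHomotopic_smul_one_of_splitting (hN : a ≤ Module.annihilator A N) {x : A}
    (hx : x ∈ a) : IsNullHomotopic Z Z (x • 1) := by
  have h₁ := smul_id_single_eq_zero (hN hx)
  refine (smul_id_eq_zero_iff Z x).1 (smul_id_eq_zero_of_splitting h h₁ ?_)
  rw [← CategoryTheory.Functor.map_id, ← Functor.map_smul, h₁, Functor.map_zero]

theorem homology_mem_essentialImage_of_splitting {C : Set (ModuleCat.{u} (A ⧸ a))}
    (hC : IsWideSubcategory C)
    (hN : N ∈ essentialImage (ModuleCat.restrictScalars.{u} (Ideal.Quotient.mk a)) C) (n : ℤ) :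
    (Z.complex A).homology n ∈
      essentialImage (ModuleCat.restrictScalars.{u} (Ideal.Quotient.mk a)) C := by
  have hnull (x) (hx : x ∈ a) :=
    isNullHomotopic_smul_one_of_splitting h (le_annihilator_of_mem_essentialImage hN) hx
  obtain ⟨M, ⟨e⟩⟩ := essImage_restrictScalars_quotientMk (Z.le_annihilator_homology hnull A n)
  refine mem_essentialImage_of_iso (Z.homologyIso n) (hC.extension_mem_essentialImage
    (h.map (DerivedCategory.homologyFunctor (ModuleCat.{u} A) n)).shortExact
    (hC.homology_single_mem_essentialImage hN n) ⟨M, ⟨e ≪≫ (Z.homologyIso n).symm⟩⟩ ?_)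
  exact mem_essentialImage_of_iso (((DerivedCategory.homologyFunctor (ModuleCat.{u} A) 0).shiftIso
    1 n (1 + n) rfl).app _).symm (hC.homology_single_mem_essentialImage hN (1 + n))

end Splitting

theorem exists_retract_homology_quotient
    {j : (DerivedCategory.singleFunctor (ModuleCat.{u} A) 0).obj N ⟶ Z.obj}
    {r : Z.obj ⟶ (DerivedCategory.singleFunctor (ModuleCat.{u} A) 0).obj N} (hjr : j ≫ r = 𝟙 _)
    (hN : a ≤ Module.annihilator A N) :
    ∃ (i : N ⟶ (Z.complex (A ⧸ a)).homology 0) (p : (Z.complex (A ⧸ a)).homology 0 ⟶ N),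
      i ≫ p = 𝟙 N := by
  let L := (CochainComplex.singleFunctor (ModuleCat.{u} A) 0).obj N
  obtain ⟨ρ, hρ⟩ := exists_Q_map_eq Z L r
  obtain ⟨ρ', hρ'⟩ := Z.exists_coeffMap_mkQ_comp_eq (le_annihilator_single_X hN) ρ
  let Q := DerivedCategory.Q (C := ModuleCat.{u} A)
  let H := DerivedCategory.homologyFunctor (ModuleCat.{u} A) 0
  let G := HomologicalComplex.homologyFunctor (ModuleCat.{u} A) (ComplexShape.up ℤ) 0
  let α (K) : H.obj (Q.obj K) ≅ G.obj K := (DerivedCategory.homologyFunctorFactors _ 0).app K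
  let j' : Q.obj L ⟶ Q.obj (Z.complex A) := j
  have hj' : j' ≫ Q.map ρ = 𝟙 _ := (congrArg (j ≫ ·) hρ).trans hjr
  have hα : (α (Z.complex A)).hom ≫ G.map ρ = H.map (Q.map ρ) ≫ (α L).hom :=
    ((DerivedCategory.homologyFunctorFactors _ 0).hom.naturality ρ).symm
  let e : H.obj (Q.obj L) ≅ N := homologySingleIso N
  let c := G.map (Z.coeffMap (Submodule.mkQ a))
  let p : G.obj (Z.complex (A ⧸ a)) ⟶ G.obj L := G.map ρ'
  have hcp : c ≫ p = G.map ρ := by rw [← G.map_comp, hρ']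
  suffices h : (e.inv ≫ H.map j' ≫ (α _).hom ≫ c) ≫ p ≫ (α L).inv ≫ e.hom = 𝟙 N from ⟨_, _, h⟩
  calc _ = e.inv ≫ H.map j' ≫ (α _).hom ≫ (c ≫ p) ≫ (α L).inv ≫ e.hom := by
        simp only [Category.assoc]
    _ = e.inv ≫ H.map (j' ≫ Q.map ρ) ≫ e.hom := by
        rw [hcp, reassoc_of% hα, Iso.hom_inv_id_assoc, H.map_comp, Category.assoc]
    _ = 𝟙 N := by rw [hj', H.map_id, Category.id_comp, e.inv_hom_id]

end BasedComplex

variable {A : Type u} [CommRing A] {a : Ideal A}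

theorem restrictScalars_mem_finPresModules (ha : a.FG) {M : ModuleCat.{u} (A ⧸ a)}
    (hM : M ∈ finPresModules (A ⧸ a)) :
    (ModuleCat.restrictScalars.{u} (Ideal.Quotient.mk a)).obj M ∈ finPresModules A := by
  let : Module A M := Module.compHom M (Ideal.Quotient.mk a)
  have : IsScalarTower A (A ⧸ a) M := .of_algebraMap_smul fun _ _ ↦ rfl
  have : Module.FinitePresentation A (A ⧸ a) := finitePresentation_quotient ha
  have : Module.FinitePresentation (A ⧸ a) M := hM
  exact Module.FinitePresentation.trans A M (A ⧸ a)

theorem subset_of_fSet_subset_fSet [HasDerivedCategory.{w} (ModuleCat.{u} (A ⧸ a))]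
    (hcoh : IsLeftCoherentRing A)
    (hreg : ∀ M : ModuleCat.{u} A, Module.FinitePresentation A M → HasFiniteProjectiveDimension A M)
    (ha : a.FG) {C₁ C₂ : Set (ModuleCat.{u} (A ⧸ a))} (h₁ : IsWideSubcategory C₁)
    (hfp : C₁ ⊆ finPresModules (A ⧸ a)) (h₂ : IsWideSubcategory C₂) (h : fSet C₁ ⊆ fSet C₂) :
    C₁ ⊆ C₂ := by
  intro M hM
  let := HasDerivedCategory.standard (ModuleCat.{u} A)
  let N := (ModuleCat.restrictScalars.{u} (Ideal.Quotient.mk a)).obj M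
  have hN : N ∈ essentialImage (ModuleCat.restrictScalars.{u} (Ideal.Quotient.mk a)) C₁ :=
    ⟨M, hM, ⟨Iso.refl _⟩⟩
  have hNa := le_annihilator_of_mem_essentialImage hN
  have hNfp := restrictScalars_mem_finPresModules ha (hfp hM)
  obtain ⟨Z, j, t, w, ⟨s⟩⟩ := BasedComplex.exists_splitting_of_isSmallObject
    (isSmallObject_singleFunctor hcoh hNfp (hreg N hNfp))
  have hq : ModuleCat.of A (A ⧸ a) ∈ finPresModules A := finitePresentation_quotient ha
  have hZ₁ : (Z.baseChange (A ⧸ a)).obj ∈ fSet C₁ :=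
    (BasedComplex.baseChange_obj_mem_fSet_iff h₁).2 (Z.homology_mem_essentialImage h₁
      (fun x hx ↦ BasedComplex.isNullHomotopic_smul_one_of_splitting s hNa hx)
      (BasedComplex.homology_mem_essentialImage_of_splitting s h₁ hN) hcoh hq (hreg _ hq))
  have hZ₂ := (BasedComplex.baseChange_obj_mem_fSet_iff h₂).1 (h hZ₁)
  obtain ⟨i, p, hip⟩ := BasedComplex.exists_retract_homology_quotient s.f_r hNa
  exact h₂.mem_of_obj_mem_essentialImage (h₂.retract_mem_essentialImage i p hip (hZ₂ 0))

end Reflection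

theorem classification_quotient_of_regular_general (R₀ : Type u) [CommRing R₀]
    (hcoh : IsLeftCoherentRing R₀)
    (hreg : ∀ M : ModuleCat.{u} R₀, Module.FinitePresentation R₀ M →
      HasFiniteProjectiveDimension R₀ M)
    (a : Ideal R₀) (ha : a.FG)
    [HasDerivedCategory.{w} (ModuleCat.{u} (R₀ ⧸ a))] :
    fIsLatticeIso (R₀ ⧸ a) ∧
    (∀ (B : Type u) [CommRing B] [IsNoetherianRing B] (C : Set (ModuleCat.{u} B)),
      IsWideSubcategory C → (∀ M ∈ C, Module.Finite B M) →
        ∀ M ∈ C, ∀ N : Submodule B M, ModuleCat.of B N ∈ C) := by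
  refine ⟨⟨fun C hC ↦ ?mapsTo, fun C₁ h₁ C₂ h₂ ↦ ⟨fun h ↦ ?reflects, fun h ↦ ?preserves⟩,
    fun D hD ↦ ?surjective⟩, fun B _ _ C hC hfin M hM N ↦ ?serre⟩
  case mapsTo => exact ⟨hC.1.isThick_fSet hC.2.1, fun X hX ↦ hX.1⟩
  case reflects => exact subset_of_fSet_subset_fSet hcoh hreg ha h₁.1 h₁.2.2 h₂.1 h
  case preserves => exact fun X hX ↦ ⟨hX.1, fun n ↦ h (hX.2 n)⟩
  case surjective => exact exists_mem_wideLatticeFP_fSet_eq (hcoh.quotient ha) hD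
  case serre => exact hC.submodule_mem hfin hM N

/-- Theorem 4.6, second part, and Corollary 4.7: if `R` is the
quotient of a regular commutative coherent ring `R₀` by a finitely generated ideal `a`,
then `f_R` is a lattice isomorphism from the lattice of wide subcategories of finitely
presented `R`-modules onto the lattice of thick subcategories of small objects of
`D(R)`.  In particular, for a principal ideal domain `k` and a finitely generated
commutative `k`-algebra `B`, every wide subcategory of finitely generated `B`-modules
is a Serre class (closed under arbitrary submodules). -/
theorem classification_quotient_of_regular (R₀ : Type u) [CommRing R₀]
    (hcoh : IsLeftCoherentRing R₀)
    (hreg : ∀ M : ModuleCat.{u} R₀, Module.FinitePresentation R₀ M →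
      HasFiniteProjectiveDimension R₀ M)
    (a : Ideal R₀) (ha : a.FG)
    [HasDerivedCategory.{w} (ModuleCat.{u} (R₀ ⧸ a))] :
    fIsLatticeIso (R₀ ⧸ a) ∧
    (∀ (k : Type u) [CommRing k] [IsDomain k] [IsPrincipalIdealRing k]
      (B : Type u) [CommRing B] [Algebra k B], Algebra.FiniteType k B →
      ∀ (C : Set (ModuleCat.{u} B)), IsWideSubcategory C →
        (∀ M ∈ C, Module.Finite B M) →
        ∀ M ∈ C, ∀ N : Submodule B M, ModuleCat.of B N ∈ C) := by
  have h := classification_quotient_of_regular_general R₀ hcoh hreg a ha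
  exact ⟨h.1, fun k _ _ _ B _ _ _ ↦
    have := Algebra.FiniteType.isNoetherianRing k B
    h.2 B⟩
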